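/- The largest positive integer that is both a sum of two Fibonacci numbers and a concatenation of three repdigits in base 10 is 335522. That is: 335522 = F_{28} + F_{22}, 335522 is a concatenation of three repdigits in base 10 (its decimal expansion is 335522, with d_1 = 3, ℓ_1 = 2, d_2 = 5, ℓ_2 = 2, d_3 = 2, ℓ_3 = 2), and every positive integer N that equals F_{n_1} + F_{n_2} for some integers n_1 ≥ n_2 ≥ 0 and is a concatenation of three repdigits in base 10 satisfies N ≤ 335522. -/

import Mathlib

/-!
Write the sum as `F_n + F_{n-k}`. If its decimal expansion consists of three blocks, then
`9 (F_n + F_{n-k}) ≈ φ ^ n β_k / 5` with `β_k = 9 √5 (1 + φ ^ (-k))` is close to `M * 10 ^ e` for three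
integers `M`: the first digit `d1`, the number `m2` determined by the first two digits and the first
length, and `m3`, determined by the three digits and the first two lengths. The longer the next block,
the closer the approximation. So the linear form `n log φ - e log 10 + log (β_k / (5 M))` is small at
each of these three levels (`Level`, `RepSum.level_one`, `RepSum.level_two`, `RepSum.level_three`).

**Baker-type bound.** `three_logs` bounds such a form `Λ` from below. If `Λ` were tiny, the values of
`∑ p_ijt x ^ i y ^ j z ^ t` at the points `x = s₁ - n s₃`, `y = s₂ + e s₃`,
`z = φ ^ s₁ 10 ^ s₂ (β / δ) ^ s₃` would essentially be values of a function of two real variables, so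
that the pigeonhole principle yields integers `p_ijt`, not all zero, making all of them tiny; by
Liouville's inequality (`InO.eq_zero`) they vanish (`exists_auxiliary`). A determinant in the shifts of
`s₁` removes `z` (`exists_elim_two`) and leaves a plane curve of small degree through very many integral
points. By Bezout's inequality (`bezout_card_le`) such a curve contains a line through many of them
(`exists_line_of_vanishing`), which forces a relation `u₂ n + u₁ e ≈ 0` with small integers `u₁, u₂`
(`exists_relation`). This is excluded by a lower bound for `u₁ log φ + u₂ log 10`, which comes from a
continued fraction or from `three_logs` itself with smaller coefficients (`form_lower`).

**A huge bound.** At each level either the length of the next block is bounded, or `k` is so small that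
`β_k` may enter the third logarithm; running through the levels (`tree`) gives `n ≤ 10 ^ 104`
(`RepSum.le_huge`).

**Reduction.** With a convergent `p / q` of `log φ / log 10`, a small form forces
`q log (β_k / (5 M)) / log 10` to be near an integer (`Far.bound`). For `k` beyond a threshold, `β_k` is
replaced by its limit. That none of these numbers is near an integer is checked in exact integer
arithmetic; many candidates are treated at once, as digits (lanes) of one large natural number in
base `2 ^ w`. In the few exceptional cases in which `β_k / (5 M)` is a power of `φ` times a power of `10`,
the form has two terms and a continued fraction suffices (`excOk`). This bounds the lengths of the first
two blocks. Then `three_logs` at the third level gives `n ≤ 27 * 10 ^ 27` for `k < 582` and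
`n ≤ 37 * 10 ^ 45` in general (`stage_k_le`, `stage_inf_le`), and a second reduction, now at all three
levels, gives `n ≤ 248` (`RepSum.le_small`).

**Search.** A concatenation of three repdigits has at most two pairs of unequal neighbouring digits. The
sums with `n ≤ 248` are enumerated and those above `335522` fail this criterion (`chkSums_true`).
-/

open Real

/-- `N` is a concatenation of three repdigits in base `b`. -/
def IsConcatThreeRepdigits (b N : ℕ) : Prop :=
  ∃ d1 d2 d3 l1 l2 l3 : ℕ,
    1 ≤ d1 ∧ d1 < b ∧ d2 < b ∧ d3 < b ∧
    1 ≤ l1 ∧ 1 ≤ l2 ∧ 1 ≤ l3 ∧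
    N = d1 * ((b ^ l1 - 1) / (b - 1)) * b ^ (l2 + l3) +
        d2 * ((b ^ l2 - 1) / (b - 1)) * b ^ l3 +
        d3 * ((b ^ l3 - 1) / (b - 1))

/-! ### Pigeonhole principle and auxiliary function -/

/-- Simultaneous smallness by the pigeonhole principle: real linear forms, fewer than a third as
many as unknowns, are made as small as `B⁻²` by a nonzero integer vector of size at most `B`. -/
theorem exists_int_small_forms {ξ η : Type} [Fintype ξ] [Fintype η]
    (L : ξ → η → ℝ) (A : ℝ) (hA : 0 < A) (hL : ∀ i j, |L i j| ≤ A) (B : ℕ) (hB : 2 ≤ B)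
    (hcard : 3 * Fintype.card η < Fintype.card ξ) :
    ∃ p : ξ → ℤ, p ≠ 0 ∧ (∀ i, |(p i : ℝ)| ≤ B) ∧
      ∀ j, |∑ i, (p i : ℝ) * L i j| ≤ 2 * Fintype.card ξ * A / (B : ℝ) ^ 2 := by
  classical
  set N : ℝ := (Fintype.card ξ : ℝ) with hN
  have hNpos : 0 < N := by
    have : 0 < Fintype.card ξ := by omega
    rw [hN]; exact_mod_cast this
  have hBpos : (0 : ℝ) < B := by
    have : 0 < B := by omega
    exact_mod_cast this
  have hW : 0 < 2 * N * B * A := by positivity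
  have hB3 : 0 < B ^ 3 := by positivity
  let v : (ξ → Fin B) → η → ℝ := fun p j =>
    (∑ i, ((p i : ℕ) : ℝ) * L i j + N * B * A) / (2 * N * B * A) * (B : ℝ) ^ 3
  have habs : ∀ p : ξ → Fin B, ∀ j, |∑ i, ((p i : ℕ) : ℝ) * L i j| < N * B * A := by
    intro p j
    have hne : (Finset.univ : Finset ξ).Nonempty := by
      rw [← Finset.card_pos, Finset.card_univ]; omega
    calc |∑ i, ((p i : ℕ) : ℝ) * L i j| ≤ ∑ i, |((p i : ℕ) : ℝ) * L i j| :=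
          Finset.abs_sum_le_sum_abs _ _
      _ < ∑ _i : ξ, (B : ℝ) * A := by
          refine Finset.sum_lt_sum_of_nonempty hne fun i _ => ?_
          rw [abs_mul, Nat.abs_cast]
          have h1 : ((p i : ℕ) : ℝ) < B := by exact_mod_cast (p i).2
          calc ((p i : ℕ) : ℝ) * |L i j| ≤ ((p i : ℕ) : ℝ) * A := by
                gcongr; exact hL i j
            _ < B * A := by gcongr
      _ = N * B * A := by simp [hN]; ring
  have hv0 : ∀ p j, 0 ≤ v p j := by
    intro p j
    have := abs_lt.1 (habs p j)
    have h2 : 0 ≤ ∑ i, ((p i : ℕ) : ℝ) * L i j + N * B * A := by linarith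
    simp only [v]; positivity
  have hv1 : ∀ p j, v p j < (B : ℝ) ^ 3 := by
    intro p j
    have := abs_lt.1 (habs p j)
    have h2 : (∑ i, ((p i : ℕ) : ℝ) * L i j + N * B * A) / (2 * N * B * A) < 1 := by
      rw [div_lt_one hW]; linarith
    have h3 : (0 : ℝ) < (B : ℝ) ^ 3 := by positivity
    simp only [v]; nlinarith
  have hfl : ∀ p j, ⌊v p j⌋₊ < B ^ 3 := by
    intro p j
    rw [Nat.floor_lt (hv0 p j)]
    exact_mod_cast hv1 p j
  let f : (ξ → Fin B) → (η → Fin (B ^ 3)) := fun p j => ⟨⌊v p j⌋₊, hfl p j⟩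
  have hc : Fintype.card (η → Fin (B ^ 3)) < Fintype.card (ξ → Fin B) := by
    rw [Fintype.card_fun, Fintype.card_fun, Fintype.card_fin, Fintype.card_fin, ← pow_mul]
    exact Nat.pow_lt_pow_right (by omega) hcard
  obtain ⟨p, p', hne, hf⟩ := Fintype.exists_ne_map_eq_of_card_lt f hc
  refine ⟨fun i => ((p i : ℕ) : ℤ) - ((p' i : ℕ) : ℤ), ?_, ?_, ?_⟩
  · intro h0
    apply hne
    funext i
    have := congrFun h0 i
    simp only [Pi.zero_apply] at this
    apply Fin.ext
    omega
  · intro i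
    have h1 := (p i).2
    have h2 := (p' i).2
    push_cast
    have h1' : ((p i : ℕ) : ℝ) ≤ B := by exact_mod_cast h1.le
    have h2' : ((p' i : ℕ) : ℝ) ≤ B := by exact_mod_cast h2.le
    have h3 : (0 : ℝ) ≤ ((p i : ℕ) : ℝ) := by positivity
    have h4 : (0 : ℝ) ≤ ((p' i : ℕ) : ℝ) := by positivity
    rw [abs_le]; constructor <;> linarith
  · intro j
    have hfj : ⌊v p j⌋₊ = ⌊v p' j⌋₊ := by
      have := congrFun hf j
      simpa [f] using this
    have hd : |v p j - v p' j| ≤ 1 := by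
      have a1 := Nat.floor_le (hv0 p j)
      have a2 := Nat.lt_floor_add_one (v p j)
      have a3 := Nat.floor_le (hv0 p' j)
      have a4 := Nat.lt_floor_add_one (v p' j)
      rw [hfj] at a1 a2
      rw [abs_le]; constructor <;> linarith
    have he : ∑ i, (((((p i : ℕ) : ℤ) - ((p' i : ℕ) : ℤ) : ℤ)) : ℝ) * L i j
        = (v p j - v p' j) * (2 * N * B * A / (B : ℝ) ^ 3) := by
      simp only [v]
      push_cast
      simp only [sub_mul, Finset.sum_sub_distrib]
      field_simp
      ring
    rw [he, abs_mul, abs_of_pos (show 0 < 2 * N * B * A / (B : ℝ) ^ 3 by positivity)]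
    calc |v p j - v p' j| * (2 * N * B * A / (B : ℝ) ^ 3) ≤ 1 * (2 * N * B * A / (B : ℝ) ^ 3) := by
          gcongr
      _ = 2 * N * A / (B : ℝ) ^ 2 := by field_simp

/-- `x = a + bφ` and `x' = a + bψ` for integers `a`, `b`: a golden integer with its conjugate. -/
def InO (x x' : ℝ) : Prop :=
  ∃ a b : ℤ, x = a + b * goldenRatio ∧ x' = a + b * goldenConj

theorem InO.int (a : ℤ) : InO a a := ⟨a, 0, by simp, by simp⟩

theorem InO.nat (a : ℕ) : InO a a := ⟨a, 0, by simp, by simp⟩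

theorem InO.golden : InO goldenRatio goldenConj := ⟨0, 1, by simp, by simp⟩

theorem InO.add {x x' y y' : ℝ} (h : InO x x') (k : InO y y') : InO (x + y) (x' + y') := by
  obtain ⟨a, b, rfl, rfl⟩ := h
  obtain ⟨c, d, rfl, rfl⟩ := k
  exact ⟨a + c, b + d, by push_cast; ring, by push_cast; ring⟩

theorem InO.mul {x x' y y' : ℝ} (h : InO x x') (k : InO y y') : InO (x * y) (x' * y') := by
  obtain ⟨a, b, rfl, rfl⟩ := h
  obtain ⟨c, d, rfl, rfl⟩ := k
  refine ⟨a * c + b * d, a * d + b * c + b * d, ?_, ?_⟩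
  · push_cast; linear_combination (b * d : ℝ) * goldenRatio_sq
  · push_cast; linear_combination (b * d : ℝ) * goldenConj_sq

theorem InO.pow {x x' : ℝ} (h : InO x x') (n : ℕ) : InO (x ^ n) (x' ^ n) := by
  induction n with
  | zero => simpa using InO.int 1
  | succ n ih => simpa [pow_succ] using ih.mul h

theorem InO.sum {ι : Type*} (s : Finset ι) {f f' : ι → ℝ} (h : ∀ i ∈ s, InO (f i) (f' i)) :
    InO (∑ i ∈ s, f i) (∑ i ∈ s, f' i) := by
  classical
  induction s using Finset.induction_on with
  | empty => simpa using InO.int 0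
  | insert a s ha ih =>
    rw [Finset.sum_insert ha, Finset.sum_insert ha]
    exact (h a (by simp)).add (ih fun i hi => h i (by simp [hi]))

/-- Liouville's inequality: the norm of a nonzero golden integer is a nonzero integer. -/
theorem InO.eq_zero {x x' : ℝ} (h : InO x x') (hlt : |x| * |x'| < 1) : x = 0 := by
  obtain ⟨a, b, rfl, rfl⟩ := h
  have hn : ((a : ℝ) + b * goldenRatio) * (a + b * goldenConj) = ((a * a + a * b - b * b : ℤ) : ℝ) := by
    push_cast
    linear_combination (a * b : ℝ) * goldenRatio_add_goldenConj +
      (b * b : ℝ) * goldenRatio_mul_goldenConj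
  rw [← abs_mul, hn] at hlt
  have h0 : (a * a + a * b - b * b : ℤ) = 0 := by
    rw [← Int.abs_lt_one_iff]
    exact_mod_cast hlt
  rw [h0] at hn
  have h5 : a = 0 ∧ b = 0 := by
    rcases mul_eq_zero.1 (hn.trans (by simp)) with h | h
    · by_cases hb : b = 0
      · subst hb; simp at h; exact ⟨h, rfl⟩
      · exact absurd h ((goldenRatio_irrational.intCast_mul hb).intCast_add a).ne_zero
    · by_cases hb : b = 0
      · subst hb; simp at h; exact ⟨h, rfl⟩
      · exact absurd h ((goldenConj_irrational.intCast_mul hb).intCast_add a).ne_zero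
  simp [h5.1, h5.2]

theorem abs_exp_sub_sum_le {x Y : ℝ} (J : ℕ) (hx : |x| ≤ Y) (hY : 2 * Y ≤ J + 1) :
    |exp x - ∑ j ∈ Finset.range J, x ^ j / (j.factorial : ℝ)| ≤ 2 * (Y ^ J / (J.factorial : ℝ)) := by
  have h := Complex.exp_bound' (x := (x : ℂ)) (n := J) (by
    rw [Complex.norm_real, Real.norm_eq_abs, div_le_iff₀ (by positivity)]
    push_cast; linarith)
  have h2 : (Complex.exp (x : ℂ) - ∑ m ∈ Finset.range J, (x : ℂ) ^ m / (m.factorial : ℂ))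
      = ((exp x - ∑ j ∈ Finset.range J, x ^ j / (j.factorial : ℝ) : ℝ) : ℂ) := by
    push_cast; rfl
  rw [h2, Complex.norm_real, Real.norm_eq_abs, Complex.norm_real, Real.norm_eq_abs] at h
  calc _ ≤ |x| ^ J / (J.factorial : ℝ) * 2 := h
    _ ≤ Y ^ J / (J.factorial : ℝ) * 2 := by gcongr
    _ = _ := by ring

/-- The auxiliary function.  On points whose coordinates `u`, `w` satisfy `|u| ≤ 1`, `|w| ≤ V`, the
functions `mon i` are close to polynomials of degree below `Du` in `u` and below `D` in `w`, and
`z = exp w`; truncating the exponential series turns `∑ pᵢₜ mon i zᵗ` into a combination of only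
`Du * (J + D)` monomials in `u`, `w`.  The pigeonhole principle makes all of these small,
and Liouville's inequality then forces the values at all the points to vanish. -/
theorem exists_auxiliary {I σ : Type} [Fintype I] (T D J Du : ℕ)
    (mon : I → σ → ℤ) (κ : I → ℕ → ℝ) (α : I → ℕ → ℕ) (u w z z' : σ → ℝ)
    (c V A₁ Ψ err : ℝ) (B : ℕ) (hB : 2 ≤ B) (hV : 0 < V) (hA₁ : 0 < A₁)
    (hu : ∀ s, |u s| ≤ 1) (hw : ∀ s, |w s| ≤ V) (hz : ∀ s, z s = exp (w s))
    (hα : ∀ i b, b < D → α i b < Du)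
    (hκ : ∀ i, ∑ b ∈ Finset.range D, |κ i b| * V ^ b ≤ A₁)
    (hmon : ∀ i s, |(mon i s : ℝ)| ≤ A₁)
    (happ : ∀ i s, |(mon i s : ℝ) - ∑ b ∈ Finset.range D, κ i b * u s ^ α i b * w s ^ b| ≤ err)
    (hO : ∀ s t, t < T → InO (c * z s ^ t) (c * z' s ^ t))
    (hz' : ∀ s t, t < T → |c * z' s ^ t| ≤ Ψ) (hc1 : 1 ≤ c) (hcΨ : c ≤ Ψ)
    (hTV : exp (T * V) ≤ Ψ) (hJ : 2 * (T * V) ≤ J + 1)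
    (hN : 3 * (Du * (J + D)) < Fintype.card I * T)
    (hsmall : ((Du * (J + D) : ℕ) * (2 * (Fintype.card I * T : ℕ) * (A₁ * Ψ) / (B : ℝ) ^ 2)
        + (Fintype.card I * T : ℕ) * (B * (A₁ * (2 * ((T * V) ^ J / (J.factorial : ℝ))) + err * Ψ)))
        * Ψ * ((Fintype.card I * T : ℕ) * (B * (A₁ * Ψ))) < 1) :
    ∃ p : I → Fin T → ℤ, p ≠ 0 ∧
      ∀ s, ∑ i, ∑ t, (p i t : ℝ) * (mon i s : ℝ) * z s ^ (t : ℕ) = 0 := by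
  classical
  have hΨ : 0 < Ψ := lt_of_lt_of_le (exp_pos _) hTV
  -- matrix of the linear forms, indexed by monomials `u ^ a * (w / V) ^ m`
  let L : I × Fin T → Fin Du × Fin (J + D) → ℝ := fun x y =>
    ∑ b ∈ Finset.range D, ∑ j ∈ Finset.range J,
      if α x.1 b = y.1 ∧ b + j = y.2 then
        κ x.1 b * V ^ b * (((x.2 : ℕ) * V) ^ j / (j.factorial : ℝ)) else 0
  have hexpo : ∀ t : Fin T, ∑ j ∈ Finset.range J, (((t : ℕ) * V) ^ j / (j.factorial : ℝ)) ≤ Ψ := by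
    intro t
    refine (Real.sum_le_exp_of_nonneg (by positivity) J).trans (le_trans ?_ hTV)
    apply Real.exp_le_exp.2
    have : ((t : ℕ) : ℝ) ≤ T := by exact_mod_cast t.2.le
    gcongr
  have hL : ∀ x y, |L x y| ≤ A₁ * Ψ := by
    intro x y
    calc |L x y| ≤ ∑ b ∈ Finset.range D, ∑ j ∈ Finset.range J,
          |κ x.1 b| * V ^ b * (((x.2 : ℕ) * V) ^ j / (j.factorial : ℝ)) := by
          refine (Finset.abs_sum_le_sum_abs _ _).trans (Finset.sum_le_sum fun b _ => ?_)
          refine (Finset.abs_sum_le_sum_abs _ _).trans (Finset.sum_le_sum fun j _ => ?_)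
          split_ifs
          · rw [abs_mul, abs_mul, abs_of_nonneg (show 0 ≤ V ^ b by positivity),
              abs_of_nonneg (show 0 ≤ ((x.2 : ℕ) * V) ^ j / (j.factorial : ℝ) by positivity)]
          · rw [abs_zero]; positivity
      _ = (∑ b ∈ Finset.range D, |κ x.1 b| * V ^ b) *
          ∑ j ∈ Finset.range J, (((x.2 : ℕ) * V) ^ j / (j.factorial : ℝ)) := by
          rw [Finset.sum_mul_sum]
      _ ≤ A₁ * Ψ := by
          apply mul_le_mul (hκ _) (hexpo _) _ hA₁.le
          exact Finset.sum_nonneg fun j _ => by positivity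
  have hcξ : Fintype.card (I × Fin T) = Fintype.card I * T := by simp
  have hcη : Fintype.card (Fin Du × Fin (J + D)) = Du * (J + D) := by simp
  obtain ⟨p, hp0, hpB, hpL⟩ := exists_int_small_forms L (A₁ * Ψ) (by positivity) hL B hB
    (by rw [hcξ, hcη]; exact hN)
  rw [hcξ] at hpL
  refine ⟨fun i t => p (i, t), ?_, ?_⟩
  · intro h
    apply hp0
    funext ⟨i, t⟩
    exact congrFun (congrFun h i) t
  intro s
  have hrew : ∑ i, ∑ t, (p (i, t) : ℝ) * (mon i s : ℝ) * z s ^ (t : ℕ)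
      = ∑ x : I × Fin T, (p x : ℝ) * ((mon x.1 s : ℝ) * z s ^ (x.2 : ℕ)) := by
    rw [Fintype.sum_prod_type]
    exact Finset.sum_congr rfl fun i _ => Finset.sum_congr rfl fun t _ => by ring
  rw [hrew]
  let G : Fin Du × Fin (J + D) → ℝ := fun y => u s ^ (y.1 : ℕ) * (w s / V) ^ (y.2 : ℕ)
  have hG : ∀ y, |G y| ≤ 1 := by
    intro y
    simp only [G, abs_mul, abs_pow, abs_div, abs_of_pos hV]
    have h1 : |w s| / V ≤ 1 := (div_le_one hV).2 (hw s)
    exact mul_le_one₀ (pow_le_one₀ (abs_nonneg _) (hu s)) (by positivity)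
      (pow_le_one₀ (by positivity) h1)
  -- the truncated function is the combination of monomials described by `L`
  have hLG : ∀ x : I × Fin T, ∑ y, L x y * G y =
      (∑ b ∈ Finset.range D, κ x.1 b * u s ^ α x.1 b * w s ^ b) *
        ∑ j ∈ Finset.range J, (((x.2 : ℕ) * w s) ^ j / (j.factorial : ℝ)) := by
    intro x
    simp only [L, Finset.sum_mul]
    rw [Finset.sum_comm, Finset.sum_congr rfl]
    intro b hb
    rw [Finset.sum_comm, Finset.mul_sum, Finset.sum_congr rfl]
    intro j hj
    have hb' := Finset.mem_range.1 hb
    have hj' := Finset.mem_range.1 hj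
    rw [Finset.sum_eq_single (⟨⟨α x.1 b, hα _ _ hb'⟩, ⟨b + j, by omega⟩⟩ :
      Fin Du × Fin (J + D))]
    · simp only [and_self, if_true, G, div_pow, mul_pow, pow_add]
      field_simp
    · intro y _ hy
      rw [if_neg, zero_mul]
      rintro ⟨h1, h2⟩
      apply hy
      ext
      · exact h1.symm
      · exact h2.symm
    · simp
  have htail : ∀ x : I × Fin T, |(mon x.1 s : ℝ) * z s ^ (x.2 : ℕ) - ∑ y, L x y * G y| ≤
      A₁ * (2 * ((T * V) ^ J / (J.factorial : ℝ))) + err * Ψ := by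
    intro x
    rw [hLG]
    set F := ∑ b ∈ Finset.range D, κ x.1 b * u s ^ α x.1 b * w s ^ b with hF
    set Eₓ := ∑ j ∈ Finset.range J, (((x.2 : ℕ) * w s) ^ j / (j.factorial : ℝ)) with hE
    have hx2 : ((x.2 : ℕ) : ℝ) ≤ T := by exact_mod_cast x.2.2.le
    have hxw : |((x.2 : ℕ) : ℝ) * w s| ≤ T * V := by
      rw [abs_mul, Nat.abs_cast]
      exact mul_le_mul hx2 (hw s) (abs_nonneg _) (by positivity)
    have hzt : z s ^ (x.2 : ℕ) = exp ((x.2 : ℕ) * w s) := by rw [hz, ← Real.exp_nat_mul]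
    have h1 := abs_exp_sub_sum_le J hxw hJ
    rw [← hzt] at h1
    have hF1 : |F| ≤ A₁ := by
      refine (Finset.abs_sum_le_sum_abs _ _).trans (le_trans (Finset.sum_le_sum fun b _ => ?_)
        (hκ x.1))
      rw [abs_mul, abs_mul, abs_pow, abs_pow]
      have hua : |u s| ^ α x.1 b ≤ 1 := pow_le_one₀ (abs_nonneg _) (hu s)
      have hwb : |w s| ^ b ≤ V ^ b := pow_le_pow_left₀ (abs_nonneg _) (hw s) b
      calc |κ x.1 b| * |u s| ^ α x.1 b * |w s| ^ b ≤ |κ x.1 b| * 1 * V ^ b := by gcongr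
        _ = _ := by ring
    have hzΨ : |z s ^ (x.2 : ℕ)| ≤ Ψ := by
      rw [hzt, abs_of_pos (exp_pos _)]
      exact le_trans (Real.exp_le_exp.2 ((le_abs_self _).trans hxw)) hTV
    have hsplit : (mon x.1 s : ℝ) * z s ^ (x.2 : ℕ) - F * Eₓ =
        ((mon x.1 s : ℝ) - F) * z s ^ (x.2 : ℕ) + F * (z s ^ (x.2 : ℕ) - Eₓ) := by ring
    rw [hsplit]
    refine (abs_add_le _ _).trans ?_
    rw [abs_mul, abs_mul, add_comm]
    have herr : 0 ≤ err := (abs_nonneg _).trans (happ x.1 s)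
    exact add_le_add (mul_le_mul hF1 h1 (abs_nonneg _) hA₁.le)
      (mul_le_mul (happ x.1 s) hzΨ (abs_nonneg _) herr)
  set N : ℝ := ((Fintype.card I * T : ℕ) : ℝ) with hNdef
  set tl := A₁ * (2 * ((T * V) ^ J / (J.factorial : ℝ))) + err * Ψ with htl
  have hval : |∑ x : I × Fin T, (p x : ℝ) * ((mon x.1 s : ℝ) * z s ^ (x.2 : ℕ))| ≤
      (Du * (J + D) : ℕ) * (2 * N * (A₁ * Ψ) / (B : ℝ) ^ 2) + N * (B * tl) := by
    have hs : ∑ x : I × Fin T, (p x : ℝ) * ((mon x.1 s : ℝ) * z s ^ (x.2 : ℕ)) =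
        ∑ y, (∑ x, (p x : ℝ) * L x y) * G y +
        ∑ x : I × Fin T, (p x : ℝ) * ((mon x.1 s : ℝ) * z s ^ (x.2 : ℕ) - ∑ y, L x y * G y) := by
      simp only [mul_sub, Finset.sum_sub_distrib, Finset.mul_sum, Finset.sum_mul]
      rw [Finset.sum_comm (f := fun y x => (p x : ℝ) * L x y * G y)]
      simp only [mul_assoc]
      ring
    rw [hs]
    refine (abs_add_le _ _).trans (add_le_add ?_ ?_)
    · refine (Finset.abs_sum_le_sum_abs _ _).trans ?_
      rw [← hcη, ← nsmul_eq_mul, ← Finset.card_univ]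
      refine Finset.sum_le_card_nsmul _ _ _ fun y _ => ?_
      rw [abs_mul]
      calc _ ≤ (2 * N * (A₁ * Ψ) / (B : ℝ) ^ 2) * 1 :=
            mul_le_mul (hpL y) (hG y) (abs_nonneg _) (by positivity)
        _ = _ := mul_one _
    · refine (Finset.abs_sum_le_sum_abs _ _).trans ?_
      rw [hNdef, ← hcξ, ← nsmul_eq_mul, ← Finset.card_univ]
      refine Finset.sum_le_card_nsmul _ _ _ fun x _ => ?_
      rw [abs_mul]
      exact mul_le_mul (hpB x) (htail x) (abs_nonneg _) (by positivity)
  have hOs : InO (∑ x : I × Fin T, ((p x * mon x.1 s : ℤ) : ℝ) * (c * z s ^ (x.2 : ℕ)))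
      (∑ x : I × Fin T, ((p x * mon x.1 s : ℤ) : ℝ) * (c * z' s ^ (x.2 : ℕ))) :=
    InO.sum _ fun x _ => (InO.int _).mul (hO s x.2 x.2.2)
  have hconj : |∑ x : I × Fin T, ((p x * mon x.1 s : ℤ) : ℝ) * (c * z' s ^ (x.2 : ℕ))| ≤
      N * (B * (A₁ * Ψ)) := by
    refine (Finset.abs_sum_le_sum_abs _ _).trans ?_
    rw [hNdef, ← hcξ, ← nsmul_eq_mul, ← Finset.card_univ]
    refine Finset.sum_le_card_nsmul _ _ _ fun x _ => ?_
    rw [abs_mul, Int.cast_mul, abs_mul, mul_assoc]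
    exact mul_le_mul (hpB x) (mul_le_mul (hmon _ _) (hz' s x.2 x.2.2) (abs_nonneg _) hA₁.le)
      (by positivity) (by positivity)
  have hcs : ∑ x : I × Fin T, ((p x * mon x.1 s : ℤ) : ℝ) * (c * z s ^ (x.2 : ℕ)) =
      c * ∑ x : I × Fin T, (p x : ℝ) * ((mon x.1 s : ℝ) * z s ^ (x.2 : ℕ)) := by
    rw [Finset.mul_sum]
    exact Finset.sum_congr rfl fun x _ => by push_cast; ring
  have hzero := hOs.eq_zero (by
    refine lt_of_le_of_lt ?_ hsmall
    refine mul_le_mul ?_ hconj (abs_nonneg _) ?_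
    · rw [hcs, abs_mul, mul_comm, abs_of_pos (by linarith : 0 < c)]
      exact mul_le_mul hval hcΨ (by linarith) ((abs_nonneg _).trans hval)
    · exact mul_nonneg ((abs_nonneg _).trans hval) hΨ.le)
  rw [hcs] at hzero
  exact (mul_eq_zero.1 hzero).resolve_left (by linarith)

/-! ### Elimination of the exponential -/

theorem coeff_prod_of_natDegree_le_each {ι : Type*} (s : Finset ι) (f : ι → Polynomial ℝ)
    (d : ι → ℕ) (h : ∀ i ∈ s, (f i).natDegree ≤ d i) :
    (∏ i ∈ s, f i).natDegree ≤ ∑ i ∈ s, d i ∧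
    (∏ i ∈ s, f i).coeff (∑ i ∈ s, d i) = ∏ i ∈ s, (f i).coeff (d i) := by
  classical
  induction s using Finset.induction_on with
  | empty => simp
  | insert a s ha ih =>
    obtain ⟨h1, h2⟩ := ih fun i hi => h i (by simp [hi])
    have h3 := h a (by simp)
    rw [Finset.prod_insert ha, Finset.sum_insert ha, Finset.prod_insert ha]
    refine ⟨(Polynomial.natDegree_mul_le).trans (add_le_add h3 h1), ?_⟩
    rw [Polynomial.coeff_mul_add_eq_of_natDegree_le h3 h1, h2]

/-- The determinant formed from the shifts of an exponential polynomial `∑ Pᵢ(x) θ ^ (tᵢ x)` is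
nonzero: its leading coefficient is the product of those of the `Pᵢ` with a
Vandermonde determinant. -/
theorem det_shift_ne_zero (m : ℕ) (P : Fin m → Polynomial ℝ) (hP : ∀ i, P i ≠ 0)
    (t : Fin m → ℕ) (ht : Function.Injective t) (θ : ℝ) (hθ : 1 < θ) :
    (Matrix.of fun j i : Fin m =>
      (P i).comp (Polynomial.X + Polynomial.C ((j : ℕ) : ℝ)) *
        Polynomial.C ((θ ^ t i) ^ (j : ℕ))).det ≠ 0 := by
  set M := (Matrix.of fun j i : Fin m =>
      (P i).comp (Polynomial.X + Polynomial.C ((j : ℕ) : ℝ)) *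
        Polynomial.C ((θ ^ t i) ^ (j : ℕ))) with hM
  have hdeg : ∀ j i, (M j i).natDegree ≤ (P i).natDegree := by
    intro j i
    simp only [hM, Matrix.of_apply]
    refine (Polynomial.natDegree_mul_C_le _ _).trans ?_
    rw [Polynomial.natDegree_comp, Polynomial.natDegree_X_add_C, mul_one]
  have hco : ∀ j i, (M j i).coeff (P i).natDegree =
      (P i).leadingCoeff * (θ ^ t i) ^ (j : ℕ) := by
    intro j i
    simp only [hM, Matrix.of_apply, Polynomial.coeff_mul_C]
    have h1 : ((P i).comp (Polynomial.X + Polynomial.C ((j : ℕ) : ℝ))).natDegree =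
        (P i).natDegree := by
      rw [Polynomial.natDegree_comp, Polynomial.natDegree_X_add_C, mul_one]
    rw [← h1, Polynomial.coeff_natDegree, Polynomial.leadingCoeff_comp
      (by rw [Polynomial.natDegree_X_add_C]; simp), Polynomial.leadingCoeff_X_add_C, one_pow, mul_one]
  have hcoef : M.det.coeff (∑ i, (P i).natDegree) =
      (Matrix.of fun j i : Fin m => (P i).leadingCoeff * (θ ^ t i) ^ (j : ℕ)).det := by
    rw [Matrix.det_apply, Matrix.det_apply, Polynomial.finsetSum_coeff]
    refine Finset.sum_congr rfl fun σ _ => ?_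
    rw [Polynomial.coeff_smul, (coeff_prod_of_natDegree_le_each Finset.univ
      (fun i => M (σ i) i) (fun i => (P i).natDegree) (fun i _ => hdeg _ _)).2]
    simp [hco]
  intro h0
  rw [h0, Polynomial.coeff_zero] at hcoef
  have h2 : (Matrix.of fun j i : Fin m => (P i).leadingCoeff * (θ ^ t i) ^ (j : ℕ)).det =
      (∏ i, (P i).leadingCoeff) * (Matrix.vandermonde fun i => θ ^ t i).det := by
    rw [← Matrix.det_transpose (Matrix.vandermonde _), ← Matrix.det_mul_row]
    rfl
  rw [h2] at hcoef
  rcases mul_eq_zero.1 hcoef.symm with h | h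
  · rw [Finset.prod_eq_zero_iff] at h
    obtain ⟨i, _, hi⟩ := h
    exact hP i (Polynomial.leadingCoeff_eq_zero.1 hi)
  · refine Matrix.det_vandermonde_ne_zero_iff.2 ?_ h
    intro i j hij
    exact ht (pow_right_injective₀ (by linarith) hθ.ne' hij)

/-- Translation of the variables of a polynomial in two variables. -/
noncomputable def trans₂ (a b : ℝ) :
    MvPolynomial (Fin 2) ℝ →ₐ[ℝ] MvPolynomial (Fin 2) ℝ :=
  MvPolynomial.aeval ![MvPolynomial.X 0 + MvPolynomial.C a, MvPolynomial.X 1 + MvPolynomial.C b]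

theorem eval_trans₂ (a b x y : ℝ) (P : MvPolynomial (Fin 2) ℝ) :
    MvPolynomial.eval ![x, y] (trans₂ a b P) = MvPolynomial.eval ![x + a, y + b] P := by
  induction P using MvPolynomial.induction_on with
  | C r => simp [trans₂]
  | add p q hp hq => simp [hp, hq]
  | mul_X p i hp =>
    rw [map_mul, map_mul, hp, map_mul]
    congr 1
    fin_cases i <;> simp [trans₂]

theorem totalDegree_trans₂_le (a b : ℝ) (P : MvPolynomial (Fin 2) ℝ) :
    (trans₂ a b P).totalDegree ≤ P.totalDegree := by
  conv_lhs => rw [P.as_sum, map_sum]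
  refine MvPolynomial.totalDegree_finsetSum_le fun s hs => ?_
  have h1 : (trans₂ a b) (MvPolynomial.monomial s (P.coeff s)) =
      MvPolynomial.C (P.coeff s) * ∏ i, ![MvPolynomial.X 0 + MvPolynomial.C a,
        MvPolynomial.X 1 + MvPolynomial.C b] i ^ s i := by
    rw [trans₂, MvPolynomial.aeval_monomial, Finsupp.prod_fintype _ _ (by simp)]
    rfl
  rw [h1]
  refine (MvPolynomial.totalDegree_mul _ _).trans ?_
  rw [MvPolynomial.totalDegree_C, zero_add]
  refine (MvPolynomial.totalDegree_finsetProd _ _).trans ?_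
  refine le_trans ?_ (MvPolynomial.le_totalDegree hs)
  rw [Finsupp.sum_fintype _ _ (by simp)]
  refine Finset.sum_le_sum fun i _ => (MvPolynomial.totalDegree_pow _ _).trans ?_
  have hi : (![MvPolynomial.X 0 + MvPolynomial.C a,
        MvPolynomial.X 1 + MvPolynomial.C b] i : MvPolynomial (Fin 2) ℝ).totalDegree ≤ 1 := by
    fin_cases i <;>
    exact (MvPolynomial.totalDegree_add _ _).trans (by simp [MvPolynomial.totalDegree_X])
  calc s i * _ ≤ s i * 1 := Nat.mul_le_mul_left _ hi
    _ = s i := mul_one _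

/-- Elimination of the exponential: `F` is the determinant of the matrix with entries
`P t (x + j, y) * θ ^ (j * t)`, restricted to the `t` with `P t ≠ 0`, which annihilates the vector of
the powers `z ^ t`. -/
theorem exists_elim_two (T D : ℕ) (P : Fin T → MvPolynomial (Fin 2) ℝ) (hP : P ≠ 0)
    (hD : ∀ t, (P t).totalDegree ≤ D) (θ : ℝ) (hθ : 1 < θ) :
    ∃ F : MvPolynomial (Fin 2) ℝ, F ≠ 0 ∧ F.totalDegree ≤ T * D ∧
      ∀ x y z : ℝ, z ≠ 0 →
        (∀ j < T, ∑ t, MvPolynomial.eval ![x + j, y] (P t) * (θ ^ j * z) ^ (t : ℕ) = 0) →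
        MvPolynomial.eval ![x, y] F = 0 := by
  classical
  let τ := {t : Fin T // P t ≠ 0}
  set m := Fintype.card τ with hm
  let e : Fin m ≃ τ := (Fintype.equivFin τ).symm
  have hmT : m ≤ T := by
    calc m ≤ Fintype.card (Fin T) := Fintype.card_subtype_le _
      _ = T := Fintype.card_fin T
  have hm0 : 0 < m := by
    rw [hm, Fintype.card_pos_iff]
    obtain ⟨t, ht⟩ := Function.ne_iff.1 hP
    exact ⟨⟨t, ht⟩⟩
  let M : Matrix (Fin m) (Fin m) (MvPolynomial (Fin 2) ℝ) := Matrix.of fun j i =>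
    trans₂ ((j : ℕ) : ℝ) 0 (P (e i).1) * MvPolynomial.C ((θ ^ ((e i).1 : ℕ)) ^ (j : ℕ))
  refine ⟨M.det, ?_, ?_, ?_⟩
  · have hprod : (∏ i, P (e i).1) ≠ 0 := Finset.prod_ne_zero_iff.2 fun i _ => (e i).2
    obtain ⟨v, hv⟩ : ∃ v : Fin 2 → ℝ, MvPolynomial.eval v (∏ i, P (e i).1) ≠ 0 := by
      by_contra! hcon
      exact hprod (MvPolynomial.funext fun v => by simpa using hcon v)
    rw [map_prod, Finset.prod_ne_zero_iff] at hv
    let ρ : MvPolynomial (Fin 2) ℝ →ₐ[ℝ] Polynomial ℝ :=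
      MvPolynomial.aeval ![Polynomial.X, Polynomial.C (v 1)]
    have hρ : ∀ (Q : MvPolynomial (Fin 2) ℝ) (x : ℝ),
        (ρ Q).eval x = MvPolynomial.eval ![x, v 1] Q := by
      intro Q x
      induction Q using MvPolynomial.induction_on with
      | C r => simp [ρ]
      | add p q hp hq => simp [hp, hq]
      | mul_X p i hp =>
        rw [map_mul, Polynomial.eval_mul, hp, map_mul]
        congr 1
        fin_cases i <;> simp [ρ]
    have h1 := det_shift_ne_zero m (fun i => ρ (P (e i).1)) (by
      intro i h0
      apply hv i (Finset.mem_univ i)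
      have := hρ (P (e i).1) (v 0)
      simp only [h0, Polynomial.eval_zero] at this
      rw [this]
      congr 2
      funext k
      fin_cases k <;> rfl)
      (fun i => ((e i).1 : ℕ)) (fun i j hij => e.injective (Subtype.ext (Fin.ext hij))) θ hθ
    intro h0
    apply h1
    have h2 : ρ M.det = 0 := by rw [h0, map_zero]
    rw [AlgHom.map_det] at h2
    rw [← h2]
    congr 1
    ext1 j i
    simp only [M, Matrix.of_apply, AlgHom.mapMatrix_apply, Matrix.map_apply, map_mul]
    congr 1
    · apply Polynomial.funext
      intro x
      rw [hρ, eval_trans₂, Polynomial.eval_comp, hρ]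
      simp
    · simp [ρ]
  · rw [Matrix.det_apply]
    refine MvPolynomial.totalDegree_finsetSum_le fun σ _ => ?_
    refine (MvPolynomial.totalDegree_smul_le _ _).trans ?_
    refine (MvPolynomial.totalDegree_finsetProd _ _).trans ?_
    calc _ ≤ ∑ _i : Fin m, D := by
          refine Finset.sum_le_sum fun i _ => ?_
          refine (MvPolynomial.totalDegree_mul _ _).trans ?_
          rw [MvPolynomial.totalDegree_C, add_zero]
          exact (totalDegree_trans₂_le _ _ _).trans (hD _)
      _ = m * D := by simp
      _ ≤ T * D := Nat.mul_le_mul_right _ hmT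
  · intro x y z hz h
    rw [RingHom.map_det, ← Matrix.exists_mulVec_eq_zero_iff]
    refine ⟨fun i => z ^ ((e i).1 : ℕ), ?_, ?_⟩
    · intro h0
      exact pow_ne_zero _ hz (congrFun h0 ⟨0, hm0⟩)
    · funext j
      have hj := h j (lt_of_lt_of_le j.2 hmT)
      simp only [Matrix.mulVec, dotProduct, RingHom.mapMatrix_apply, Matrix.map_apply, M,
        Matrix.of_apply, map_mul, MvPolynomial.eval_C, eval_trans₂, add_zero, Pi.zero_apply]
      rw [← hj]
      refine Fintype.sum_of_injective (fun i => (e i).1)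
        (Subtype.val_injective.comp e.injective) _ _ ?_ ?_
      · intro t ht
        have : P t = 0 := by
          by_contra hne
          exact ht ⟨e.symm ⟨t, hne⟩, by simp⟩
        simp [this]
      · intro i
        ring

/-! ### Bezout's inequality and the zero estimate -/

theorem two_mul_finrank_restrictTotalDegree (n : ℕ) :
    2 * Module.finrank ℝ (MvPolynomial.restrictTotalDegree (Fin 2) ℝ n) = (n + 1) * (n + 2) := by
  have h1 : Module.finrank ℝ (MvPolynomial.restrictTotalDegree (Fin 2) ℝ n) =
      Nat.card {s : Fin 2 →₀ ℕ | (s.sum fun _ e => e) ≤ n} :=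
    Module.finrank_eq_nat_card_basis (MvPolynomial.basisRestrictSupport ℝ _)
  let e : {s : Fin 2 →₀ ℕ | (s.sum fun _ e => e) ≤ n} ≃ Σ i : Fin (n + 1), Fin (n - i + 1) :=
    { toFun := fun s => ⟨⟨s.1 0, by
          have := s.2
          simp only [Set.mem_ofPred_eq] at this
          rw [Finsupp.sum_fintype _ _ (by simp), Fin.sum_univ_two] at this
          omega⟩, ⟨s.1 1, by
          have := s.2
          simp only [Set.mem_ofPred_eq] at this
          rw [Finsupp.sum_fintype _ _ (by simp), Fin.sum_univ_two] at this
          simp only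
          omega⟩⟩
      invFun := fun x => ⟨Finsupp.equivFunOnFinite.symm ![(x.1 : ℕ), (x.2 : ℕ)], by
          simp only [Set.mem_ofPred_eq]
          rw [Finsupp.sum_fintype _ _ (by simp), Fin.sum_univ_two]
          simp
          have h1 := x.1.2
          have h2 := x.2.2
          omega⟩
      left_inv := by
        rintro ⟨s, hs⟩
        apply Subtype.ext
        apply Finsupp.ext
        intro i
        fin_cases i <;> simp
      right_inv := by
        rintro ⟨i, j⟩
        simp }
  rw [h1, Nat.card_congr e, Nat.card_eq_fintype_card, Fintype.card_sigma]
  simp only [Fintype.card_fin]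
  rw [Fin.sum_univ_eq_sum_range (fun i => n - i + 1) (n + 1)]
  have h2 : ∑ i ∈ Finset.range (n + 1), (n - i + 1) = ∑ i ∈ Finset.range (n + 1), (i + 1) := by
    rw [← Finset.sum_range_reflect]
    apply Finset.sum_congr rfl
    intro i hi
    have := Finset.mem_range.1 hi
    omega
  rw [h2]
  clear h1 h2 e
  induction n with
  | zero => simp
  | succ n ih => rw [Finset.sum_range_succ, mul_add, ih]; ring

/-- A linear form taking distinct values at distinct integer points. -/
noncomputable def sepForm : MvPolynomial (Fin 2) ℝ :=
  MvPolynomial.X 0 + MvPolynomial.C goldenRatio * MvPolynomial.X 1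

theorem eval_sepForm_injective :
    Function.Injective fun v : ℤ × ℤ => MvPolynomial.eval ![(v.1 : ℝ), (v.2 : ℝ)] sepForm := by
  rintro ⟨a, b⟩ ⟨c, d⟩ h
  simp [sepForm] at h
  have hbd : b = d := by
    by_contra hne
    have h1 := ((goldenRatio_irrational.mul_intCast (sub_ne_zero.2 hne)).intCast_add (a - c)).ne_zero
    apply h1
    push_cast
    linear_combination h
  subst hbd
  simpa using h

theorem totalDegree_sepForm_le : sepForm.totalDegree ≤ 1 := by
  refine (MvPolynomial.totalDegree_add _ _).trans (max_le (by simp [MvPolynomial.totalDegree_X]) ?_)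
  refine (MvPolynomial.totalDegree_mul _ _).trans ?_
  simp [MvPolynomial.totalDegree_X]

/-- Bezout's inequality for the integer points of two plane curves, the first of them irreducible
and not a component of the second.  With more than `deg Q * deg G` common points, the powers of a
separating linear form would stay independent modulo `(Q, G)`, against a dimension count in
large degree. -/
theorem bezout_card_le (Q G : MvPolynomial (Fin 2) ℝ) (hQ : Prime Q) (hnd : ¬ Q ∣ G)
    (S : Finset (ℤ × ℤ))
    (hSQ : ∀ v ∈ S, MvPolynomial.eval ![(v.1 : ℝ), (v.2 : ℝ)] Q = 0)
    (hSG : ∀ v ∈ S, MvPolynomial.eval ![(v.1 : ℝ), (v.2 : ℝ)] G = 0) :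
    S.card ≤ Q.totalDegree * G.totalDegree := by
  classical
  by_contra! hlt
  set d := Q.totalDegree with hd
  set g := G.totalDegree with hg
  set K := S.card with hK
  set n := d + g + K with hn
  let R := fun k => MvPolynomial.restrictTotalDegree (Fin 2) ℝ k
  have memR : ∀ k (p : MvPolynomial (Fin 2) ℝ), p ∈ R k ↔ p.totalDegree ≤ k := fun k p =>
    MvPolynomial.mem_restrictTotalDegree _ _ _
  let Φ : (R (g + K) × R (d + K)) × (Fin K → ℝ) →ₗ[ℝ] MvPolynomial (Fin 2) ℝ :=
    { toFun := fun x => Q * x.1.1.1 + G * x.1.2.1 + ∑ i, x.2 i • sepForm ^ (i : ℕ)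
      map_add' := by
        intro x y
        simp only [Prod.fst_add, Prod.snd_add, Submodule.coe_add, Pi.add_apply, add_smul,
          Finset.sum_add_distrib]
        ring
      map_smul' := by
        intro r x
        simp only [Prod.smul_fst, Prod.smul_snd, Submodule.coe_smul, Pi.smul_apply, smul_assoc,
          RingHom.id_apply, smul_add, Finset.smul_sum, mul_smul_comm] }
  let Ψ : R K →ₗ[ℝ] (R (g + K) × R (d + K)) × (Fin K → ℝ) :=
    { toFun := fun c => ((⟨-(G * c.1), by
          rw [memR, MvPolynomial.totalDegree_neg]
          exact (MvPolynomial.totalDegree_mul _ _).trans (add_le_add le_rfl ((memR _ _).1 c.2))⟩,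
        ⟨Q * c.1, by
          rw [memR]
          exact (MvPolynomial.totalDegree_mul _ _).trans (add_le_add le_rfl ((memR _ _).1 c.2))⟩), 0)
      map_add' := by
        intro x y
        ext1
        · ext1 <;> apply Subtype.ext <;> simp <;> ring
        · simp
      map_smul' := by
        intro r x
        ext1
        · ext1 <;> apply Subtype.ext <;> simp
        · simp }
  have hker : LinearMap.ker Φ ≤ LinearMap.range Ψ := by
    rintro ⟨⟨⟨a, ha⟩, ⟨b, hb⟩⟩, c⟩ hx
    have hx' : Q * a + G * b + ∑ i, c i • sepForm ^ (i : ℕ) = 0 := LinearMap.mem_ker.1 hx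
    have hc : c = 0 := by
      let e := S.equivFin
      apply Matrix.eq_zero_of_forall_index_sum_pow_mul_eq_zero
        (f := fun j : Fin K => MvPolynomial.eval ![((e.symm j).1.1 : ℝ), ((e.symm j).1.2 : ℝ)] sepForm)
      · intro i j hij
        exact e.symm.injective (Subtype.ext (eval_sepForm_injective hij))
      · intro j
        have h1 := congrArg (MvPolynomial.eval ![((e.symm j).1.1 : ℝ), ((e.symm j).1.2 : ℝ)]) hx'
        rw [map_add, map_add, map_mul, map_mul, hSQ _ (e.symm j).2, hSG _ (e.symm j).2, map_sum] at h1
        simp only [zero_mul, zero_add, map_zero, MvPolynomial.smul_eval, map_pow] at h1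
        rw [← h1]
        exact Finset.sum_congr rfl fun i _ => mul_comm _ _
    subst hc
    simp only [Pi.zero_apply, zero_smul, Finset.sum_const_zero, add_zero] at hx'
    have hdiv : Q ∣ G * b := ⟨-a, by linear_combination hx'⟩
    obtain ⟨c, rfl⟩ := (hQ.dvd_or_dvd hdiv).resolve_left hnd
    have ha' : a = -(G * c) := by
      apply mul_left_cancel₀ hQ.ne_zero
      linear_combination hx'
    have hcK : c ∈ R K := by
      rw [memR]
      by_cases hc0 : c = 0
      · simp [hc0]
      · have := (memR _ _).1 hb
        rw [MvPolynomial.totalDegree_mul_of_isDomain hQ.ne_zero hc0] at this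
        omega
    refine ⟨⟨c, hcK⟩, ?_⟩
    ext1
    · ext1
      · exact Subtype.ext ha'.symm
      · rfl
    · rfl
  have hrange : LinearMap.range Φ ≤ R n := by
    rintro _ ⟨⟨⟨⟨a, ha⟩, ⟨b, hb⟩⟩, c⟩, rfl⟩
    rw [memR] at ha hb
    rw [memR]
    change (Q * a + G * b + ∑ i, c i • sepForm ^ (i : ℕ)).totalDegree ≤ n
    refine (MvPolynomial.totalDegree_add _ _).trans (max_le ((MvPolynomial.totalDegree_add _ _).trans
      (max_le ((MvPolynomial.totalDegree_mul _ _).trans ?_)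
        ((MvPolynomial.totalDegree_mul _ _).trans ?_))) ?_)
    · omega
    · omega
    · refine MvPolynomial.totalDegree_finsetSum_le fun i _ => ?_
      refine (MvPolynomial.totalDegree_smul_le _ _).trans ?_
      refine (MvPolynomial.totalDegree_pow _ _).trans ?_
      have := i.2
      calc (i : ℕ) * sepForm.totalDegree ≤ i * 1 := Nat.mul_le_mul_left _ totalDegree_sepForm_le
        _ ≤ n := by omega
  have hrn := LinearMap.finrank_range_add_finrank_ker Φ
  have h1 : Module.finrank ℝ (LinearMap.range Φ) ≤ Module.finrank ℝ (R n) :=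
    Submodule.finrank_mono hrange
  have h2 : Module.finrank ℝ (LinearMap.ker Φ) ≤ Module.finrank ℝ (R K) :=
    (Submodule.finrank_mono hker).trans (LinearMap.finrank_range_le Ψ)
  rw [Module.finrank_prod, Module.finrank_prod, Module.finrank_fin_fun] at hrn
  have e1 := two_mul_finrank_restrictTotalDegree n
  have e2 := two_mul_finrank_restrictTotalDegree (g + K)
  have e3 := two_mul_finrank_restrictTotalDegree (d + K)
  have e4 := two_mul_finrank_restrictTotalDegree K
  change 2 * Module.finrank ℝ (R _) = _ at e1 e2 e3 e4
  have h3 : (g + K + 1) * (g + K + 2) + (d + K + 1) * (d + K + 2) + 2 * K ≤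
      (n + 1) * (n + 2) + (K + 1) * (K + 2) := by
    omega
  rw [hn] at h3
  nlinarith

theorem mvPolynomial_ext₂ {P Q : MvPolynomial (Fin 2) ℝ}
    (h : ∀ x y : ℝ, MvPolynomial.eval ![x, y] P = MvPolynomial.eval ![x, y] Q) : P = Q := by
  apply MvPolynomial.funext
  intro v
  have hv : v = ![v 0, v 1] := by
    funext k
    fin_cases k <;> rfl
  rw [hv]
  exact h _ _

theorem trans₂_trans₂ (a b c d : ℝ) (P : MvPolynomial (Fin 2) ℝ) :
    trans₂ a b (trans₂ c d P) = trans₂ (a + c) (b + d) P := by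
  apply mvPolynomial_ext₂
  intro x y
  simp only [eval_trans₂, add_assoc]

theorem trans₂_zero (P : MvPolynomial (Fin 2) ℝ) : trans₂ 0 0 P = P := by
  apply mvPolynomial_ext₂
  intro x y
  simp only [eval_trans₂, add_zero]

/-- Translation as an automorphism. -/
noncomputable def transEquiv (a b : ℝ) :
    MvPolynomial (Fin 2) ℝ ≃ₐ[ℝ] MvPolynomial (Fin 2) ℝ :=
  AlgEquiv.ofAlgHom (trans₂ a b) (trans₂ (-a) (-b))
    (AlgHom.ext fun P => by simp [trans₂_trans₂, trans₂_zero])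
    (AlgHom.ext fun P => by simp [trans₂_trans₂, trans₂_zero])

theorem totalDegree_trans₂ (a b : ℝ) (P : MvPolynomial (Fin 2) ℝ) :
    (trans₂ a b P).totalDegree = P.totalDegree := by
  apply le_antisymm (totalDegree_trans₂_le a b P)
  have h := totalDegree_trans₂_le (-a) (-b) (trans₂ a b P)
  rwa [trans₂_trans₂, neg_add_cancel, neg_add_cancel, trans₂_zero] at h

theorem totalDegree_eq_of_associated {P Q : MvPolynomial (Fin 2) ℝ} (h : Associated P Q) :
    P.totalDegree = Q.totalDegree := by
  obtain ⟨u, rfl⟩ := h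
  by_cases hP : P = 0
  · simp [hP]
  rw [MvPolynomial.totalDegree_mul_of_isDomain hP u.ne_zero,
    (MvPolynomial.isUnit_iff_totalDegree_of_isReduced.1 u.isUnit).2, add_zero]

theorem totalDegree_pos_of_irreducible {Q : MvPolynomial (Fin 2) ℝ} (h : Irreducible Q) :
    0 < Q.totalDegree := by
  rw [Nat.pos_iff_ne_zero]
  intro h0
  apply h.not_isUnit
  rw [MvPolynomial.totalDegree_eq_zero_iff_eq_C] at h0
  rw [MvPolynomial.isUnit_iff_eq_C_of_isReduced]
  refine ⟨_, ?_, h0⟩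
  rw [isUnit_iff_ne_zero]
  intro h1
  rw [h1, map_zero] at h0
  exact h.ne_zero h0

theorem totalDegree_multiset_prod_eq (s : Multiset (MvPolynomial (Fin 2) ℝ)) (h : (0 : MvPolynomial (Fin 2) ℝ) ∉ s) :
    s.prod.totalDegree = (s.map MvPolynomial.totalDegree).sum := by
  induction s using Multiset.induction_on with
  | empty => simp
  | cons a s ih =>
    simp only [Multiset.mem_cons, not_or] at h
    rw [Multiset.prod_cons, Multiset.map_cons, Multiset.sum_cons,
      MvPolynomial.totalDegree_mul_of_isDomain (Ne.symm h.1) (Multiset.prod_ne_zero h.2), ih h.2]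

theorem totalDegree_le_of_dvd {P Q : MvPolynomial (Fin 2) ℝ} (hQ : Q ≠ 0) (h : P ∣ Q) :
    P.totalDegree ≤ Q.totalDegree := by
  obtain ⟨c, rfl⟩ := h
  rw [MvPolynomial.totalDegree_mul_of_isDomain (left_ne_zero_of_mul hQ) (right_ne_zero_of_mul hQ)]
  omega

/-- A curve invariant under a nonzero translation is a union of parallel lines, at most as many
as its degree. -/
theorem card_lines_le (Q : MvPolynomial (Fin 2) ℝ) (hQ : Q ≠ 0) (v₁ v₂ : ℤ) (hv : (v₁, v₂) ≠ 0)
    (hinv : ∀ x y : ℝ, MvPolynomial.eval ![x, y] Q = 0 → MvPolynomial.eval ![x + v₁, y + v₂] Q = 0)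
    (Z : Finset (ℤ × ℤ)) (hZ : ∀ p ∈ Z, MvPolynomial.eval ![(p.1 : ℝ), (p.2 : ℝ)] Q = 0) :
    (Z.image fun p => v₂ * p.1 - v₁ * p.2).card ≤ Q.totalDegree := by
  classical
  let res : ℝ → ℝ → ℝ → ℝ → (MvPolynomial (Fin 2) ℝ →ₐ[ℝ] Polynomial ℝ) := fun x y a b =>
    MvPolynomial.aeval ![Polynomial.C x + Polynomial.C a * Polynomial.X,
      Polynomial.C y + Polynomial.C b * Polynomial.X]
  have hres : ∀ x y a b s P, (res x y a b P).eval s =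
      MvPolynomial.eval ![x + a * s, y + b * s] P := by
    intro x y a b s P
    induction P using MvPolynomial.induction_on with
    | C r => simp [res]
    | add p q hp hq => simp [hp, hq]
    | mul_X p i hp =>
      rw [map_mul, Polynomial.eval_mul, hp, map_mul]
      congr 1
      fin_cases i <;> simp [res]
  have hline : ∀ x y : ℝ, MvPolynomial.eval ![x, y] Q = 0 → ∀ t : ℝ,
      MvPolynomial.eval ![x + v₁ * t, y + v₂ * t] Q = 0 := by
    intro x y h t
    have hn : ∀ k : ℕ, MvPolynomial.eval ![x + v₁ * k, y + v₂ * k] Q = 0 := by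
      intro k
      induction k with
      | zero => simpa using h
      | succ k ih =>
        have := hinv _ _ ih
        push_cast
        rw [mul_add, mul_add, ← add_assoc, ← add_assoc, mul_one, mul_one]
        exact this
    have h0 : res x y v₁ v₂ Q = 0 := by
      apply Polynomial.eq_zero_of_infinite_isRoot
      refine Set.infinite_of_injective_forall_mem (f := fun k : ℕ => (k : ℝ)) Nat.cast_injective ?_
      intro k
      exact (hres _ _ _ _ _ _).trans (hn k)
    rw [← hres, h0, Polynomial.eval_zero]
  have hnorm : (0 : ℝ) < (v₁ : ℝ) ^ 2 + (v₂ : ℝ) ^ 2 := by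
    have : 0 < v₁ ^ 2 + v₂ ^ 2 := by
      rcases eq_or_ne v₁ 0 with h | h
      · have h2 : v₂ ≠ 0 := by rintro rfl; exact hv (by simp [h])
        positivity
      · positivity
    exact_mod_cast this
  set ν : ℝ := (v₁ : ℝ) ^ 2 + (v₂ : ℝ) ^ 2 with hν
  set q := res 0 0 v₂ (-v₁) Q with hq
  -- each line of the family meets the orthogonal line through the origin
  have hdec : ∀ x y : ℝ, MvPolynomial.eval ![x, y] Q = 0 ↔ q.eval ((v₂ * x - v₁ * y) / ν) = 0 := by
    intro x y
    rw [hq, hres]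
    constructor
    · intro h
      have := hline x y h (-((v₁ * x + v₂ * y) / ν))
      have e1 : (0 : ℝ) + v₂ * ((v₂ * x - v₁ * y) / ν) = x + v₁ * -((v₁ * x + v₂ * y) / ν) := by
        field_simp; rw [hν]; ring
      have e2 : (0 : ℝ) + -v₁ * ((v₂ * x - v₁ * y) / ν) = y + v₂ * -((v₁ * x + v₂ * y) / ν) := by
        field_simp; rw [hν]; ring
      rw [e1, e2]
      exact this
    · intro h
      have := hline _ _ h ((v₁ * x + v₂ * y) / ν)
      have e1 : (0 : ℝ) + v₂ * ((v₂ * x - v₁ * y) / ν) + v₁ * ((v₁ * x + v₂ * y) / ν) = x := by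
        field_simp; rw [hν]; ring
      have e2 : (0 : ℝ) + -v₁ * ((v₂ * x - v₁ * y) / ν) + v₂ * ((v₁ * x + v₂ * y) / ν) = y := by
        field_simp; rw [hν]; ring
      rw [e1, e2] at this
      exact this
  have hq0 : q ≠ 0 := by
    intro h0
    apply hQ
    apply mvPolynomial_ext₂
    intro x y
    rw [map_zero, hdec, h0, Polynomial.eval_zero]
  have hqd : q.natDegree ≤ Q.totalDegree := by
    rw [hq]
    have := MvPolynomial.aeval_natDegree_le Q le_rfl
      ![Polynomial.C (0 : ℝ) + Polynomial.C (v₂ : ℝ) * Polynomial.X,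
      Polynomial.C (0 : ℝ) + Polynomial.C (-(v₁ : ℝ)) * Polynomial.X] (n := 1) (by
        intro i
        fin_cases i <;> simp only [map_zero, zero_add] <;>
          exact (Polynomial.natDegree_C_mul_le _ _).trans Polynomial.natDegree_X_le)
    rwa [mul_one] at this
  refine le_trans ?_ ((Polynomial.card_roots' q).trans hqd)
  refine le_trans ?_ (Multiset.toFinset_card_le _)
  refine Finset.card_le_card_of_injOn (fun c : ℤ => (c : ℝ) / ν) ?_ ?_
  · intro c hc
    simp only [Finset.coe_image, Set.mem_image, Finset.mem_coe] at hc
    obtain ⟨p, hp, rfl⟩ := hc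
    simp only [Finset.mem_coe, Multiset.mem_toFinset]
    rw [Polynomial.mem_roots hq0, Polynomial.IsRoot]
    have := (hdec _ _).1 (hZ p hp)
    push_cast
    exact this
  · intro c _ c' _ h
    have h' : (c : ℝ) / ν = (c' : ℝ) / ν := h
    rw [div_left_inj' hnorm.ne'] at h'
    exact_mod_cast h'

/-- Zero estimate in the plane.  If a curve of degree at most `E` contains all the translates of
`Z` by more than `E` vectors, and `Z` has more than `E ^ 2` points, then a `1 / E` part of `Z` lies
on one line whose direction is a difference of two of these vectors. -/
theorem exists_line_of_vanishing (F : MvPolynomial (Fin 2) ℝ) (hF : F ≠ 0) (E : ℕ)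
    (hE : F.totalDegree ≤ E) (Z B : Finset (ℤ × ℤ)) (hB : E < B.card) (hZE : E * E < Z.card)
    (hvan : ∀ p ∈ Z, ∀ g ∈ B,
      MvPolynomial.eval ![((p.1 + g.1 : ℤ) : ℝ), ((p.2 + g.2 : ℤ) : ℝ)] F = 0) :
    ∃ g ∈ B, ∃ g' ∈ B, g ≠ g' ∧ ∃ c : ℤ,
      Z.card ≤ E * (Z.filter fun p => (g.2 - g'.2) * p.1 - (g.1 - g'.1) * p.2 = c).card := by
  classical
  by_contra! hcon
  let τ : ℤ × ℤ → MvPolynomial (Fin 2) ℝ → MvPolynomial (Fin 2) ℝ := fun g P =>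
    trans₂ (g.1 : ℝ) (g.2 : ℝ) P
  have hτ0 : ∀ g, τ g F ≠ 0 := by
    intro g h
    exact hF ((map_eq_zero_iff (transEquiv (g.1 : ℝ) (g.2 : ℝ))
      (transEquiv (g.1 : ℝ) (g.2 : ℝ)).injective).1 h)
  have hτE : ∀ g, (τ g F).totalDegree ≤ E := fun g => (totalDegree_trans₂ _ _ _).le.trans hE
  have hτv : ∀ g ∈ B, ∀ p ∈ Z, MvPolynomial.eval ![(p.1 : ℝ), (p.2 : ℝ)] (τ g F) = 0 := by
    intro g hg p hp
    have := hvan p hp g hg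
    push_cast at this
    simp only [τ, eval_trans₂]
    exact this
  obtain ⟨g₀, hg₀⟩ : B.Nonempty := by
    rw [← Finset.card_pos]; omega
  set fs := UniqueFactorizationMonoid.factors (τ g₀ F) with hfs
  have hprod : Associated fs.prod (τ g₀ F) := UniqueFactorizationMonoid.factors_prod (hτ0 g₀)
  have hirr : ∀ Q ∈ fs, Irreducible Q := fun Q hQ =>
    UniqueFactorizationMonoid.irreducible_of_factor Q hQ
  have hsum : (fs.map MvPolynomial.totalDegree).sum ≤ E := by
    rw [← totalDegree_multiset_prod_eq fs (fun h => (hirr 0 h).ne_zero rfl),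
      totalDegree_eq_of_associated hprod]
    exact hτE g₀
  let zs : MvPolynomial (Fin 2) ℝ → Finset (ℤ × ℤ) := fun Q =>
    Z.filter fun p => MvPolynomial.eval ![(p.1 : ℝ), (p.2 : ℝ)] Q = 0
  have hkey : ∀ Q ∈ fs, E * (zs Q).card < Q.totalDegree * Z.card := by
    intro Q hQ
    have hQi := hirr Q hQ
    have hdpos := totalDegree_pos_of_irreducible hQi
    by_cases hall : ∀ g ∈ B, Q ∣ τ g F
    · -- more than `E` translates of `Q` divide `F`, so two of them are proportional
      obtain ⟨g, hg, g', hg', hne, hass⟩ : ∃ g ∈ B, ∃ g' ∈ B, g ≠ g' ∧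
          Associated (τ (-g) Q) (τ (-g') Q) := by
        by_contra! hno
        have hirrτ : ∀ g : ℤ × ℤ, Irreducible (τ (-g) Q) := by
          intro g
          exact (MulEquiv.irreducible_iff
            (transEquiv ((-g).1 : ℝ) ((-g).2 : ℝ)).toMulEquiv).2 hQi
        have hd : ∏ g ∈ B, τ (-g) Q ∣ F := by
          apply Finset.prod_dvd_of_isRelPrime
          · intro a ha b hb hab
            exact (hirrτ a).isRelPrime_iff_not_dvd.2 fun hdv =>
              hno a ha b hb hab ((hirrτ a).associated_of_dvd (hirrτ b) hdv)
          · intro g hg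
            have h1 := map_dvd (trans₂ ((-g).1 : ℝ) ((-g).2 : ℝ)) (hall g hg)
            simp only [τ] at h1
            rw [trans₂_trans₂] at h1
            simpa [τ, trans₂_zero] using h1
        have h2 := totalDegree_le_of_dvd hF hd
        rw [← Finset.prod_map_val, totalDegree_multiset_prod_eq, Multiset.map_map] at h2
        · have h3 : B.card ≤ (Multiset.map (MvPolynomial.totalDegree ∘ fun g => τ (-g) Q) B.val).sum := by
            change B.card ≤ ∑ g ∈ B, (τ (-g) Q).totalDegree
            calc B.card = ∑ _g ∈ B, 1 := by simp
              _ ≤ _ := Finset.sum_le_sum fun g _ => totalDegree_pos_of_irreducible (hirrτ g)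
          omega
        · intro h0
          rw [Multiset.mem_map] at h0
          obtain ⟨g, _, hg0⟩ := h0
          exact (hirrτ g).ne_zero hg0
      -- hence `Q` is invariant under the translation by `g - g'` up to a constant
      obtain ⟨u, hu⟩ := hass
      obtain ⟨r, hr, hur⟩ := MvPolynomial.isUnit_iff_eq_C_of_isReduced.1 u.isUnit
      have hinv : ∀ x y : ℝ, MvPolynomial.eval ![x, y] Q = 0 →
          MvPolynomial.eval ![x + (g.1 - g'.1 : ℤ), y + (g.2 - g'.2 : ℤ)] Q = 0 := by
        intro x y h
        have h1 := congrArg (MvPolynomial.eval ![x + g.1, y + g.2]) hu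
        rw [hur, map_mul] at h1
        simp only [τ, eval_trans₂, Prod.fst_neg, Prod.snd_neg, Int.cast_neg] at h1
        rw [add_neg_cancel_right, add_neg_cancel_right, h, zero_mul] at h1
        push_cast
        rw [← add_sub_assoc, ← add_sub_assoc, sub_eq_add_neg, sub_eq_add_neg]
        exact h1.symm
      have hlines := card_lines_le Q hQi.ne_zero (g.1 - g'.1) (g.2 - g'.2) (by
        intro h
        apply hne
        simp only [Prod.mk_eq_zero] at h
        ext
        · linarith [h.1]
        · linarith [h.2]) hinv (zs Q) (fun p hp => (Finset.mem_filter.1 hp).2)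
      set im := (zs Q).image fun p => (g.2 - g'.2) * p.1 - (g.1 - g'.1) * p.2 with him
      have hfib := Finset.card_eq_sum_card_fiberwise (s := zs Q) (t := im)
        (f := fun p => (g.2 - g'.2) * p.1 - (g.1 - g'.1) * p.2)
        (fun p hp => Finset.mem_coe.2 (Finset.mem_image_of_mem _ hp))
      have hZpos : 0 < Z.card := by omega
      have hle : ∀ c ∈ im, E * ((zs Q).filter fun p =>
          (g.2 - g'.2) * p.1 - (g.1 - g'.1) * p.2 = c).card ≤ Z.card - 1 := by
        intro c _
        have h1 := hcon g hg g' hg' hne c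
        have h2 : ((zs Q).filter fun p =>
          (g.2 - g'.2) * p.1 - (g.1 - g'.1) * p.2 = c).card ≤ (Z.filter fun p =>
          (g.2 - g'.2) * p.1 - (g.1 - g'.1) * p.2 = c).card :=
          Finset.card_le_card (Finset.filter_subset_filter _ (Finset.filter_subset _ _))
        have h3 := Nat.mul_le_mul_left E h2
        omega
      rw [hfib, Finset.mul_sum]
      calc _ ≤ ∑ _c ∈ im, (Z.card - 1) := Finset.sum_le_sum hle
        _ = im.card * (Z.card - 1) := by simp
        _ ≤ Q.totalDegree * (Z.card - 1) := Nat.mul_le_mul_right _ hlines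
        _ < Q.totalDegree * Z.card := Nat.mul_lt_mul_of_pos_left (by omega) hdpos
    · push Not at hall
      obtain ⟨g, hg, hnd⟩ := hall
      have h1 := bezout_card_le Q (τ g F) hQi.prime hnd (zs Q)
        (fun p hp => (Finset.mem_filter.1 hp).2)
        (fun p hp => hτv g hg p (Finset.mem_filter.1 hp).1)
      calc E * (zs Q).card ≤ E * (Q.totalDegree * E) :=
            Nat.mul_le_mul_left _ (h1.trans (Nat.mul_le_mul_left _ (hτE g)))
        _ = Q.totalDegree * (E * E) := by ring
        _ < Q.totalDegree * Z.card := Nat.mul_lt_mul_of_pos_left hZE hdpos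
  have hcover : Z ⊆ fs.toFinset.biUnion zs := by
    intro p hp
    have h0 := hτv g₀ hg₀ p hp
    obtain ⟨u, hu⟩ := hprod
    obtain ⟨r, hr, hur⟩ := MvPolynomial.isUnit_iff_eq_C_of_isReduced.1 u.isUnit
    rw [← hu, hur, map_mul, MvPolynomial.eval_C] at h0
    have h1 := (mul_eq_zero.1 h0).resolve_right hr.ne_zero
    rw [map_multiset_prod, Multiset.prod_eq_zero_iff, Multiset.mem_map] at h1
    obtain ⟨Q, hQ, hQ0⟩ := h1
    rw [Finset.mem_biUnion]
    exact ⟨Q, Multiset.mem_toFinset.2 hQ, Finset.mem_filter.2 ⟨hp, hQ0⟩⟩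
  have hc1 : Z.card ≤ ∑ Q ∈ fs.toFinset, (zs Q).card :=
    (Finset.card_le_card hcover).trans Finset.card_biUnion_le
  have hne : fs.toFinset.Nonempty := by
    rw [Finset.nonempty_iff_ne_empty]
    intro h
    rw [h, Finset.sum_empty] at hc1
    omega
  have hc2 : E * Z.card < ∑ Q ∈ fs.toFinset, Q.totalDegree * Z.card := by
    calc E * Z.card ≤ E * ∑ Q ∈ fs.toFinset, (zs Q).card := Nat.mul_le_mul_left _ hc1
      _ = ∑ Q ∈ fs.toFinset, E * (zs Q).card := Finset.mul_sum _ _ _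
      _ < _ := Finset.sum_lt_sum_of_nonempty hne fun Q hQ => hkey Q (Multiset.mem_toFinset.1 hQ)
  rw [← Finset.sum_mul] at hc2
  have hc3 : ∑ Q ∈ fs.toFinset, Q.totalDegree ≤ (fs.map MvPolynomial.totalDegree).sum := by
    rw [Finset.sum_multiset_map_count]
    refine Finset.sum_le_sum fun Q hQ => ?_
    have := Multiset.count_pos.2 (Multiset.mem_toFinset.1 hQ)
    rw [smul_eq_mul]
    exact Nat.le_mul_of_pos_left _ this
  have := Nat.mul_le_mul_right Z.card (hc3.trans hsum)
  omega

/-! ### Certified logarithms -/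

/-- Partial sums of `∑ p r^j / (2 j + 1)`, `j ≥ i`, with `r = num / den`, rounded down termwise;
the first argument is the number of terms. -/
def artanhSum (num den : ℕ) : ℕ → ℕ → ℕ → ℕ
  | 0, _, _ => 0
  | f + 1, p, i => p / (2 * i + 1) + artanhSum num den f (p * num / den) (i + 1)

/-- Fixed-point approximation from below of `2 ^ P * log (a / b)`, computed from
`log (a / b) = 2 artanh ((a - b) / (a + b))`; it is accurate when `(a - b) 2 ^ v ≤ a + b`. -/
def fixLog (P v a b : ℕ) : ℕ :=
  artanhSum ((a - b) ^ 2) ((a + b) ^ 2) ((P + 2) / (2 * v) + 1) (2 ^ (P + 1) * (a - b) / (a + b)) 0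

theorem artanhSum_spec (num den : ℕ) (hden : 0 < den) (hr : 4 * num ≤ den) (T : ℕ) :
    ∀ (p i : ℕ) (x : ℝ), (p : ℝ) ≤ x → x ≤ p + 2 → ∀ S : ℝ,
      HasSum (fun j : ℕ => x * ((num : ℝ) / den) ^ j / (2 * (i + j : ℕ) + 1)) S →
      (artanhSum num den T p i : ℝ) ≤ S ∧
        S ≤ artanhSum num den T p i + 3 * T + 2 * (x * ((num : ℝ) / den) ^ T) := by
  have hd : (0 : ℝ) < den := by exact_mod_cast hden
  set r : ℝ := (num : ℝ) / den with hrdef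
  have hr0 : 0 ≤ r := by positivity
  have hr4 : r ≤ 1 / 4 := by
    rw [hrdef, div_le_iff₀ hd]
    have : (4 * num : ℝ) ≤ den := by exact_mod_cast hr
    linarith
  induction T with
  | zero =>
    intro p i x h1 h2 S hS
    have hx : 0 ≤ x := le_trans (Nat.cast_nonneg p) h1
    simp only [artanhSum, Nat.cast_zero]
    refine ⟨hS.nonneg fun j => by positivity, ?_⟩
    have hg := (hasSum_geometric_of_lt_one hr0 (by linarith)).mul_left x
    have := hasSum_le (fun j => ?_) hS hg
    · have h3 : (1 - r)⁻¹ ≤ 2 := by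
        rw [inv_le_comm₀ (by linarith) (by norm_num)]; linarith
      have := mul_le_mul_of_nonneg_left h3 hx
      simp only [pow_zero]; linarith
    · apply div_le_self (by positivity)
      have : (0 : ℝ) ≤ (i + j : ℕ) := by positivity
      linarith
  | succ T ih =>
    intro p i x h1 h2 S hS
    have hx : 0 ≤ x := le_trans (Nat.cast_nonneg p) h1
    have hS' : HasSum (fun j : ℕ => (x * r) * r ^ j / (2 * (i + 1 + j : ℕ) + 1))
        (S - x / (2 * i + 1)) := by
      have := (hasSum_nat_add_iff' 1).2 hS
      simp only [Finset.sum_range_one, pow_zero, mul_one, add_zero] at this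
      refine (congrArg (fun f : ℕ → ℝ => HasSum f _) (funext fun j => ?_)).mp this
      rw [pow_succ, show i + 1 + j = i + (j + 1) by ring]; ring
    have hfl : ((p * num / den : ℕ) : ℝ) ≤ p * r ∧ p * r ≤ (p * num / den : ℕ) + 1 := by
      have e1 : (p : ℝ) * r = ((p * num : ℕ) : ℝ) / den := by push_cast; rw [hrdef]; ring
      rw [e1]
      constructor
      · exact Nat.cast_div_le
      · rw [div_le_iff₀ hd]
        have := Nat.lt_div_mul_add (a := p * num) hden
        have h : (p * num : ℕ) ≤ (p * num / den + 1) * den := by rw [add_mul, one_mul]; omega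
        exact_mod_cast h
    obtain ⟨a1, a2⟩ := ih (p * num / den) (i + 1) (x * r)
      (hfl.1.trans (mul_le_mul_of_nonneg_right h1 hr0)) (by nlinarith [hfl.2]) _ hS'
    have hg : ((p / (2 * i + 1) : ℕ) : ℝ) ≤ x / (2 * i + 1) ∧
        x / (2 * i + 1) ≤ (p / (2 * i + 1) : ℕ) + 3 := by
      have hi : (0 : ℝ) < 2 * i + 1 := by positivity
      constructor
      · refine le_trans Nat.cast_div_le ?_
        push_cast
        gcongr
      · rw [div_le_iff₀ hi]
        have h : p ≤ (p / (2 * i + 1) + 1) * (2 * i + 1) := by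
          have := Nat.lt_div_mul_add (a := p) (b := 2 * i + 1) (by omega)
          rw [add_mul, one_mul]; omega
        have h' : (p : ℝ) ≤ ((p / (2 * i + 1) : ℕ) + 1) * (2 * i + 1) := by exact_mod_cast h
        have : (0 : ℝ) ≤ i := by positivity
        nlinarith
    simp only [artanhSum]
    push_cast at *
    rw [pow_succ]
    constructor
    · linarith [hg.1]
    · have e : x * r * r ^ T = x * (r ^ T * r) := by ring
      rw [e] at a2
      linarith [hg.2]

theorem fixLog_spec (P v a b : ℕ) (hb : 0 < b) (hab : b ≤ a) (hv : 1 ≤ v)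
    (h : (a - b) * 2 ^ v ≤ a + b) :
    (fixLog P v a b : ℝ) ≤ 2 ^ P * log (a / b) ∧
      2 ^ P * log (a / b) ≤ fixLog P v a b + (2 * P + 10) := by
  have hb' : (0 : ℝ) < b := by exact_mod_cast hb
  have hab' : (b : ℝ) ≤ a := by exact_mod_cast hab
  have hs : (0 : ℝ) < a + b := by linarith
  set z : ℝ := (a - b) / (a + b) with hz
  have hz0 : 0 ≤ z := div_nonneg (by linarith) hs.le
  have hzv : z * 2 ^ v ≤ 1 := by
    rw [hz, div_mul_eq_mul_div, div_le_one hs]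
    have : (((a - b : ℕ) : ℝ)) * 2 ^ v ≤ a + b := by exact_mod_cast h
    rwa [Nat.cast_sub hab] at this
  have h2v : (2 : ℝ) ≤ 2 ^ v := by
    calc (2 : ℝ) = 2 ^ 1 := by norm_num
      _ ≤ 2 ^ v := pow_le_pow_right₀ (by norm_num) hv
  have hz2 : z ≤ 1 / 2 := by nlinarith
  have hlog : log (1 + z) - log (1 - z) = log (a / b) := by
    rw [← log_div (by linarith) (by linarith)]
    congr 1
    rw [hz, div_eq_div_iff (by linarith) hb'.ne']; field_simp; ring
  have hsum := hasSum_log_sub_log_of_abs_lt_one (x := z) (by rw [abs_of_nonneg hz0]; linarith)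
  rw [hlog] at hsum
  have hr : (((a - b) ^ 2 : ℕ) : ℝ) / ((a + b) ^ 2 : ℕ) = z ^ 2 := by
    push_cast [Nat.cast_sub hab]; rw [hz, div_pow]
  have hn4 : 4 * (a - b) ^ 2 ≤ (a + b) ^ 2 := by
    have : 2 * (a - b) ≤ a + b := by
      calc 2 * (a - b) = (a - b) * 2 ^ 1 := by ring
        _ ≤ (a - b) * 2 ^ v := by gcongr <;> omega
        _ ≤ _ := h
    calc 4 * (a - b) ^ 2 = (2 * (a - b)) ^ 2 := by ring
      _ ≤ _ := Nat.pow_le_pow_left this 2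
  set T := (P + 2) / (2 * v) + 1 with hT
  have hx : (2 : ℝ) ^ (P + 1) * z = ((2 ^ (P + 1) * (a - b) : ℕ) : ℝ) / ((a + b : ℕ) : ℝ) := by
    push_cast [Nat.cast_sub hab]; rw [hz]; ring
  have key := artanhSum_spec ((a - b) ^ 2) ((a + b) ^ 2) (by positivity) hn4 T
    (2 ^ (P + 1) * (a - b) / (a + b)) 0 (2 ^ (P + 1) * z) (by rw [hx]; exact Nat.cast_div_le)
    (by
      rw [hx, div_le_iff₀ (by push_cast; exact hs)]
      have := Nat.lt_div_mul_add (a := 2 ^ (P + 1) * (a - b)) (b := a + b) (by omega)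
      have h' : 2 ^ (P + 1) * (a - b) ≤ (2 ^ (P + 1) * (a - b) / (a + b) + 2) * (a + b) := by
        rw [add_mul]; omega
      exact_mod_cast h') (2 ^ P * log (a / b))
    (by
      have := hsum.mul_left (2 ^ P)
      refine (congrArg (fun f : ℕ → ℝ => HasSum f _) (funext fun j => ?_)).mp this
      rw [hr, ← pow_mul, zero_add, pow_succ 2 P, pow_succ z]; ring)
  refine ⟨key.1, key.2.trans ?_⟩
  have hPT : P + 2 ≤ 2 * v * T := by
    have := Nat.lt_div_mul_add (a := P + 2) (b := 2 * v) (by omega)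
    rw [hT, mul_add, mul_one, mul_comm (2 * v)]; omega
  have hzT : 2 ^ (P + 1) * z * (z ^ 2) ^ T ≤ 1 / 4 := by
    have h1 : (z ^ 2) ^ T ≤ 1 / 2 ^ (P + 2) := by
      rw [le_div_iff₀ (by positivity)]
      calc (z ^ 2) ^ T * 2 ^ (P + 2) ≤ (z ^ 2) ^ T * 2 ^ (2 * v * T) := by
            gcongr; norm_num
        _ = ((z * 2 ^ v) ^ 2) ^ T := by rw [mul_pow z, mul_pow (z ^ 2), ← pow_mul 2 v, ← pow_mul 2 (v * 2)]; ring_nf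
        _ ≤ 1 := pow_le_one₀ (by positivity) (pow_le_one₀ (by positivity) hzv)
    calc 2 ^ (P + 1) * z * (z ^ 2) ^ T ≤ 2 ^ (P + 1) * (1 / 2) * (1 / 2 ^ (P + 2)) := by gcongr
      _ = 1 / 4 := by rw [pow_succ 2 (P + 1)]; field_simp; norm_num
  rw [hr]
  have hTP : 2 * T ≤ P + 4 := by
    have : (P + 2) / (2 * v) ≤ (P + 2) / 2 := Nat.div_le_div_left (by omega) (by norm_num)
    omega
  have hTP' : (2 * T : ℝ) ≤ P + 4 := by exact_mod_cast hTP
  have : (0 : ℝ) ≤ P := by positivity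
  unfold fixLog
  linarith

/-- `⌊2 ^ 800 / φ⌋`. -/
def invGoldenHi : ℕ := 4121059556994604332838848320118936285696325377538301949935175628234330743489411943051428403919116885240473967393660250580064812945377418059249570755444728077227968864563052684147631883881578360378629687148431800804617296581937088185609630648

/-- `2 ^ 800 * log φ`, rounded down to within `10 ^ 4`. -/
def logGoldenHi : ℕ := 3208727394769891329128468746343618944223883824445464707340448885534359296100970429482708000804042807118670629669989572134759520447872692749495232730686963931467890091439202984857961032744423602123327710763226122005322327922528974956885425657

/-- `2 ^ 800 * log 10`, rounded down to within `10 ^ 4`. -/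
def logTenHi : ℕ := 15353670633018298046602642862086146274449758883388656948572340131672182750296403472047341279816542913036166534660187880503901930372112032134236704603982670047700712701972161167840130844803426198714347898835794412940214055994869873543049300920

theorem logGoldenHi_eq : fixLog 800 1 (2 ^ 800 + invGoldenHi) (2 ^ 800) = logGoldenHi := by
  decide +kernel

theorem logTenHi_eq : 3 * fixLog 800 1 2 1 + fixLog 800 3 5 4 = logTenHi := by
  decide +kernel

theorem invGoldenHi_spec : (invGoldenHi : ℝ) ≤ 2 ^ 800 * (goldenRatio - 1) ∧
    2 ^ 800 * (goldenRatio - 1) ≤ invGoldenHi + 1 := by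
  have h1 : invGoldenHi ^ 2 + invGoldenHi * 2 ^ 800 ≤ (2 ^ 800) ^ 2 := by decide +kernel
  have h2 : (2 ^ 800) ^ 2 ≤ (invGoldenHi + 1) ^ 2 + (invGoldenHi + 1) * 2 ^ 800 := by decide +kernel
  have h1' : (invGoldenHi : ℝ) ^ 2 + invGoldenHi * 2 ^ 800 ≤ (2 ^ 800) ^ 2 := by exact_mod_cast h1
  have h2' : ((2 : ℝ) ^ 800) ^ 2 ≤ (invGoldenHi + 1) ^ 2 + (invGoldenHi + 1) * 2 ^ 800 := by
    exact_mod_cast h2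
  have hg := goldenRatio_sq
  have hg1 := one_lt_goldenRatio
  have h0 : (0 : ℝ) ≤ invGoldenHi := Nat.cast_nonneg _
  generalize (invGoldenHi : ℝ) = x at *
  have hy0 : (0 : ℝ) < 2 ^ 800 := by positivity
  generalize (2 : ℝ) ^ 800 = y at *
  have hz : (y * (goldenRatio - 1)) ^ 2 + y * (goldenRatio - 1) * y = y ^ 2 := by
    linear_combination y ^ 2 * hg
  have hz0 : 0 < y * (goldenRatio - 1) := mul_pos hy0 (by linarith)
  generalize y * (goldenRatio - 1) = z at *
  clear h1 h2
  constructor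
  · by_contra! hc
    nlinarith
  · by_contra! hc
    nlinarith

theorem log_ratio_le {x y : ℝ} (hx : 0 < x) (hy : 0 < y) : log (x / y) ≤ (x - y) / y := by
  have := log_le_sub_one_of_pos (div_pos hx hy)
  rwa [sub_div, div_self hy.ne']

/-- An integer approximation `a` to `P z` gives `log (1 + z)` to the same accuracy. -/
theorem log_one_add_approx {P z a E : ℝ} (hP : 0 < P) (ha : 0 ≤ a) (h1 : a ≤ P * z)
    (h2 : P * z ≤ a + E) :
    P * log ((P + a) / P) ≤ P * log (1 + z) ∧ P * log (1 + z) ≤ P * log ((P + a) / P) + E := by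
  have hz : 0 ≤ P * z := ha.trans h1
  have hz0 : 0 ≤ z := nonneg_of_mul_nonneg_right hz hP
  have e : 1 + a / P = (P + a) / P := by field_simp
  have haz : a / P ≤ z := by rw [div_le_iff₀ hP]; linarith
  have haP : 0 ≤ a / P := by positivity
  rw [← e]
  constructor
  · gcongr
  · have h3 : log (1 + z) - log (1 + a / P) ≤ z - a / P := by
      rw [← log_div (by positivity) (by positivity)]
      refine (log_ratio_le (by positivity) (by positivity)).trans ?_
      rw [show 1 + z - (1 + a / P) = z - a / P by ring]
      exact div_le_self (by linarith) (by linarith)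
    have h4 : P * (a / P) = a := by field_simp
    have := mul_le_mul_of_nonneg_left h3 hP.le
    rw [mul_sub, mul_sub, h4] at this
    linarith

theorem logGoldenHi_spec : (logGoldenHi : ℝ) ≤ 2 ^ 800 * log goldenRatio ∧
    2 ^ 800 * log goldenRatio ≤ logGoldenHi + 10000 := by
  obtain ⟨a1, a2⟩ := invGoldenHi_spec
  have h := fixLog_spec 800 1 (2 ^ 800 + invGoldenHi) (2 ^ 800) (by positivity) (by omega) le_rfl
    (by decide +kernel)
  rw [logGoldenHi_eq] at h
  have := log_one_add_approx (P := 2 ^ 800) (by positivity) (Nat.cast_nonneg _) a1 a2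
  rw [show 1 + (goldenRatio - 1) = goldenRatio by ring] at this
  push_cast at h
  generalize (2 : ℝ) ^ 800 = y at *
  constructor
  · linarith
  · linarith

theorem log_ten_split : log 10 = 3 * log 2 + log (5 / 4) := by
  rw [← log_rpow (by norm_num), ← log_mul (by norm_num) (by norm_num)]
  norm_num

theorem logTenHi_spec : (logTenHi : ℝ) ≤ 2 ^ 800 * log 10 ∧
    2 ^ 800 * log 10 ≤ logTenHi + 10000 := by
  have h := fixLog_spec 800 1 2 1 (by norm_num) (by norm_num) le_rfl (by norm_num)
  have h' := fixLog_spec 800 3 5 4 (by norm_num) (by norm_num) (by norm_num) (by norm_num)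
  have e := congrArg (fun n : ℕ => (n : ℝ)) logTenHi_eq
  push_cast at e h h'
  rw [div_one] at h
  rw [log_ten_split, ← e]
  constructor
  · linarith
  · linarith

/-- Reading off decimal bounds for `x` from an integer approximation of `2 ^ 800 x`. -/
theorem bounds_of_hi {A : ℕ} {x : ℝ} (h1 : (A : ℝ) ≤ 2 ^ 800 * x) (h2 : 2 ^ 800 * x ≤ A + 10000)
    (c d : ℕ) (hc : c * 2 ^ 800 < A * 100000) (hd : (A + 10000) * 100000 < d * 2 ^ 800) :
    (c : ℝ) / 100000 < x ∧ x < d / 100000 := by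
  have hc' : (c : ℝ) * 2 ^ 800 < A * 100000 := by exact_mod_cast hc
  have hd' : ((A : ℝ) + 10000) * 100000 < d * 2 ^ 800 := by exact_mod_cast hd
  have hy : (0 : ℝ) < 2 ^ 800 := by positivity
  generalize (2 : ℝ) ^ 800 = y at *
  clear hc hd
  rw [div_lt_iff₀ (by norm_num), lt_div_iff₀ (by norm_num)]
  constructor
  · refine lt_of_mul_lt_mul_right ?_ hy.le
    nlinarith
  · refine lt_of_mul_lt_mul_right ?_ hy.le
    nlinarith

theorem log_golden_bounds : (0.48121 : ℝ) < log goldenRatio ∧ log goldenRatio < 0.48122 := by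
  have := bounds_of_hi logGoldenHi_spec.1 logGoldenHi_spec.2 48121 48122 (by decide +kernel)
    (by decide +kernel)
  norm_num at this ⊢
  exact this

theorem log_ten_bounds : (2.30258 : ℝ) < log 10 ∧ log 10 < 2.30259 := by
  have := bounds_of_hi logTenHi_spec.1 logTenHi_spec.2 230258 230259 (by decide +kernel)
    (by decide +kernel)
  norm_num at this ⊢
  exact this

/-! ### The linear form in three logarithms -/

/-- The numerical inequality behind the construction of the auxiliary polynomial: with all
quantities measured in powers of `exp y`, the three sources of error are negligible. -/
theorem auxiliary_small (y Nn M A Ψ B τ err : ℝ) (hy : 100 ≤ y)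
    (hN0 : 0 ≤ Nn) (hN : Nn ≤ exp (4 * y)) (hM0 : 0 ≤ M) (hM : M ≤ exp (5 * y))
    (hA : A = exp (3465 * y)) (hΨ : Ψ = exp (882 * y))
    (hB1 : exp (9600 * y) ≤ B) (hB2 : B ≤ exp (9601 * y))
    (hτ0 : 0 ≤ τ) (hτ : τ ≤ exp (-(30580 * y))) (he0 : 0 ≤ err)
    (he : err ≤ exp (-(25530 * y))) :
    (Nn * (2 * M * (A * Ψ) / B ^ 2) + M * (B * (A * (2 * τ) + err * Ψ))) * Ψ *
      (M * (B * (A * Ψ))) < 1 := by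
  have hB0 : 0 < B := lt_of_lt_of_le (exp_pos _) hB1
  have hA0 : 0 < A := hA ▸ exp_pos _
  have hΨ0 : 0 < Ψ := hΨ ▸ exp_pos _
  have hsplit : (Nn * (2 * M * (A * Ψ) / B ^ 2) + M * (B * (A * (2 * τ) + err * Ψ))) * Ψ *
      (M * (B * (A * Ψ))) = 2 * (Nn * M * M * A * A * Ψ * Ψ * Ψ * B⁻¹)
        + 2 * (M * M * B * B * A * A * Ψ * Ψ * τ) + M * M * B * B * A * Ψ * Ψ * Ψ * err := by
    field_simp
    ring
  have hsm : exp (-y) ≤ 1 / 8 := by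
    rw [exp_neg, one_div]
    apply inv_anti₀ (by norm_num)
    have := add_one_le_exp y
    linarith
  have e1 : Nn * M * M * A * A * Ψ * Ψ * Ψ * B⁻¹ ≤ exp (-y) := by
    calc Nn * M * M * A * A * Ψ * Ψ * Ψ * B⁻¹ ≤ exp (4 * y) * exp (5 * y) * exp (5 * y) *
          exp (3465 * y) * exp (3465 * y) * exp (882 * y) * exp (882 * y) * exp (882 * y) *
          (exp (9600 * y))⁻¹ := by
          rw [hA, hΨ]
          gcongr
      _ = exp (-(10 * y)) := by
          rw [← exp_neg]; simp only [← exp_add]; congr 1; ring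
      _ ≤ exp (-y) := by apply exp_le_exp.2; linarith
  have e2 : M * M * B * B * A * A * Ψ * Ψ * τ ≤ exp (-y) := by
    calc M * M * B * B * A * A * Ψ * Ψ * τ ≤ exp (5 * y) * exp (5 * y) * exp (9601 * y) *
          exp (9601 * y) * exp (3465 * y) * exp (3465 * y) * exp (882 * y) * exp (882 * y) *
          exp (-(30580 * y)) := by
          rw [hA, hΨ]
          gcongr
      _ = exp (-(2674 * y)) := by
          simp only [← exp_add]; congr 1; ring
      _ ≤ exp (-y) := by apply exp_le_exp.2; linarith
  have e3 : M * M * B * B * A * Ψ * Ψ * Ψ * err ≤ exp (-y) := by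
    calc M * M * B * B * A * Ψ * Ψ * Ψ * err ≤ exp (5 * y) * exp (5 * y) * exp (9601 * y) *
          exp (9601 * y) * exp (3465 * y) * exp (882 * y) * exp (882 * y) * exp (882 * y) *
          exp (-(25530 * y)) := by
          rw [hA, hΨ]
          gcongr
      _ = exp (-(207 * y)) := by
          simp only [← exp_add]; congr 1; ring
      _ ≤ exp (-y) := by apply exp_le_exp.2; linarith
  rw [hsplit]
  linarith

/-- Index type of the monomials `x ^ j * y ^ (i - j)` of total degree less than `D`. -/
abbrev MonoIdx (D : ℕ) : Type := Σ i : Fin D, Fin ((i : ℕ) + 1)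

theorem two_mul_card_monoIdx (D : ℕ) : 2 * Fintype.card (MonoIdx D) = D * (D + 1) := by
  rw [Fintype.card_sigma]
  simp only [Fintype.card_fin]
  rw [Fin.sum_univ_eq_sum_range (fun i => i + 1), Finset.sum_add_distrib, mul_add,
    mul_comm 2 (∑ i ∈ Finset.range D, i), Finset.sum_range_id_mul_two]
  rcases D with _ | D
  · simp
  · simp; ring

theorem exists_polynomials_of_coeffs (T D : ℕ) (p : MonoIdx D → Fin T → ℤ) (hp : p ≠ 0) :
    ∃ P : Fin T → MvPolynomial (Fin 2) ℝ, P ≠ 0 ∧ (∀ t, (P t).totalDegree ≤ D) ∧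
      ∀ t x y, MvPolynomial.eval ![x, y] (P t) =
        ∑ i, (p i t : ℝ) * (x ^ (i.2 : ℕ) * y ^ ((i.1 : ℕ) - (i.2 : ℕ))) := by
  classical
  let ex : MonoIdx D → (Fin 2 →₀ ℕ) := fun i =>
    Finsupp.single 0 (i.2 : ℕ) + Finsupp.single 1 ((i.1 : ℕ) - (i.2 : ℕ))
  have hex : Function.Injective ex := by
    rintro ⟨a, b⟩ ⟨c, d⟩ h
    have h0 := DFunLike.congr_fun h 0
    have h1 := DFunLike.congr_fun h 1
    simp [ex] at h0 h1
    have hb := b.2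
    have hd := d.2
    have hac : a = c := by apply Fin.ext; omega
    subst hac
    have : b = d := Fin.ext h0
    rw [this]
  refine ⟨fun t => ∑ i, MvPolynomial.monomial (ex i) (p i t : ℝ), ?_, ?_, ?_⟩
  · intro h
    apply hp
    funext i t
    have := congrArg (MvPolynomial.coeff (ex i)) (congrFun h t)
    simp only [MvPolynomial.coeff_sum, MvPolynomial.coeff_monomial, Pi.zero_apply,
      MvPolynomial.coeff_zero] at this
    rw [Finset.sum_eq_single i] at this
    · simpa using this
    · intro j _ hj
      rw [if_neg (fun hh => hj (hex hh))]
    · simp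
  · intro t
    refine MvPolynomial.totalDegree_finsetSum_le fun i _ => ?_
    refine (MvPolynomial.totalDegree_monomial_le _ _).trans ?_
    have h1 := i.1.2
    have h2 := i.2.2
    rw [Finsupp.sum_fintype _ _ (by simp), Fin.sum_univ_two]
    simp [ex]
    omega
  · intro t x y
    rw [map_sum]
    refine Finset.sum_congr rfl fun i _ => ?_
    rw [MvPolynomial.eval_monomial, Finsupp.prod_fintype _ _ (by simp), Fin.prod_univ_two]
    simp [ex]

theorem binomial_expansion (D j l : ℕ) (hj : j < D) (L₁ L₂ Y u w : ℝ) :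
    ∑ b ∈ Finset.range D, ((j.choose b : ℝ) * (L₁⁻¹) ^ j * (-(L₂ * Y)) ^ (j - b) * Y ^ l) *
      u ^ (j - b + l) * w ^ b = ((w - L₂ * (Y * u)) / L₁) ^ j * (Y * u) ^ l := by
  have hsub : Finset.range (j + 1) ⊆ Finset.range D := Finset.range_subset_range.2 hj
  rw [← Finset.sum_subset hsub]
  · rw [div_pow, sub_eq_add_neg, add_pow, Finset.sum_div, Finset.sum_mul]
    refine Finset.sum_congr rfl fun b _ => ?_
    rw [pow_add, inv_pow, ← mul_neg_one (L₂ * (Y * u)), mul_pow (L₂ * (Y * u)), mul_pow L₂,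
      mul_pow Y u, mul_pow Y u, ← mul_neg_one (L₂ * Y), mul_pow (L₂ * Y), mul_pow L₂ Y]
    ring
  · intro b _ hb
    rw [Finset.mem_range, not_lt] at hb
    rw [Nat.choose_eq_zero_of_lt (by omega)]
    simp

theorem binomial_expansion_abs (D j l : ℕ) (hj : j < D) (L₁ L₂ Y V : ℝ) (h₁ : 0 < L₁)
    (h₂ : 0 < L₂) (hY : 0 < Y) :
    ∑ b ∈ Finset.range D, |(j.choose b : ℝ) * (L₁⁻¹) ^ j * (-(L₂ * Y)) ^ (j - b) * Y ^ l| * V ^ b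
      = ((V + L₂ * Y) / L₁) ^ j * Y ^ l := by
  have := binomial_expansion D j l hj L₁ (-L₂) Y 1 V
  rw [mul_one, neg_mul, sub_neg_eq_add] at this
  rw [← this]
  refine Finset.sum_congr rfl fun b _ => ?_
  rw [one_pow, mul_one, neg_neg, abs_mul, abs_mul, abs_mul, abs_pow (-(L₂ * Y)), abs_neg,
    abs_of_pos (mul_pos h₂ hY), abs_of_nonneg (by positivity : (0 : ℝ) ≤ (j.choose b : ℝ)),
    abs_of_pos (pow_pos (inv_pos.2 h₁) _), abs_of_pos (pow_pos hY _)]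

theorem abs_goldenConj_le_one : |goldenConj| ≤ 1 := by
  rw [abs_le]
  exact ⟨by linarith [neg_one_lt_goldenConj], by linarith [goldenConj_neg]⟩

theorem pow_mul_div_pow (δ g b : ℝ) (hδ : δ ≠ 0) (K s t : ℕ) (h : s * t ≤ K) :
    δ ^ K * (g * (b / δ) ^ s) ^ t = δ ^ (K - s * t) * (g ^ t * b ^ (s * t)) := by
  obtain ⟨r, rfl⟩ := Nat.exists_eq_add_of_le h
  rw [Nat.add_sub_cancel_left, mul_pow, ← pow_mul, div_pow, pow_add]
  field_simp

/-- If the linear form `Λ = n * log φ - e * log 10 + log (β / δ)` is tiny, then a plane curve of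
small degree passes through all the points `(s₁ - n * s₃, s₂ + e * s₃)` of a large box.  The
auxiliary polynomial in `x`, `y` and `z = φ ^ s₁ * 10 ^ s₂ * (β / δ) ^ s₃` is provided by
`exists_auxiliary`, and the exponential variable `z` is removed by `exists_elim_two`. -/
theorem exists_vanishing_aux (n e h δ : ℕ) (β β' : ℝ) (hO : InO β β') (hβ : 0 < β) (hδ : 1 ≤ δ)
    (hL3 : |log (β / δ)| ≤ h) (hδh : log δ ≤ 2 * h) (hβ' : |β'| ≤ exp (2 * h))
    (S₁ S₂ S₃ T D J B : ℕ) (V Q Y Λ L₁ L₂ : ℝ)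
    (hL₁ : L₁ = log goldenRatio) (hL₂ : L₂ = log 10) (hL₁0 : 0 < L₁) (hL₂0 : 0 < L₂)
    (hΛ : Λ = n * L₁ - e * L₂ + log (β / δ))
    (hY : Y = S₂ + e * S₃) (hY0 : 0 < Y) (hV0 : 0 < V)
    (hwV : S₁ * L₁ + S₂ * L₂ + S₃ * h ≤ V) (hΨV : S₂ * L₂ + S₃ * (2 * h) ≤ V)
    (hQ1 : 1 ≤ Q) (hS₁Q : S₁ ≤ Q) (hS₃Q : n * S₃ ≤ Q) (hYQ : Y ≤ Q) (hVQ : (V + L₂ * Y) / L₁ ≤ Q)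
    (hB : 2 ≤ B) (hJ : 2 * (T * V) ≤ J + 1)
    (hN : 3 * (D * (J + D)) < Fintype.card (MonoIdx D) * T)
    (hsmall : ((D * (J + D) : ℕ) * (2 * (Fintype.card (MonoIdx D) * T : ℕ) *
          (Q ^ D * exp (T * V)) / (B : ℝ) ^ 2)
        + (Fintype.card (MonoIdx D) * T : ℕ) * (B * (Q ^ D * (2 * ((T * V) ^ J / (J.factorial : ℝ)))
          + (D * Q ^ D * (S₃ * |Λ| / L₁)) * exp (T * V))))
        * exp (T * V) * ((Fintype.card (MonoIdx D) * T : ℕ) * (B * (Q ^ D * exp (T * V)))) < 1) :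
    ∃ F : MvPolynomial (Fin 2) ℝ, F ≠ 0 ∧ F.totalDegree ≤ T * D ∧
      ∀ s₁ s₂ s₃ : ℕ, s₁ + T ≤ S₁ → s₂ < S₂ → s₃ < S₃ →
        MvPolynomial.eval ![(s₁ : ℝ) - n * s₃, (s₂ : ℝ) + e * s₃] F = 0 := by
  set L₃ := log (β / δ) with hL₃
  have hδR : (1 : ℝ) ≤ δ := by exact_mod_cast hδ
  have hδ0 : (δ : ℝ) ≠ 0 := by positivity
  have hφ0 := goldenRatio_pos
  have hpow10 : ∀ k : ℕ, (10 : ℝ) ^ k = exp (k * L₂) := fun k => by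
    rw [hL₂, ← Real.log_pow, exp_log (by positivity)]
  have hpowφ : ∀ k : ℕ, goldenRatio ^ k = exp (k * L₁) := fun k => by
    rw [hL₁, ← Real.log_pow, exp_log (by positivity)]
  have hα0 : 0 < β / δ := by positivity
  have hpowα : ∀ k : ℕ, (β / δ) ^ k = exp (k * L₃) := fun k => by
    rw [hL₃, ← Real.log_pow, exp_log (by positivity)]
  have hδexp : (δ : ℝ) ≤ exp (2 * h) := by
    rw [← Real.log_le_iff_le_exp (by positivity)]; exact hδh
  let I := MonoIdx D
  let σ := Fin S₁ × Fin S₂ × Fin S₃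
  let X : σ → ℤ := fun s => (s.1 : ℤ) - n * (s.2.2 : ℕ)
  let Yy : σ → ℤ := fun s => (s.2.1 : ℕ) + e * (s.2.2 : ℕ)
  let mon : I → σ → ℤ := fun i s => X s ^ (i.2 : ℕ) * Yy s ^ ((i.1 : ℕ) - (i.2 : ℕ))
  let κ : I → ℕ → ℝ := fun i b => (((i.2 : ℕ).choose b : ℕ) : ℝ) * (L₁⁻¹) ^ (i.2 : ℕ) *
    (-(L₂ * Y)) ^ ((i.2 : ℕ) - b) * Y ^ ((i.1 : ℕ) - (i.2 : ℕ))
  let al : I → ℕ → ℕ := fun i b => (i.2 : ℕ) - b + ((i.1 : ℕ) - (i.2 : ℕ))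
  let u : σ → ℝ := fun s => (Yy s : ℝ) / Y
  let w : σ → ℝ := fun s => (s.1 : ℕ) * L₁ + (s.2.1 : ℕ) * L₂ + (s.2.2 : ℕ) * L₃
  let z : σ → ℝ := fun s => goldenRatio ^ (s.1 : ℕ) * 10 ^ (s.2.1 : ℕ) * (β / δ) ^ (s.2.2 : ℕ)
  let z' : σ → ℝ := fun s => goldenConj ^ (s.1 : ℕ) * 10 ^ (s.2.1 : ℕ) * (β' / δ) ^ (s.2.2 : ℕ)
  have hs1 : ∀ s : σ, ((s.1 : ℕ) : ℝ) ≤ S₁ := fun s => by exact_mod_cast s.1.2.le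
  have hs2 : ∀ s : σ, ((s.2.1 : ℕ) : ℝ) ≤ S₂ := fun s => by exact_mod_cast s.2.1.2.le
  have hs3 : ∀ s : σ, ((s.2.2 : ℕ) : ℝ) ≤ S₃ := fun s => by exact_mod_cast s.2.2.2.le
  have hYu : ∀ s, Y * u s = Yy s := fun s => by
    simp only [u]; field_simp
  have hYy0 : ∀ s, (0 : ℝ) ≤ Yy s := fun s => by
    simp only [Yy]; push_cast; positivity
  have hYyY : ∀ s, (Yy s : ℝ) ≤ Y := fun s => by
    simp only [Yy]; push_cast
    have := hs2 s; have := hs3 s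
    rw [hY]; gcongr
  have hXQ : ∀ s, |(X s : ℝ)| ≤ Q := fun s => by
    simp only [X]; push_cast
    have a1 := hs1 s
    have a2 := hs3 s
    have a3 : (n : ℝ) * (s.2.2 : ℕ) ≤ n * S₃ := by gcongr
    have a4 : (0 : ℝ) ≤ (n : ℝ) * (s.2.2 : ℕ) := by positivity
    have a5 : (0 : ℝ) ≤ ((s.1 : ℕ) : ℝ) := by positivity
    rw [abs_le]
    constructor <;> linarith
  have hwVs : ∀ s, |w s| ≤ V := fun s => by
    have a1 := hs1 s
    have a2 := hs2 s
    have a3 := hs3 s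
    have b1 : |((s.1 : ℕ) : ℝ) * L₁| ≤ S₁ * L₁ := by
      rw [abs_mul, Nat.abs_cast, abs_of_pos hL₁0]; gcongr
    have b2 : |((s.2.1 : ℕ) : ℝ) * L₂| ≤ S₂ * L₂ := by
      rw [abs_mul, Nat.abs_cast, abs_of_pos hL₂0]; gcongr
    have b3 : |((s.2.2 : ℕ) : ℝ) * L₃| ≤ S₃ * h := by
      rw [abs_mul, Nat.abs_cast]; gcongr
    calc |w s| ≤ _ := abs_add_three _ _ _
      _ ≤ V := by linarith
  have hzw : ∀ s, z s = exp (w s) := fun s => by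
    simp only [z, w]
    rw [exp_add, exp_add, hpowφ, hpow10, hpowα]
  have hwX : ∀ s, X s - (w s - L₂ * (Y * u s)) / L₁ = -((s.2.2 : ℕ) * Λ / L₁) := fun s => by
    rw [hYu]
    simp only [w, X, Yy, hΛ]
    push_cast
    field_simp
    ring
  have hXt : ∀ s, |(w s - L₂ * (Y * u s)) / L₁| ≤ Q := fun s => by
    rw [abs_div, abs_of_pos hL₁0, hYu]
    refine le_trans ?_ hVQ
    gcongr
    refine (abs_sub _ _).trans ?_
    rw [abs_mul, abs_of_pos hL₂0, abs_of_nonneg (hYy0 s)]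
    have := hwVs s
    have := hYyY s
    gcongr
  have hQpow : ∀ i j : ℕ, i + j ≤ D → Q ^ i * Q ^ j ≤ Q ^ D := fun i j hij => by
    rw [← pow_add]; exact pow_le_pow_right₀ hQ1 hij
  have hQ0 : 0 < Q := by linarith
  have hidx : ∀ i : I, (i.2 : ℕ) < D ∧ (i.2 : ℕ) + ((i.1 : ℕ) - (i.2 : ℕ)) < D := fun i => by
    have := i.1.2; have := i.2.2; omega
  have hcexp : (max (δ : ℝ) |β'|) ^ (S₃ * T) ≤ exp (T * (S₃ * (2 * h))) := by
    calc (max (δ : ℝ) |β'|) ^ (S₃ * T) ≤ (exp (2 * h)) ^ (S₃ * T) := by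
          gcongr; exact max_le hδexp hβ'
      _ = exp (T * (S₃ * (2 * h))) := by
          rw [← exp_nat_mul]; congr 1; push_cast; ring
  obtain ⟨p, hp0, hp⟩ := exists_auxiliary T D J D mon κ al u w z z' ((δ : ℝ) ^ (S₃ * T)) V (Q ^ D)
    (exp (T * V)) (D * Q ^ D * (S₃ * |Λ| / L₁)) B hB hV0 (by positivity)
    (fun s => by
      simp only [u]
      rw [abs_div, abs_of_pos hY0, abs_of_nonneg (hYy0 s), div_le_one hY0]
      exact hYyY s)
    hwVs hzw
    (fun i b _ => by
      have := hidx i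
      simp only [al]; omega)
    (fun i => by
      rw [binomial_expansion_abs D _ _ (hidx i).1 L₁ L₂ Y V hL₁0 hL₂0 hY0]
      refine le_trans ?_ (hQpow _ _ (hidx i).2.le)
      gcongr)
    (fun i s => by
      simp only [mon]; push_cast
      rw [abs_mul, abs_pow, abs_pow, abs_of_nonneg (hYy0 s)]
      refine le_trans ?_ (hQpow _ _ (hidx i).2.le)
      have := hXQ s
      have := (hYyY s).trans hYQ
      have := hYy0 s
      gcongr)
    (fun i s => by
      rw [binomial_expansion D _ _ (hidx i).1 L₁ L₂ Y (u s) (w s), hYu]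
      simp only [mon]; push_cast
      rw [← sub_mul, abs_mul, abs_pow, abs_of_nonneg (hYy0 s)]
      have h1 := abs_pow_sub_pow_le (X s : ℝ) ((w s - L₂ * (Y * u s)) / L₁) (i.2 : ℕ)
      rw [hwX, abs_neg, abs_div, abs_mul, Nat.abs_cast, abs_of_pos hL₁0, hYu] at h1
      have hm : max |(X s : ℝ)| |(w s - L₂ * (Yy s : ℝ)) / L₁| ≤ Q := by
        rw [← hYu s]; exact max_le (hXQ s) (hXt s)
      have h3 := hs3 s
      have hjD : ((i.2 : ℕ) : ℝ) ≤ D := by exact_mod_cast (hidx i).1.le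
      have h4 := hYy0 s
      have h5 := (hYyY s).trans hYQ
      calc _ ≤ (((s.2.2 : ℕ) : ℝ) * |Λ| / L₁ * (i.2 : ℕ) *
            max |(X s : ℝ)| |(w s - L₂ * (Yy s : ℝ)) / L₁| ^ ((i.2 : ℕ) - 1)) *
            (Yy s : ℝ) ^ ((i.1 : ℕ) - (i.2 : ℕ)) := by gcongr
        _ ≤ ((S₃ : ℝ) * |Λ| / L₁ * D * Q ^ ((i.2 : ℕ) - 1)) * Q ^ ((i.1 : ℕ) - (i.2 : ℕ)) := by
            gcongr
        _ = (D : ℝ) * (Q ^ ((i.2 : ℕ) - 1) * Q ^ ((i.1 : ℕ) - (i.2 : ℕ))) * (S₃ * |Λ| / L₁) := by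
            ring
        _ ≤ D * Q ^ D * (S₃ * |Λ| / L₁) := by
            have := hQpow ((i.2 : ℕ) - 1) ((i.1 : ℕ) - (i.2 : ℕ)) (by have := hidx i; omega)
            gcongr)
    (fun s t ht => by
      have hle : (s.2.2 : ℕ) * t ≤ S₃ * T := Nat.mul_le_mul s.2.2.2.le ht.le
      simp only [z, z']
      rw [pow_mul_div_pow _ _ _ hδ0 _ _ _ hle, pow_mul_div_pow _ _ _ hδ0 _ _ _ hle]
      have h10 : InO (10 : ℝ) 10 := by exact_mod_cast InO.nat 10
      exact ((InO.nat δ).pow _).mul ((((InO.golden.pow _).mul (h10.pow _)).pow _).mul (hO.pow _)))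
    (fun s t ht => by
      have hle : (s.2.2 : ℕ) * t ≤ S₃ * T := Nat.mul_le_mul s.2.2.2.le ht.le
      have h2 : ((s.2.1 : ℕ) * t : ℕ) ≤ S₂ * T := Nat.mul_le_mul s.2.1.2.le ht.le
      have hgen : (δ : ℝ) ^ (S₃ * T) * z' s ^ t = (δ : ℝ) ^ (S₃ * T - (s.2.2 : ℕ) * t) *
          ((goldenConj ^ (s.1 : ℕ)) ^ t * 10 ^ ((s.2.1 : ℕ) * t) * β' ^ ((s.2.2 : ℕ) * t)) := by
        simp only [z']
        rw [pow_mul_div_pow _ _ _ hδ0 _ _ _ hle, mul_pow (goldenConj ^ _), ← pow_mul 10]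
      rw [hgen, abs_mul, abs_mul, abs_mul, abs_pow, abs_pow, abs_pow, abs_pow, abs_pow,
        Nat.abs_cast, abs_of_pos (by norm_num : (0 : ℝ) < 10)]
      have hm1 : (1 : ℝ) ≤ max (δ : ℝ) |β'| := le_trans hδR (le_max_left _ _)
      calc _ ≤ (max (δ : ℝ) |β'|) ^ (S₃ * T - (s.2.2 : ℕ) * t) *
            (1 * 10 ^ (S₂ * T) * (max (δ : ℝ) |β'|) ^ ((s.2.2 : ℕ) * t)) := by
            gcongr
            · exact le_max_left _ _
            · exact pow_le_one₀ (by positivity) (pow_le_one₀ (by positivity) abs_goldenConj_le_one)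
            · norm_num
            · exact le_max_right _ _
        _ = 10 ^ (S₂ * T) * (max (δ : ℝ) |β'|) ^ (S₃ * T) := by
            rw [one_mul, mul_left_comm, ← pow_add, Nat.sub_add_cancel hle]
        _ ≤ exp (T * (S₂ * L₂)) * exp (T * (S₃ * (2 * h))) := by
            have hT : ((S₂ * T : ℕ) : ℝ) * L₂ = T * (S₂ * L₂) := by push_cast; ring
            rw [hpow10, hT]
            gcongr
        _ ≤ exp (T * V) := by
            rw [← exp_add, ← mul_add]
            gcongr)
    (one_le_pow₀ hδR)
    (by
      calc (δ : ℝ) ^ (S₃ * T) ≤ (max (δ : ℝ) |β'|) ^ (S₃ * T) := by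
            gcongr; exact le_max_left _ _
        _ ≤ exp (T * (S₃ * (2 * h))) := hcexp
        _ ≤ exp (T * V) := by
            gcongr
            have : 0 ≤ S₂ * L₂ := by positivity
            linarith)
    le_rfl hJ hN hsmall
  obtain ⟨Pl, hPl0, hPld, hPle⟩ := exists_polynomials_of_coeffs T D p hp0
  obtain ⟨F, hF0, hFd, hF⟩ := exists_elim_two T D Pl hPl0 hPld goldenRatio one_lt_goldenRatio
  refine ⟨F, hF0, hFd, fun s₁ s₂ s₃ h1 h2 h3 => ?_⟩
  refine hF _ _ (goldenRatio ^ s₁ * 10 ^ s₂ * (β / δ) ^ s₃) (by positivity) fun j hj => ?_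
  have := hp (⟨s₁ + j, by omega⟩, ⟨s₂, h2⟩, ⟨s₃, h3⟩)
  rw [Finset.sum_comm] at this
  rw [← this]
  refine Finset.sum_congr rfl fun t _ => ?_
  rw [hPle, Finset.sum_mul]
  refine Finset.sum_congr rfl fun i _ => ?_
  simp only [mon, X, Yy, z]
  push_cast
  rw [pow_add]
  ring

theorem pow_div_factorial_le (J : ℕ) (hJ : 0 < J) (a r : ℝ) (ha : 0 ≤ a)
    (h : a * exp (1 + r) ≤ J) : a ^ J / (J.factorial : ℝ) ≤ exp (-(r * J)) := by
  have hJ' : (0 : ℝ) < J := by exact_mod_cast hJ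
  have h1 := Real.pow_div_factorial_le_exp (J : ℝ) hJ'.le J
  calc a ^ J / (J.factorial : ℝ) = (a / J) ^ J * ((J : ℝ) ^ J / J.factorial) := by
        rw [div_pow]; field_simp
    _ ≤ (exp (-(1 + r))) ^ J * exp J := by
        gcongr
        rw [div_le_iff₀ hJ', exp_neg, ← div_eq_inv_mul, le_div_iff₀ (exp_pos _)]
        exact h
    _ = exp (-(r * J)) := by
        rw [← exp_nat_mul, ← exp_add]; congr 1; ring

theorem exp_29_bound : exp (1 + 1.9) ≤ 18.2 := by
  have h1 : exp 1 < 2.7182818286 := exp_one_lt_d9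
  have : exp (1 + 1.9) ^ 10 = exp 1 ^ 29 := by
    rw [← exp_nat_mul, ← exp_nat_mul]; norm_num
  by_contra! hc
  have h2 : (18.2 : ℝ) ^ 10 < exp (1 + 1.9) ^ 10 := by gcongr
  have h3 : exp 1 ^ 29 ≤ (2.7182818286 : ℝ) ^ 29 := by gcongr
  rw [this] at h2
  have h4 : (2.7182818286 : ℝ) ^ 29 < 18.2 ^ 10 := by norm_num
  linarith

set_option maxHeartbeats 1000000 in
/-- The polynomial of `exists_vanishing_aux` for the explicit parameters `S₁, S₂, S₃, T, D`. Their
orders of magnitude in `q` and `h` make the unknown coefficients outnumber the linear forms to be kept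
small, the auxiliary function small enough to vanish, and `S₁ S₂ S₃` large compared with `(T D) ^ 2`. -/
theorem exists_vanishing (n e q h δ : ℕ) (β β' : ℝ) (hO : InO β β') (hβ : 0 < β) (hδ : 1 ≤ δ)
    (hq : 50 ≤ q) (hh : 1 ≤ h) (hL3 : |log (β / δ)| ≤ h) (hδh : log δ ≤ 2 * h)
    (hβ' : |β'| ≤ exp (2 * h)) (hen : e ≤ n) (hn : 315000000 * (q ^ 2 * h) < n)
    (hQ : 1500000000 * (q : ℝ) ^ 2 * n ≤ exp q)
    (hΛ : |n * log goldenRatio - e * log 10 + log (β / δ)|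
      ≤ exp (-(290000000000 * (q ^ 3 * h : ℕ))))
    (S₁ S₂ S₃ T D : ℕ) (hS₁ : S₁ = 210000000 * (q ^ 2 * h)) (hS₂ : S₂ = 45000000 * (q ^ 2 * h))
    (hS₃ : S₃ = 105000000 * q ^ 2) (hT : T = 28 * q)
    (hD : D = 34650000000 * (q ^ 2 * h)) :
    ∃ F : MvPolynomial (Fin 2) ℝ, F ≠ 0 ∧ F.totalDegree ≤ T * D ∧
      ∀ s₁ s₂ s₃ : ℕ, s₁ + T ≤ S₁ → s₂ < S₂ → s₃ < S₃ →
        MvPolynomial.eval ![(s₁ : ℝ) - n * s₃, (s₂ : ℝ) + e * s₃] F = 0 := by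
  obtain ⟨l1a, l1b⟩ := log_golden_bounds
  obtain ⟨l2a, l2b⟩ := log_ten_bounds
  have hqR : (50 : ℝ) ≤ q := by exact_mod_cast hq
  have hhR : (1 : ℝ) ≤ h := by exact_mod_cast hh
  obtain ⟨P, hP⟩ : ∃ P : ℕ, P = q ^ 2 * h := ⟨_, rfl⟩
  obtain ⟨x, hx⟩ : ∃ x : ℕ, x = q ^ 3 * h := ⟨_, rfl⟩
  have hqP : (q : ℝ) * P = x := by rw [hx, hP]; push_cast; ring
  have hqPN : q * P = x := by rw [hx, hP]; ring
  have hP0 : (2500 : ℝ) ≤ P := by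
    rw [hP]; push_cast; nlinarith
  rw [← hP] at hn hS₁ hS₂ hD
  rw [← hx] at hΛ
  have hx50 : (50 : ℝ) * P ≤ x := by rw [← hqP]; gcongr
  have hqx : (q : ℝ) ≤ x := by rw [← hqP]; nlinarith
  have hxN : 1 ≤ x := by have : (1 : ℝ) ≤ x := by linarith
                         exact_mod_cast this
  have hPx : 50 * P ≤ x := by exact_mod_cast hx50
  obtain ⟨y, hy⟩ : ∃ y : ℝ, y = 10000000 * x := ⟨_, rfl⟩
  have hnR : (315000000 * P : ℝ) ≤ n := by exact_mod_cast hn.le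
  have hn0 : (0 : ℝ) < n := by linarith
  have henR : (e : ℝ) ≤ n := by exact_mod_cast hen
  have hS₁R : (S₁ : ℝ) = 210000000 * P := by rw [hS₁]; push_cast; ring
  have hS₂R : (S₂ : ℝ) = 45000000 * P := by rw [hS₂]; push_cast; ring
  have hS₃R : (S₃ : ℝ) = 105000000 * q ^ 2 := by rw [hS₃]; push_cast; ring
  have hS₃h : (S₃ : ℝ) * h = 105000000 * P := by rw [hS₃R, hP]; push_cast; ring
  have hTR : (T : ℝ) = 28 * q := by rw [hT]; push_cast; ring
  have hDR : (D : ℝ) = 34650000000 * P := by rw [hD]; push_cast; ring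
  have hTV : (T : ℝ) * (315000000 * P) = 882 * y := by rw [hTR, hy, ← hqP]; ring
  have hqD : (q : ℝ) * D = 3465 * y := by rw [hDR, hy, ← hqP]; ring
  have hq2n : (2500 : ℝ) * n ≤ q ^ 2 * n := by
    apply mul_le_mul_of_nonneg_right _ hn0.le; nlinarith
  obtain ⟨N2, hN2⟩ : ∃ N2 : ℝ, N2 = q ^ 2 * n := ⟨_, rfl⟩
  rw [← hN2] at hq2n
  rw [mul_assoc, ← hN2] at hQ
  have hnS : (n : ℝ) * S₃ = 105000000 * N2 := by rw [hS₃R, hN2]; ring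
  have heS : (e : ℝ) * S₃ ≤ 105000000 * N2 := by rw [← hnS]; gcongr
  have hYle : (S₂ : ℝ) + e * S₃ ≤ 106000000 * N2 := by rw [hS₂R]; linarith
  have hQD : exp q ^ D = exp (3465 * y) := by
    rw [← exp_nat_mul, ← hqD, mul_comm]
  have hJN : 34650000000 * P ≤ 161700000000 * x := by omega
  obtain ⟨J, hJ⟩ : ∃ J : ℕ, J = 161700000000 * x - 34650000000 * P := ⟨_, rfl⟩
  have hJD : J + D = 161700000000 * x := by rw [hJ, hD]; omega
  have hJR : (161000000000 : ℝ) * x ≤ J := by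
    have : (J : ℝ) + 34650000000 * P = 161700000000 * x := by
      rw [hD] at hJD; exact_mod_cast hJD
    linarith
  have hJ0 : 0 < J := by
    have : (0 : ℝ) < J := by linarith
    exact_mod_cast this
  have hy100 : 100 ≤ y := by rw [hy]; linarith
  have hey : y + 1 ≤ exp y := add_one_le_exp y
  have hexp2 : exp (2 * y) = exp y * exp y := by rw [← exp_add]; congr 1; ring
  have hx1 : (1 : ℝ) ≤ x := by exact_mod_cast hxN
  have hyy : 100000000000000 * (x : ℝ) ≤ exp y * exp y := by
    have h1 : y * y ≤ exp y * exp y := by gcongr <;> linarith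
    have h2 : (x : ℝ) ≤ x * x := le_mul_of_one_le_left (by linarith) hx1
    have h3 : y * y = 100000000000000 * (x * x : ℝ) := by rw [hy]; ring
    linarith
  have hq2x : (q : ℝ) ^ 2 ≤ P := by
    rw [hP]; push_cast
    exact le_mul_of_one_le_right (by positivity) hhR
  have hDy : (D : ℝ) + 1 ≤ exp (2 * y) := by
    rw [hexp2, hDR]
    linarith
  have hJy : ((J + D : ℕ) : ℝ) ≤ exp (2 * y) := by
    rw [hexp2, hJD]
    push_cast
    linarith
  have hTy : (T : ℝ) ≤ exp y := by
    rw [hTR]; linarith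
  have hcard : 2 * (Fintype.card (MonoIdx D) : ℝ) = D * (D + 1) := by
    exact_mod_cast two_mul_card_monoIdx D
  have hS₃y : (S₃ : ℝ) ≤ exp (2 * y) := by
    rw [hexp2, hS₃R]
    linarith
  obtain ⟨B, hB⟩ : ∃ B : ℕ, B = ⌈exp (9600 * y)⌉₊ := ⟨_, rfl⟩
  have hB1 : exp (9600 * y) ≤ B := by rw [hB]; exact Nat.le_ceil _
  have hB2 : (B : ℝ) ≤ exp (9601 * y) := by
    have h1 : (B : ℝ) < exp (9600 * y) + 1 := by rw [hB]; exact Nat.ceil_lt_add_one (exp_pos _).le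
    have h2 : exp (9601 * y) = exp (9600 * y) * exp y := by rw [← exp_add]; congr 1; ring
    have h3 : 1 ≤ exp (9600 * y) := one_le_exp (by linarith)
    rw [h2]
    have h4 : exp (9600 * y) * 2 ≤ exp (9600 * y) * exp y := by gcongr; linarith
    linarith
  have hDnn : (0 : ℝ) ≤ D := by positivity
  refine exists_vanishing_aux n e h δ β β' hO hβ hδ hL3 hδh hβ' S₁ S₂ S₃ T D J B
    (315000000 * P) (exp q) (S₂ + e * S₃) _ (log goldenRatio) (log 10) rfl rfl (by linarith)
    (by linarith) rfl rfl ?_ (by linarith) ?_ ?_ (one_le_exp (by linarith)) ?_ ?_ ?_ ?_ ?_ ?_ ?_ ?_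
  · rw [hS₂R]; positivity
  · have h1 : (S₁ : ℝ) * log goldenRatio ≤ S₁ * 0.48122 := by gcongr
    have h2 : (S₂ : ℝ) * log 10 ≤ S₂ * 2.30259 := by gcongr
    rw [hS₁R] at h1 ⊢
    rw [hS₂R] at h2 ⊢
    rw [hS₃h]
    linarith
  · have : (S₃ : ℝ) * (2 * h) = 210000000 * P := by rw [mul_left_comm, hS₃h]; ring
    have h2 : (S₂ : ℝ) * log 10 ≤ S₂ * 2.30259 := by gcongr
    rw [hS₂R] at h2 ⊢
    rw [this]
    linarith
  · rw [hS₁R]; linarith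
  · rw [hnS]; linarith
  · linarith
  · rw [div_le_iff₀ (by linarith)]
    have h2 : log 10 * ((S₂ : ℝ) + e * S₃) ≤ 2.30259 * (106000000 * N2) := by
      gcongr
    have h3 : (1500000000 * N2) * (0.48121 : ℝ) ≤ exp q * log goldenRatio := by
      gcongr
    linarith
  · have : (2 : ℝ) ≤ B := by
      have := add_one_le_exp (9600 * y)
      linarith
    exact_mod_cast this
  · rw [hTV, hy]; linarith
  · have h2 := two_mul_card_monoIdx D
    have h3 : 2 * (3 * (D * (J + D))) < 2 * (Fintype.card (MonoIdx D) * T) := by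
      rw [← mul_assoc 2 (Fintype.card _), h2, hJD]
      have hTD : D * T = 970200000000 * x := by rw [hD, hT, ← hqPN]; ring
      have hDpos : 0 < D := by
        have : (0 : ℝ) < D := by rw [hDR]; linarith
        exact_mod_cast this
      have hTpos : 0 < T := by omega
      calc 2 * (3 * (D * (161700000000 * x))) = D * (D * T) := by rw [hTD]; ring
        _ < D * (D * T) + D * T := by have := Nat.mul_pos hDpos hTpos; omega
        _ = D * (D + 1) * T := by ring
    omega
  · rw [hTV]
    have hL1i : (log goldenRatio)⁻¹ ≤ exp y := by
      have : (log goldenRatio)⁻¹ ≤ (0.4 : ℝ)⁻¹ := by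
        apply inv_anti₀ <;> linarith
      have h4 : (0.4 : ℝ)⁻¹ ≤ 100 := by norm_num
      linarith
    refine auxiliary_small y _ _ _ _ _ _ _ hy100 (by positivity) ?_ (by positivity) ?_ hQD rfl
      hB1 hB2 (by positivity) ?_ ?_ ?_
    · rw [Nat.cast_mul]
      calc (D : ℝ) * (J + D : ℕ) ≤ exp (2 * y) * exp (2 * y) := by
            gcongr; linarith
        _ = exp (4 * y) := by rw [← exp_add]; congr 1; ring
    · rw [Nat.cast_mul]
      have h5 : (Fintype.card (MonoIdx D) : ℝ) ≤ exp (2 * y) * exp (2 * y) := by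
        have : (D : ℝ) * (D + 1) ≤ exp (2 * y) * exp (2 * y) := by
          gcongr; linarith
        have h0 : (0 : ℝ) ≤ Fintype.card (MonoIdx D) := by positivity
        linarith
      calc (Fintype.card (MonoIdx D) : ℝ) * T ≤ exp (2 * y) * exp (2 * y) * exp y := by gcongr
        _ = exp (5 * y) := by rw [← exp_add, ← exp_add]; congr 1; ring
    · refine (pow_div_factorial_le J hJ0 (882 * y) 1.9 (by linarith) ?_).trans ?_
      · have := exp_29_bound
        calc 882 * y * exp (1 + 1.9) ≤ 882 * y * 18.2 := by gcongr
          _ ≤ J := by rw [hy]; linarith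
      · apply exp_le_exp.2
        rw [hy]; linarith
    · have : 0 < log goldenRatio := by linarith
      positivity
    · have h6 : (0 : ℝ) < log goldenRatio := by linarith
      rw [hQD, div_eq_mul_inv]
      calc (D : ℝ) * exp (3465 * y) * (S₃ * |n * log goldenRatio - e * log 10 + log (β / δ)| *
            (log goldenRatio)⁻¹) ≤ exp (2 * y) * exp (3465 * y) * (exp (2 * y) *
              exp (-(290000000000 * x)) * exp y) := by
            gcongr; linarith
        _ = exp (-(25530 * y)) := by
            simp only [← exp_add]; congr 1; rw [hy]; ring

theorem natAbs_mul_card_le (C : Finset (ℕ × ℕ)) (A : ℕ) (u₁ u₂ : ℤ) (hu : IsCoprime u₁ u₂)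
    (hA : ∀ p ∈ C, p.1 < A)
    (hC : ∀ p ∈ C, ∀ p' ∈ C, u₂ * ((p.1 : ℤ) - p'.1) = u₁ * ((p.2 : ℤ) - p'.2)) :
    u₁.natAbs * C.card ≤ A + u₁.natAbs := by
  rcases eq_or_ne u₁ 0 with rfl | h0
  · simp
  have hm : 0 < u₁.natAbs := Int.natAbs_pos.2 h0
  have hcard : C.card ≤ (Finset.range (A / u₁.natAbs + 1)).card := by
    refine Finset.card_le_card_of_injOn (fun p => p.1 / u₁.natAbs) ?_ ?_
    · intro p hp
      simp only [Finset.coe_range, Set.mem_Iio]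
      exact Nat.lt_succ_of_le (Nat.div_le_div_right (hA p hp).le)
    · intro p hp p' hp' h
      have h' : p.1 / u₁.natAbs = p'.1 / u₁.natAbs := h
      have hdvd : u₁ ∣ (p.1 : ℤ) - p'.1 := by
        have : u₁ ∣ u₂ * ((p.1 : ℤ) - p'.1) := ⟨_, hC p hp p' hp'⟩
        exact hu.dvd_of_dvd_mul_left this
      have hmod : p'.1 % u₁.natAbs = p.1 % u₁.natAbs := by
        have : ((u₁.natAbs : ℕ) : ℤ) ∣ (p.1 : ℤ) - p'.1 := Int.natAbs_dvd.2 hdvd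
        exact (Nat.modEq_iff_dvd.2 this)
      have h1 : p.1 = p'.1 := by
        rw [← Nat.div_add_mod p.1 u₁.natAbs, ← Nat.div_add_mod p'.1 u₁.natAbs, h', hmod]
      have h2 : (p.2 : ℤ) - p'.2 = 0 := by
        have := hC p hp p' hp'
        rw [h1, sub_self, mul_zero] at this
        exact (mul_eq_zero.1 this.symm).resolve_left h0
      exact Prod.ext h1 (by omega)
  rw [Finset.card_range] at hcard
  calc u₁.natAbs * C.card ≤ u₁.natAbs * (A / u₁.natAbs + 1) := Nat.mul_le_mul_left _ hcard
    _ = u₁.natAbs * (A / u₁.natAbs) + u₁.natAbs := by ring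
    _ ≤ A + u₁.natAbs := by gcongr; exact Nat.mul_div_le _ _

/-- A curve of small degree through all the points `(s₁ - n * s₃, s₂ + e * s₃)` of a large box
forces a small integral relation `u₂ * n + u₁ * e ≈ 0`: the curve must contain a line through many
of these points. -/
theorem exists_relation (F : MvPolynomial (Fin 2) ℝ) (hF : F ≠ 0) (E n e S₁ S₂ S₃ A₁ A₂ b : ℕ)
    (hE : F.totalDegree ≤ E) (hb : E < b * b) (hA₁ : A₁ + b ≤ S₁ + 1) (hA₂ : A₂ + b ≤ S₂ + 1)
    (hZ : E * E < A₁ * A₂ * S₃) (hn : A₁ ≤ n) (hE₁ : A₁ + 1 ≤ E) (hE₂ : A₂ + 1 ≤ E)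
    (hvan : ∀ s₁ s₂ s₃ : ℕ, s₁ < S₁ → s₂ < S₂ → s₃ < S₃ →
        MvPolynomial.eval ![(s₁ : ℝ) - n * s₃, (s₂ : ℝ) + e * s₃] F = 0) :
    ∃ u₁ u₂ : ℤ, (u₁ ≠ 0 ∨ u₂ ≠ 0) ∧ u₁.natAbs * (A₁ * A₂) ≤ E * (A₁ + u₁.natAbs) ∧
      u₂.natAbs * (A₁ * A₂) ≤ E * (A₂ + u₂.natAbs) ∧
      |u₂ * n + u₁ * e| ≤ |u₂| * A₁ + |u₁| * A₂ := by
  classical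
  let box : Finset (ℕ × ℕ × ℕ) := Finset.range A₁ ×ˢ Finset.range A₂ ×ˢ Finset.range S₃
  let f : ℕ × ℕ × ℕ → ℤ × ℤ := fun s => ((s.1 : ℤ) - n * s.2.2, (s.2.1 : ℤ) + e * s.2.2)
  have hbox : ∀ s, s ∈ box ↔ s.1 < A₁ ∧ s.2.1 < A₂ ∧ s.2.2 < S₃ := fun s => by
    simp [box]
  have hinj : Set.InjOn f box := by
    intro s hs s' hs' h
    rw [Finset.mem_coe, hbox] at hs hs'
    obtain ⟨h1, h2⟩ := Prod.mk.inj h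
    have h3 : s.2.2 = s'.2.2 := by
      have hlt : |(n : ℤ) * ((s.2.2 : ℤ) - s'.2.2)| < n := by
        have : (n : ℤ) * ((s.2.2 : ℤ) - s'.2.2) = (s.1 : ℤ) - s'.1 := by linarith
        rw [this, abs_lt]; omega
      rw [abs_mul, Nat.abs_cast] at hlt
      by_contra hne
      have : 1 ≤ |(s.2.2 : ℤ) - s'.2.2| := Int.one_le_abs (by omega)
      nlinarith
    rw [h3] at h1 h2
    exact Prod.ext (by omega) (Prod.ext (by omega) h3)
  let Z := box.image f
  have hZc : Z.card = A₁ * A₂ * S₃ := by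
    rw [Finset.card_image_of_injOn hinj]
    simp [box, mul_assoc]
  let g : ℕ × ℕ → ℤ × ℤ := fun s => ((s.1 : ℤ), (s.2 : ℤ))
  let Bs : Finset (ℤ × ℤ) := (Finset.range b ×ˢ Finset.range b).image g
  have hBc : Bs.card = b * b := by
    rw [Finset.card_image_of_injective]
    · simp
    · intro s s' h
      obtain ⟨h1, h2⟩ := Prod.mk.inj h
      exact Prod.ext (by omega) (by omega)
  obtain ⟨v, hv, v', hv', hne, c, hc⟩ := exists_line_of_vanishing F hF E hE Z Bs (by rw [hBc]; exact hb)
    (by rw [hZc]; exact hZ) (by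
      intro p hp t ht
      obtain ⟨s, hs, rfl⟩ := Finset.mem_image.1 hp
      obtain ⟨r, hr, rfl⟩ := Finset.mem_image.1 ht
      rw [hbox] at hs
      rw [Finset.mem_product, Finset.mem_range, Finset.mem_range] at hr
      have := hvan (s.1 + r.1) (s.2.1 + r.2) s.2.2 (by omega) (by omega) hs.2.2
      simp only [f, g]
      push_cast at this ⊢
      rw [← this]
      congr 2
      funext i
      fin_cases i <;> simp <;> ring)
  -- primitive direction of the line
  obtain ⟨u₁, u₂, d, hd, hcop, hd1, hd2⟩ : ∃ u₁ u₂ d : ℤ, d ≠ 0 ∧ IsCoprime u₁ u₂ ∧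
      v.1 - v'.1 = d * u₁ ∧ v.2 - v'.2 = d * u₂ := by
    have h0 : v.1 - v'.1 ≠ 0 ∨ v.2 - v'.2 ≠ 0 := by
      by_contra! hcon
      exact hne (Prod.ext (by omega) (by omega))
    have hg : 0 < Int.gcd (v.1 - v'.1) (v.2 - v'.2) := Int.gcd_pos_iff.2 h0
    obtain ⟨g, a1, a2, hg0, hcop, e1, e2⟩ := Int.exists_gcd_one' hg
    exact ⟨a1, a2, g, by exact_mod_cast hg0.ne', Int.isCoprime_iff_gcd_eq_one.2 hcop,
      by rw [mul_comm]; exact e1, by rw [mul_comm]; exact e2⟩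
  let W := box.filter fun s => (v.2 - v'.2) * (f s).1 - (v.1 - v'.1) * (f s).2 = c
  have hWc : (Z.filter fun p => (v.2 - v'.2) * p.1 - (v.1 - v'.1) * p.2 = c).card = W.card := by
    rw [Finset.filter_image, Finset.card_image_of_injOn]
    exact hinj.mono (by
      intro s hs
      exact Finset.mem_coe.2 (Finset.mem_filter.1 (Finset.mem_coe.1 hs)).1)
  rw [hWc, hZc] at hc
  have hW : ∀ s ∈ W, ∀ s' ∈ W, u₂ * ((s.1 : ℤ) - s'.1) - u₁ * ((s.2.1 : ℤ) - s'.2.1) =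
      (u₂ * n + u₁ * e) * ((s.2.2 : ℤ) - s'.2.2) := by
    intro s hs s' hs'
    have h1 := (Finset.mem_filter.1 hs).2
    have h2 := (Finset.mem_filter.1 hs').2
    rw [hd1, hd2] at h1 h2
    simp only [f] at h1 h2
    have h3 : d * (u₂ * ((s.1 : ℤ) - s'.1) - u₁ * ((s.2.1 : ℤ) - s'.2.1)) =
      d * ((u₂ * n + u₁ * e) * ((s.2.2 : ℤ) - s'.2.2)) := by linarith
    exact mul_left_cancel₀ hd h3
  have hWbox : ∀ s ∈ W, s.1 < A₁ ∧ s.2.1 < A₂ ∧ s.2.2 < S₃ := fun s hs =>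
    (hbox s).1 (Finset.mem_filter.1 hs).1
  -- bound for the points of the line with a given third coordinate
  have hfib : ∀ k, u₁.natAbs * (W.filter fun s => s.2.2 = k).card ≤ A₁ + u₁.natAbs ∧
      u₂.natAbs * (W.filter fun s => s.2.2 = k).card ≤ A₂ + u₂.natAbs := by
    intro k
    have hmem : ∀ s ∈ W.filter (fun s => s.2.2 = k), ∀ s' ∈ W.filter (fun s => s.2.2 = k),
        u₂ * ((s.1 : ℤ) - s'.1) = u₁ * ((s.2.1 : ℤ) - s'.2.1) := by
      intro s hs s' hs'
      have hs1 := Finset.mem_filter.1 hs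
      have hs2 := Finset.mem_filter.1 hs'
      have := hW s hs1.1 s' hs2.1
      rw [hs1.2, hs2.2, sub_self, mul_zero] at this
      linarith
    constructor
    · have hi : Set.InjOn (fun s : ℕ × ℕ × ℕ => (s.1, s.2.1)) (W.filter fun s => s.2.2 = k) := by
        intro s hs s' hs' h
        obtain ⟨h1, h2⟩ := Prod.mk.inj h
        have hs1 := (Finset.mem_filter.1 (Finset.mem_coe.1 hs)).2
        have hs2 := (Finset.mem_filter.1 (Finset.mem_coe.1 hs')).2
        exact Prod.ext h1 (Prod.ext h2 (hs1.trans hs2.symm))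
      rw [← Finset.card_image_of_injOn hi]
      apply natAbs_mul_card_le _ A₁ u₁ u₂ hcop
      · intro p hp
        obtain ⟨s, hs, rfl⟩ := Finset.mem_image.1 hp
        exact (hWbox s (Finset.mem_filter.1 hs).1).1
      · intro p hp p' hp'
        obtain ⟨s, hs, rfl⟩ := Finset.mem_image.1 hp
        obtain ⟨s', hs', rfl⟩ := Finset.mem_image.1 hp'
        exact hmem s hs s' hs'
    · have hi : Set.InjOn (fun s : ℕ × ℕ × ℕ => (s.2.1, s.1)) (W.filter fun s => s.2.2 = k) := by
        intro s hs s' hs' h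
        obtain ⟨h1, h2⟩ := Prod.mk.inj h
        have hs1 := (Finset.mem_filter.1 (Finset.mem_coe.1 hs)).2
        have hs2 := (Finset.mem_filter.1 (Finset.mem_coe.1 hs')).2
        exact Prod.ext h2 (Prod.ext h1 (hs1.trans hs2.symm))
      rw [← Finset.card_image_of_injOn hi]
      apply natAbs_mul_card_le _ A₂ u₂ u₁ hcop.symm
      · intro p hp
        obtain ⟨s, hs, rfl⟩ := Finset.mem_image.1 hp
        exact (hWbox s (Finset.mem_filter.1 hs).1).2.1
      · intro p hp p' hp'
        obtain ⟨s, hs, rfl⟩ := Finset.mem_image.1 hp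
        obtain ⟨s', hs', rfl⟩ := Finset.mem_image.1 hp'
        exact (hmem s hs s' hs').symm
  have hu0 : u₁ ≠ 0 ∨ u₂ ≠ 0 := by
    by_contra! hcon
    rw [hcon.1, hcon.2] at hcop
    exact not_isCoprime_zero_zero hcop
  -- some fibre is large
  obtain ⟨k, hk⟩ : ∃ k, A₁ * A₂ ≤ E * (W.filter fun s => s.2.2 = k).card := by
    by_contra! hcon
    have hS₃0 : 0 < S₃ := by
      rcases Nat.eq_zero_or_pos S₃ with h | h
      · rw [h] at hZ; omega
      · exact h
    have h1 : W.card = ∑ k ∈ Finset.range S₃, (W.filter fun s => s.2.2 = k).card :=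
      Finset.card_eq_sum_card_fiberwise fun s hs => by
        simpa using (hWbox s hs).2.2
    rw [h1, Finset.mul_sum] at hc
    have h2 : ∑ k ∈ Finset.range S₃, E * (W.filter fun s => s.2.2 = k).card <
        ∑ k ∈ Finset.range S₃, A₁ * A₂ :=
      Finset.sum_lt_sum_of_nonempty ⟨0, Finset.mem_range.2 hS₃0⟩ fun k _ => hcon k
    rw [Finset.sum_const, Finset.card_range, smul_eq_mul, mul_comm] at h2
    omega
  -- the line contains points with different third coordinates
  have hWE : E < W.card := by
    by_contra! hle
    have := Nat.mul_le_mul_left E hle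
    omega
  obtain ⟨s, hs, s', hs', hss⟩ : ∃ s ∈ W, ∃ s' ∈ W, s.2.2 ≠ s'.2.2 := by
    by_contra! hcon
    obtain ⟨s₀, hs₀⟩ : W.Nonempty := Finset.card_pos.1 (by omega)
    have hall : W.filter (fun s => s.2.2 = s₀.2.2) = W :=
      Finset.filter_true_of_mem fun s hs => hcon s hs s₀ hs₀
    have := hfib s₀.2.2
    rw [hall] at this
    rcases hu0 with h | h
    · have hp : 0 < u₁.natAbs := Int.natAbs_pos.2 h
      nlinarith [this.1]
    · have hp : 0 < u₂.natAbs := Int.natAbs_pos.2 h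
      nlinarith [this.2]
  refine ⟨u₁, u₂, hu0, ?_, ?_, ?_⟩
  · calc u₁.natAbs * (A₁ * A₂) ≤ u₁.natAbs * (E * (W.filter fun s => s.2.2 = k).card) :=
          Nat.mul_le_mul_left _ hk
      _ = E * (u₁.natAbs * (W.filter fun s => s.2.2 = k).card) := by ring
      _ ≤ E * (A₁ + u₁.natAbs) := Nat.mul_le_mul_left _ (hfib k).1
  · calc u₂.natAbs * (A₁ * A₂) ≤ u₂.natAbs * (E * (W.filter fun s => s.2.2 = k).card) :=
          Nat.mul_le_mul_left _ hk
      _ = E * (u₂.natAbs * (W.filter fun s => s.2.2 = k).card) := by ring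
      _ ≤ E * (A₂ + u₂.natAbs) := Nat.mul_le_mul_left _ (hfib k).2
  · have h1 := hW s hs s' hs'
    have hb1 := hWbox s hs
    have hb2 := hWbox s' hs'
    have h2 : 1 ≤ |(s.2.2 : ℤ) - s'.2.2| := Int.one_le_abs (by omega)
    calc |u₂ * n + u₁ * e| ≤ |u₂ * n + u₁ * e| * |(s.2.2 : ℤ) - s'.2.2| :=
          le_mul_of_one_le_right (abs_nonneg _) h2
      _ = |u₂ * ((s.1 : ℤ) - s'.1) - u₁ * ((s.2.1 : ℤ) - s'.2.1)| := by rw [← abs_mul, ← h1]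
      _ ≤ |u₂| * |(s.1 : ℤ) - s'.1| + |u₁| * |(s.2.1 : ℤ) - s'.2.1| := by
          rw [← abs_mul, ← abs_mul]; exact abs_sub _ _
      _ ≤ |u₂| * A₁ + |u₁| * A₂ := by
          gcongr <;> rw [abs_le] <;> omega

set_option maxHeartbeats 1000000 in
/-- Lower bound for the linear form `n * log φ - e * log 10 + log (β / δ)` in three logarithms, when
`n` is large compared with the height `h` of `β / δ` and with all the small combinations
`u₁ * log φ + u₂ * log 10`.  Here `q` is about `log n`. -/
theorem three_logs (n e q h δ : ℕ) (β β' : ℝ) (hO : InO β β') (hβ : 0 < β) (hδ : 1 ≤ δ)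
    (hq : 50 ≤ q) (hh : 1 ≤ h) (hL3 : |log (β / δ)| ≤ h) (hδh : log δ ≤ 2 * h)
    (hβ' : |β'| ≤ exp (2 * h)) (hen : e ≤ n) (hn : 315000000 * (q ^ 2 * h) < n)
    (hQ : 1500000000 * (q : ℝ) ^ 2 * n ≤ exp q)
    (hdeg : ∀ u₁ u₂ : ℤ, (u₁ ≠ 0 ∨ u₂ ≠ 0) → |u₁| ≤ 22000 * q → |u₂| ≤ 22000 * q →
      4600000000000 * (q ^ 3 * h : ℕ) < n * |u₁ * log goldenRatio + u₂ * log 10|) :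
    exp (-(290000000000 * (q ^ 3 * h : ℕ))) < |n * log goldenRatio - e * log 10 + log (β / δ)| := by
  by_contra! hΛ
  obtain ⟨F, hF0, hFd, hF⟩ := exists_vanishing n e q h δ β β' hO hβ hδ hq hh hL3 hδh hβ' hen hn hQ hΛ
    _ _ _ _ _ rfl rfl rfl rfl rfl
  obtain ⟨l2a, l2b⟩ := log_ten_bounds
  obtain ⟨P, hP⟩ : ∃ P : ℕ, P = q ^ 2 * h := ⟨_, rfl⟩
  have hx : q ^ 3 * h = q * P := by rw [hP]; ring
  have hPq : 50 * q ≤ P := by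
    rw [hP, sq]
    calc 50 * q ≤ q * q * 1 := by rw [mul_one]; gcongr
      _ ≤ q * q * h := by gcongr
  have hP0 : 0 < P := by omega
  rw [← hP] at hF hFd hn
  rw [hx] at hdeg hΛ
  have hE : (28 * q) * (34650000000 * P) = 970200000000 * (q * P) := by ring
  rw [hE] at hFd
  obtain ⟨u₁, u₂, hu, hb1, hb2, hrel⟩ := exists_relation F hF0 (970200000000 * (q * P)) n e
    (210000000 * P - 28 * q) (45000000 * P) (105000000 * q ^ 2) (209800000 * P) (44850000 * P)
    (150000 * P) hFd (by nlinarith) (by omega) (by omega)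
    (by
      have : 0 < q * q * (P * P) := by positivity
      nlinarith) (by omega) (by nlinarith) (by nlinarith)
    (fun s₁ s₂ s₃ h1 h2 h3 => hF s₁ s₂ s₃ (by omega) h2 h3)
  have hqP : 50 * (q * P) ≤ P * P := by nlinarith
  have hqP' : 50 * (q : ℤ) * P ≤ (P : ℤ) * P := by rw [mul_assoc]; exact_mod_cast hqP
  have hu1 : u₁.natAbs ≤ 22000 * q := by
    by_contra! hc
    have h1 : u₁.natAbs * (50 * (q * P)) ≤ u₁.natAbs * (P * P) := Nat.mul_le_mul_left _ hqP
    have h2 : 22000 * q * (P * P) < u₁.natAbs * (P * P) :=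
      Nat.mul_lt_mul_of_pos_right hc (by positivity)
    nlinarith
  have hu2 : u₂.natAbs ≤ 4700 * q := by
    by_contra! hc
    have h1 : u₂.natAbs * (50 * (q * P)) ≤ u₂.natAbs * (P * P) := Nat.mul_le_mul_left _ hqP
    have h2 : 4700 * q * (P * P) < u₂.natAbs * (P * P) :=
      Nat.mul_lt_mul_of_pos_right hc (by positivity)
    nlinarith
  have hu1' : |u₁| ≤ 22000 * q := by rw [Int.abs_eq_natAbs]; exact_mod_cast hu1
  have hu2' : |u₂| ≤ 4700 * q := by rw [Int.abs_eq_natAbs]; exact_mod_cast hu2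
  have hd := hdeg u₁ u₂ hu hu1' (by omega)
  set Λ : ℝ := n * log goldenRatio - e * log 10 + log (β / δ) with hΛd
  have hΛ1 : |Λ| ≤ 1 := hΛ.trans (by
    rw [exp_le_one_iff]
    have : (0 : ℝ) ≤ (q * P : ℕ) := by positivity
    linarith)
  have hid : (n : ℝ) * (u₁ * log goldenRatio + u₂ * log 10) =
      (u₂ * n + u₁ * e) * log 10 + u₁ * (Λ - log (β / δ)) := by
    rw [hΛd]; ring
  have hrelR : |(u₂ * n + u₁ * e : ℝ)| ≤ 1980000000000 * (q * P : ℕ) := by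
    have h1 : |u₂| * (209800000 * P : ℕ) ≤ 4700 * q * (209800000 * P : ℕ) := by gcongr
    have h2 : |u₁| * (44850000 * P : ℕ) ≤ 22000 * q * (44850000 * P : ℕ) := by gcongr
    have h3 : |u₂ * n + u₁ * e| ≤ 1980000000000 * (q * P : ℕ) := by
      push_cast at h1 h2 hrel ⊢
      nlinarith
    exact_mod_cast h3
  have hu1R : |(u₁ : ℝ)| ≤ 22000 * q := by exact_mod_cast hu1'
  have hhR : (1 : ℝ) ≤ h := by exact_mod_cast hh
  have hqh : (q : ℝ) * h ≤ (q * P : ℕ) := by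
    rw [hP]; push_cast
    have hq1 : (1 : ℝ) ≤ (q : ℝ) ^ 2 := by
      have : (50 : ℝ) ≤ q := by exact_mod_cast hq
      nlinarith
    calc (q : ℝ) * h = q * (1 * h) := by ring
      _ ≤ q * (q ^ 2 * h) := by gcongr
  have habs : (n : ℝ) * |u₁ * log goldenRatio + u₂ * log 10| ≤ 4600000000000 * (q * P : ℕ) := by
    have h0 : (n : ℝ) * |u₁ * log goldenRatio + u₂ * log 10| =
        |(n : ℝ) * (u₁ * log goldenRatio + u₂ * log 10)| := by rw [abs_mul, Nat.abs_cast]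
    rw [h0, hid]
    calc _ ≤ |(u₂ * n + u₁ * e) * log 10| + |u₁ * (Λ - log (β / δ))| := abs_add_le _ _
      _ ≤ 1980000000000 * (q * P : ℕ) * 2.30259 + 22000 * q * (1 + h) := by
          rw [abs_mul, abs_mul, abs_of_pos (by linarith : (0 : ℝ) < log 10)]
          gcongr
          exact (abs_sub _ _).trans (add_le_add hΛ1 hL3)
      _ ≤ 4600000000000 * (q * P : ℕ) := by
          have : (q : ℝ) * 1 ≤ q * h := by gcongr
          nlinarith
  linarith

/-! ### Forms in two logarithms -/

/-- A certified bound for the two-term form `r log φ - p log 10`. -/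
theorem abs_conv_le (p r E : ℕ) (h1 : r * logGoldenHi + 10000 * r ≤ p * logTenHi + E)
    (h2 : p * logTenHi + 10000 * p ≤ r * logGoldenHi + E) :
    2 ^ 800 * |r * log goldenRatio - p * log 10| ≤ E := by
  obtain ⟨a1, a2⟩ := logGoldenHi_spec
  obtain ⟨b1, b2⟩ := logTenHi_spec
  have h1' : (r : ℝ) * logGoldenHi + 10000 * r ≤ p * logTenHi + E := by exact_mod_cast h1
  have h2' : (p : ℝ) * logTenHi + 10000 * p ≤ r * logGoldenHi + E := by exact_mod_cast h2
  have hr : (0 : ℝ) ≤ r := Nat.cast_nonneg r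
  have hp : (0 : ℝ) ≤ p := Nat.cast_nonneg p
  have hy : (0 : ℝ) < 2 ^ 800 := by positivity
  clear h1 h2
  generalize (2 : ℝ) ^ 800 = y at *
  rw [← abs_of_pos hy, ← abs_mul, abs_le]
  constructor
  · nlinarith [mul_le_mul_of_nonneg_left a1 hr, mul_le_mul_of_nonneg_left b2 hp]
  · nlinarith [mul_le_mul_of_nonneg_left a2 hr, mul_le_mul_of_nonneg_left b1 hp]

/-- A good rational approximation `p / r` to `log φ / log 10` bounds from below every two-term form
whose first coefficient is smaller than `r`. -/
theorem form_lower_of_conv (p r : ℕ) (hcop : Nat.Coprime r p) (hη : |r * log goldenRatio - p * log 10| * r ≤ 1)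
    (u₁ u₂ : ℤ) (hu : u₁ ≠ 0 ∨ u₂ ≠ 0) (hlt : |u₁| < r) :
    1 / (r : ℝ) ≤ |u₁ * log goldenRatio + u₂ * log 10| := by
  have hr : 0 < (r : ℤ) := lt_of_le_of_lt (abs_nonneg _) hlt
  have hr' : (0 : ℝ) < r := by exact_mod_cast hr
  have hne : u₁ * p + u₂ * r ≠ 0 := by
    intro h0
    have hd : (r : ℤ) ∣ u₁ * p := ⟨-u₂, by linear_combination h0⟩
    have hd' : (r : ℤ) ∣ u₁ :=
      IsCoprime.dvd_of_dvd_mul_right (Nat.isCoprime_iff_coprime.2 hcop) hd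
    have hz : u₁ = 0 := Int.eq_zero_of_abs_lt_dvd hd' hlt
    rw [hz] at h0
    have : u₂ = 0 := by
      rcases mul_eq_zero.1 (show u₂ * (r : ℤ) = 0 by linarith) with h | h
      · exact h
      · omega
    tauto
  have h1 : (1 : ℝ) ≤ |(u₁ * p + u₂ * r : ℝ)| := by exact_mod_cast Int.one_le_abs hne
  have hl : (2 : ℝ) ≤ log 10 := by linarith [log_ten_bounds.1]
  have hlt' : |(u₁ : ℝ)| ≤ r := by exact_mod_cast hlt.le
  have e : (r : ℝ) * (u₁ * log goldenRatio + u₂ * log 10) =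
      u₁ * (r * log goldenRatio - p * log 10) + (u₁ * p + u₂ * r) * log 10 := by ring
  have h2 : (1 : ℝ) ≤ r * |u₁ * log goldenRatio + u₂ * log 10| := by
    rw [← abs_of_pos hr', ← abs_mul, e]
    have h3 : |(u₁ : ℝ) * (r * log goldenRatio - p * log 10)| ≤ 1 := by
      rw [abs_mul]
      calc _ ≤ (r : ℝ) * |r * log goldenRatio - p * log 10| := by gcongr
        _ ≤ 1 := by linarith
    have h4 : 2 ≤ |((u₁ : ℝ) * p + u₂ * r) * log 10| := by
      rw [abs_mul, abs_of_pos (by linarith : 0 < log 10)]; nlinarith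
    have := abs_sub_abs_le_abs_sub (((u₁ : ℝ) * p + u₂ * r) * log 10)
      (-(u₁ * (r * log goldenRatio - p * log 10)))
    rw [abs_neg, sub_neg_eq_add] at this
    rw [add_comm]; linarith
  rw [div_le_iff₀ hr']; linarith

theorem conv_check (p r E : ℕ) (h1 : r * logGoldenHi + 10000 * r ≤ p * logTenHi + E)
    (h2 : p * logTenHi + 10000 * p ≤ r * logGoldenHi + E) (hE : E * r ≤ 2 ^ 800) :
    |r * log goldenRatio - p * log 10| * r ≤ 1 := by
  have h := abs_conv_le p r E h1 h2
  have hE' : (E : ℝ) * r ≤ 2 ^ 800 := by exact_mod_cast hE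
  have hy : (0 : ℝ) < 2 ^ 800 := by positivity
  have hr : (0 : ℝ) ≤ r := Nat.cast_nonneg r
  clear h1 h2 hE
  generalize (2 : ℝ) ^ 800 = y at *
  refine le_of_mul_le_mul_left ?_ hy
  nlinarith [mul_le_mul_of_nonneg_right h hr]

theorem form_lower_small (u₁ u₂ : ℤ) (hu : u₁ ≠ 0 ∨ u₂ ≠ 0) (h : |u₁| < 15891179) :
    1 / (15891179 : ℝ) ≤ |u₁ * log goldenRatio + u₂ * log 10| := by
  have := form_lower_of_conv 3321060 15891179 (by norm_num) (conv_check _ _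
    (2 ^ 800 / 15891179) (by decide +kernel) (by decide +kernel) (by decide +kernel)) u₁ u₂ hu h
  exact_mod_cast this

theorem form_lower_medium (u₁ u₂ : ℤ) (hu : u₁ ≠ 0 ∨ u₂ ≠ 0) (h : |u₁| < 1070899895) :
    1 / (1070899895 : ℝ) ≤ |u₁ * log goldenRatio + u₂ * log 10| := by
  have := form_lower_of_conv 223804842 1070899895 (by norm_num) (conv_check _ _
    (2 ^ 800 / 1070899895) (by decide +kernel) (by decide +kernel) (by decide +kernel)) u₁ u₂ hu h
  exact_mod_cast this

theorem form_lower_large (u₁ u₂ : ℤ) (hu : u₁ ≠ 0 ∨ u₂ ≠ 0) (h : |u₁| < 10 ^ 40) :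
    1 / (10 : ℝ) ^ 42 ≤ |u₁ * log goldenRatio + u₂ * log 10| := by
  have := form_lower_of_conv 54420584827356121579097377723310862033425 260400972814762710955424689930582479584403
    (by norm_num) (conv_check _ _ (2 ^ 800 / 260400972814762710955424689930582479584403)
      (by decide +kernel) (by decide +kernel) (by decide +kernel)) u₁ u₂ hu
    (h.trans_le (by norm_num))
  refine le_trans ?_ this
  norm_num

/-- `q ^ j` grows at most like `exp (j q / q₀)` beyond `q₀`. -/
theorem pow_le_exp_of_ge {q q₀ : ℝ} (h0 : 0 < q₀) (hq : 0 ≤ q) (j : ℕ) :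
    q ^ j ≤ q₀ ^ j * exp (j * (q - q₀) / q₀) := by
  have h1 : q / q₀ ≤ exp ((q - q₀) / q₀) := by
    have := add_one_le_exp ((q - q₀) / q₀)
    have e : (q - q₀) / q₀ + 1 = q / q₀ := by field_simp; ring
    rwa [e] at this
  have h2 : (q / q₀) ^ j ≤ exp (j * (q - q₀) / q₀) := by
    calc (q / q₀) ^ j ≤ exp ((q - q₀) / q₀) ^ j := by gcongr
      _ = _ := by rw [← exp_nat_mul]; congr 1; ring
  calc q ^ j = q₀ ^ j * (q / q₀) ^ j := by rw [div_pow]; field_simp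
    _ ≤ _ := by gcongr

theorem exp_ge_two_pow (j : ℕ) {x : ℝ} (h : 0.7 * j ≤ x) : (2 : ℝ) ^ j ≤ exp x := by
  have : log 2 < 0.7 := by linarith [log_two_lt_d9]
  calc (2 : ℝ) ^ j = exp (j * log 2) := by
        rw [exp_nat_mul, exp_log (by norm_num)]
    _ ≤ exp x := by
        apply exp_le_exp.2
        have : (0 : ℝ) ≤ j := by positivity
        nlinarith

/-- The lower bound for two-term forms that feeds the degenerate case of `three_logs`. For huge
coefficients it is `three_logs` with `β = δ = 1`, whose degenerate case concerns forms with
logarithmically smaller coefficients. -/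
theorem form_lower (q : ℕ) (hq : 50 ≤ q) : ∀ u₁ u₂ : ℤ, (u₁ ≠ 0 ∨ u₂ ≠ 0) → |u₁| ≤ 22000 * q →
    |u₂| ≤ 22000 * q → exp (-(q / 10 : ℝ)) / 1000000000 ≤ |u₁ * log goldenRatio + u₂ * log 10| := by
  induction q using Nat.strong_induction_on with
  | _ q ih =>
  intro u₁ u₂ hu h1 h2
  have hqr : (50 : ℝ) ≤ q := by exact_mod_cast hq
  by_cases hs : |u₁| < 1070899895
  · refine le_trans ?_ (form_lower_medium u₁ u₂ hu hs)
    have : exp (-(q / 10 : ℝ)) ≤ 1 / 2 := by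
      rw [exp_neg, inv_le_comm₀ (exp_pos _) (by norm_num)]
      have := exp_ge_two_pow 1 (x := (q / 10 : ℝ)) (by push_cast; linarith)
      linarith
    linarith
  have hqbig : 40000 ≤ q := by
    by_contra! hc
    apply hs
    refine lt_of_le_of_lt h1 ?_
    omega
  have hqr : (40000 : ℝ) ≤ q := by exact_mod_cast hqbig
  by_cases hl : |u₁| < 10 ^ 40
  · refine le_trans ?_ (form_lower_large u₁ u₂ hu hl)
    have : exp (-(q / 10 : ℝ)) ≤ 1 / 2 ^ 200 := by
      rw [exp_neg, inv_le_comm₀ (exp_pos _) (by positivity)]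
      have := exp_ge_two_pow 200 (x := (q / 10 : ℝ)) (by push_cast; linarith)
      rw [one_div, inv_inv]; exact this
    have h3 : (1 : ℝ) / 2 ^ 200 / 1000000000 ≤ 1 / 10 ^ 42 := by norm_num
    linarith [div_le_div_of_nonneg_right this (show (0 : ℝ) ≤ 1000000000 by norm_num)]
  push Not at hl
  by_contra! hlt
  have hlt1 : |u₁ * log goldenRatio + u₂ * log 10| < 1 := by
    refine hlt.trans_le ?_
    have : exp (-(q / 10 : ℝ)) ≤ 1 := by rw [exp_le_one_iff]; linarith
    linarith
  obtain ⟨a1, a2⟩ := log_golden_bounds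
  obtain ⟨b1, b2⟩ := log_ten_bounds
  -- the signs are opposite, and `|u₂| ≤ |u₁|`
  obtain ⟨n, e, hn, he, hen, hval⟩ : ∃ n e : ℕ, (n : ℤ) = |u₁| ∧ (e : ℤ) ≤ |u₂| ∧ e ≤ n ∧
      |n * log goldenRatio - e * log 10| = |u₁ * log goldenRatio + u₂ * log 10| := by
    have hlR : (10 : ℝ) ^ 40 ≤ |(u₁ : ℝ)| := by exact_mod_cast hl
    have hbig : (1000 : ℝ) ≤ |(u₁ : ℝ)| := le_trans (by norm_num) hlR
    rcases le_total 0 u₁ with hp | hp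
    · have hpR : (0 : ℝ) ≤ u₁ := by exact_mod_cast hp
      rw [abs_of_nonneg hpR] at hbig
      rw [abs_lt] at hlt1
      have hu2 : (u₂ : ℝ) < 0 := by nlinarith
      have hu2' : u₂ < 0 := by exact_mod_cast hu2
      have hle : (-u₂ : ℝ) ≤ u₁ := by nlinarith
      have hle' : -u₂ ≤ u₁ := by exact_mod_cast hle
      refine ⟨u₁.toNat, (-u₂).toNat, by rw [abs_of_nonneg hp]; omega,
        by rw [abs_of_neg hu2']; omega, by omega, ?_⟩
      have c1 : ((u₁.toNat : ℕ) : ℝ) = u₁ := by exact_mod_cast Int.toNat_of_nonneg hp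
      have c2 : (((-u₂).toNat : ℕ) : ℝ) = -u₂ := by
        exact_mod_cast Int.toNat_of_nonneg (by omega : 0 ≤ -u₂)
      rw [c1, c2]; congr 1; ring
    · have hpR : (u₁ : ℝ) ≤ 0 := by exact_mod_cast hp
      rw [abs_of_nonpos hpR] at hbig
      rw [abs_lt] at hlt1
      have hu2 : (0 : ℝ) < u₂ := by nlinarith
      have hu2' : 0 < u₂ := by exact_mod_cast hu2
      have hle : (u₂ : ℝ) ≤ -u₁ := by nlinarith
      have hle' : u₂ ≤ -u₁ := by exact_mod_cast hle
      refine ⟨(-u₁).toNat, u₂.toNat, by rw [abs_of_nonpos hp]; omega,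
        by rw [abs_of_pos hu2']; omega, by omega, ?_⟩
      have c1 : (((-u₁).toNat : ℕ) : ℝ) = -u₁ := by
        exact_mod_cast Int.toNat_of_nonneg (by omega : 0 ≤ -u₁)
      have c2 : ((u₂.toNat : ℕ) : ℝ) = u₂ := by exact_mod_cast Int.toNat_of_nonneg hu2'.le
      rw [c1, c2, ← abs_neg]; congr 1; ring
  have hnq : n ≤ 22000 * q := by zify; linarith
  have hn40 : 10 ^ 40 ≤ n := by zify; linarith
  have hn40R : (10 : ℝ) ^ 40 ≤ n := by exact_mod_cast hn40
  have hn0 : (0 : ℝ) < n := lt_of_lt_of_le (by positivity) hn40R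
  have hlogn : 92 ≤ log n := by
    have h3 : log ((10 : ℝ) ^ 40) ≤ log n := log_le_log (by positivity) hn40R
    rw [log_pow] at h3; push_cast at h3; linarith
  obtain ⟨Q, hQ1, hQ2⟩ : ∃ Q : ℕ, 2 * log n ≤ Q ∧ (Q : ℝ) ≤ 2 * log n + 1 :=
    ⟨⌈2 * log n⌉₊, Nat.le_ceil _, (Nat.ceil_lt_add_one (by linarith)).le⟩
  have hQ184 : (184 : ℝ) ≤ Q := by linarith
  have hQ50 : 50 ≤ Q := by
    have : (50 : ℝ) ≤ Q := by linarith
    exact_mod_cast this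
  have hexpn : exp ((Q - 1) / 2 : ℝ) ≤ n := by
    rw [← le_log_iff_exp_le hn0]; linarith
  -- growth: `exp (0.4 Q)` dominates the cubic polynomial factors
  have hgrow : (10 : ℝ) ^ 22 * Q ^ 3 ≤ exp (0.4 * Q - 0.5) := by
    have g1 := pow_le_exp_of_ge (q := (Q : ℝ)) (q₀ := 184) (by norm_num) (by positivity) 3
    have g2 := exp_ge_two_pow 97 (x := (0.4 * 184 - 0.5 : ℝ)) (by push_cast; norm_num)
    have g3 : (10 : ℝ) ^ 22 * 184 ^ 3 ≤ 2 ^ 97 := by norm_num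
    calc (10 : ℝ) ^ 22 * Q ^ 3 ≤ 10 ^ 22 * (184 ^ 3 * exp ((3 : ℕ) * (Q - 184) / 184)) := by gcongr
      _ = (10 ^ 22 * 184 ^ 3) * exp ((3 : ℕ) * (Q - 184) / 184) := by ring
      _ ≤ exp (0.4 * 184 - 0.5) * exp (0.4 * (Q - 184)) := by
          gcongr
          · exact g3.trans g2
          · push_cast; linarith
      _ = exp (0.4 * Q - 0.5) := by rw [← exp_add]; congr 1; ring
  have hQ3 : (184 : ℝ) ^ 3 ≤ (Q : ℝ) ^ 3 := by gcongr
  have hgn : exp (0.4 * Q - 0.5) * exp (Q / 10 : ℝ) ≤ n := by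
    rw [← exp_add]
    refine le_trans (le_of_eq ?_) hexpn
    congr 1; ring
  have hexp1 : (1 : ℝ) ≤ exp (Q / 10 : ℝ) := one_le_exp (by positivity)
  have hpoly : (10 : ℝ) ^ 22 * Q ^ 3 * exp (Q / 10 : ℝ) ≤ n :=
    le_trans (mul_le_mul_of_nonneg_right hgrow (exp_pos _).le) hgn
  have hpoly1 : (10 : ℝ) ^ 22 * Q ^ 3 ≤ n := by
    refine le_trans ?_ hpoly
    exact le_mul_of_one_le_right (by positivity) hexp1
  have hQ23 : (Q : ℝ) ^ 2 ≤ Q ^ 3 := pow_le_pow_right₀ (by linarith) (by norm_num)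
  have hQ13 : (Q : ℝ) ≤ Q ^ 3 := by
    calc (Q : ℝ) = Q ^ 1 := by ring
      _ ≤ Q ^ 3 := pow_le_pow_right₀ (by linarith) (by norm_num)
  have hnqR : (n : ℝ) ≤ 22000 * q := by exact_mod_cast hnq
  have hQq : Q < q := by
    have : (Q : ℝ) < q := by nlinarith
    exact_mod_cast this
  have key := three_logs n e Q 1 1 1 1 (by simpa using InO.nat 1) one_pos le_rfl hQ50 le_rfl (by simp)
    (by simp) (by simp) hen
    (by
      have : (315000000 * (Q ^ 2 * 1) : ℝ) < n := by nlinarith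
      exact_mod_cast this)
    (by
      have h5 : (n : ℝ) * n ≤ exp Q := by
        calc (n : ℝ) * n = exp (2 * log n) := by rw [two_mul, exp_add, exp_log hn0]
          _ ≤ exp Q := exp_le_exp.2 hQ1
      have h6 : 1500000000 * (Q : ℝ) ^ 2 ≤ n := by nlinarith
      nlinarith)
    (by
      intro v₁ v₂ hv hv1 hv2
      have h7 := ih Q hQq hQ50 v₁ v₂ hv hv1 hv2
      have h8 : 4600000000000 * ((Q ^ 3 * 1 : ℕ) : ℝ) < n * (exp (-(Q / 10 : ℝ)) / 1000000000) := by
        push_cast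
        rw [exp_neg, mul_div_assoc', lt_div_iff₀ (by norm_num), ← div_eq_mul_inv,
          lt_div_iff₀ (exp_pos _)]
        have : (0 : ℝ) < Q ^ 3 * exp (Q / 10 : ℝ) := by positivity
        nlinarith
      exact h8.trans_le (mul_le_mul_of_nonneg_left h7 hn0.le))
  have e1 : |(n : ℝ) * log goldenRatio - e * log 10 + log (1 / ((1 : ℕ) : ℝ))| =
      |u₁ * log goldenRatio + u₂ * log 10| := by simpa using hval
  rw [e1] at key
  have h9 : exp (-(q / 10 : ℝ)) / 1000000000 ≤ exp (-(290000000000 * ((Q ^ 3 * 1 : ℕ) : ℝ))) := by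
    refine (div_le_self (exp_pos _).le (by norm_num)).trans (exp_le_exp.2 ?_)
    push_cast
    nlinarith
  linarith

/-! ### From repdigits to linear forms -/

/-- `9 √5 (1 + φ ^ (-k))`, written as a golden integer. -/
noncomputable def beta (k : ℕ) : ℝ := 9 * (2 * goldenRatio - 1) * (1 + (goldenRatio - 1) ^ k)

/-- The linear form `log (φ ^ n β / (5 M 10 ^ e))`, whose smallness expresses that
`M * 10 ^ e` is a good approximation to nine times a sum of two Fibonacci numbers. -/
noncomputable def linForm (n e M : ℕ) (β : ℝ) : ℝ :=
  n * log goldenRatio - e * log 10 + log (β / (5 * M : ℕ))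

/-- The leading digits of `9 (F_n + F_{n-k})` are those of `M`, an integer of at most `g₀ + 1` digits,
and this approximation is accurate to `g` digits. -/
structure Level (n k M e g₀ g : ℕ) : Prop where
  one_le : 1 ≤ M
  le_pow : M ≤ 10 ^ (g₀ + 1)
  exp_le : e ≤ n
  small : |linForm n e M (beta k)| ≤ 100 / 10 ^ g

theorem two_golden_sub_one : 2 * goldenRatio - 1 = √5 := by
  unfold goldenRatio; ring

theorem golden_mul_sub_one : goldenRatio * (goldenRatio - 1) = 1 := by
  linear_combination goldenRatio_sq

theorem sqrt_five_bounds : (2.236 : ℝ) ≤ √5 ∧ √5 ≤ 2.237 := by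
  constructor
  · exact le_sqrt_of_sq_le (by norm_num)
  · rw [sqrt_le_left (by norm_num)]; norm_num

theorem golden_sub_one_bounds : (0.618 : ℝ) ≤ goldenRatio - 1 ∧ goldenRatio - 1 ≤ 0.6185 := by
  obtain ⟨h1, h2⟩ := sqrt_five_bounds
  have := two_golden_sub_one
  constructor <;> linarith

theorem golden_sub_one_pow (k : ℕ) : 0 < (goldenRatio - 1) ^ k ∧ (goldenRatio - 1) ^ k ≤ 1 := by
  obtain ⟨h1, h2⟩ := golden_sub_one_bounds
  exact ⟨by positivity, pow_le_one₀ (by linarith) (by linarith)⟩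

theorem beta_bounds (k : ℕ) : 20 ≤ beta k ∧ beta k ≤ 41 := by
  obtain ⟨h1, h2⟩ := sqrt_five_bounds
  obtain ⟨h3, h4⟩ := golden_sub_one_pow k
  unfold beta
  rw [two_golden_sub_one]
  constructor <;> nlinarith

/-- `9 (F_n + F_{n-k})` differs from `φ ^ n β_k / 5` by less than `9`. -/
theorem abs_fib_sub_le (n k : ℕ) (hk : k ≤ n) :
    |9 * ((Nat.fib n : ℝ) + Nat.fib (n - k)) - goldenRatio ^ n * beta k / 5| ≤ 9 := by
  obtain ⟨h1, h2⟩ := sqrt_five_bounds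
  have hs : √5 * √5 = 5 := mul_self_sqrt (by norm_num)
  have hpow : goldenRatio ^ n * (goldenRatio - 1) ^ k = goldenRatio ^ (n - k) := by
    obtain ⟨m, rfl⟩ := Nat.exists_eq_add_of_le hk
    rw [Nat.add_sub_cancel_left, add_comm, pow_add, mul_assoc, ← mul_pow, golden_mul_sub_one]
    simp
  have hpsi : ∀ j : ℕ, |goldenConj ^ j| ≤ 1 := fun j => by
    rw [abs_pow]
    refine pow_le_one₀ (abs_nonneg _) ?_
    rw [abs_le]
    constructor <;> linarith [neg_one_lt_goldenConj, goldenConj_neg]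
  have e : 9 * ((Nat.fib n : ℝ) + Nat.fib (n - k)) - goldenRatio ^ n * beta k / 5 =
      -(9 / √5) * (goldenConj ^ n + goldenConj ^ (n - k)) := by
    rw [coe_fib_eq, coe_fib_eq, beta, two_golden_sub_one]
    have : goldenRatio ^ n * (9 * √5 * (1 + (goldenRatio - 1) ^ k)) / 5 =
        9 / √5 * (goldenRatio ^ n + goldenRatio ^ n * (goldenRatio - 1) ^ k) := by
      field_simp; linear_combination (1 + (goldenRatio - 1) ^ k) * hs
    rw [this, hpow]; field_simp; ring
  rw [e, abs_mul, abs_neg, abs_of_pos (by positivity : (0 : ℝ) < 9 / √5)]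
  have h3 : 9 / √5 ≤ 9 / 2.236 := by gcongr
  have h4 : |goldenConj ^ n + goldenConj ^ (n - k)| ≤ 2 :=
    (abs_add_le _ _).trans (by linarith [hpsi n, hpsi (n - k)])
  calc 9 / √5 * |goldenConj ^ n + goldenConj ^ (n - k)| ≤ 9 / 2.236 * 2 := by gcongr
    _ ≤ 9 := by norm_num

theorem abs_log_div_le {x y c : ℝ} (hc : 0 < c) (hx : c ≤ x) (hy : c ≤ y) :
    |log (x / y)| ≤ |x - y| / c := by
  have hx0 : 0 < x := hc.trans_le hx
  have hy0 : 0 < y := hc.trans_le hy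
  rw [abs_le]
  constructor
  · have := log_ratio_le hy0 hx0
    rw [log_div hy0.ne' hx0.ne'] at this
    rw [log_div hx0.ne' hy0.ne']
    have h2 : (y - x) / x ≤ |x - y| / c := by
      rw [abs_sub_comm]
      exact (div_le_div_of_nonneg_right (le_abs_self _) hx0.le).trans (by gcongr)
    linarith
  · refine (log_ratio_le hx0 hy0).trans ?_
    exact (div_le_div_of_nonneg_right (le_abs_self _) hy0.le).trans (by gcongr)

/-- An approximation `M * 10 ^ e` of `9 (F_n + F_{n-k})` with relative error of order `10 ^ (-g)`
makes the linear form small. -/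
theorem level_of_approx (n k M e g₀ g a : ℕ) (hk : k ≤ n) (hM : 1 ≤ M) (hMg : M ≤ 10 ^ (g₀ + 1))
    (hen : e ≤ n) (hg : g ≤ a) (ha : 2 ≤ a)
    (hN : 10 ^ a ≤ 10 * (Nat.fib n + Nat.fib (n - k))) (hy : 9 * 10 ^ a ≤ 10 * (M * 10 ^ e))
    (h : |(9 * ((Nat.fib n : ℤ) + Nat.fib (n - k)) - M * 10 ^ e)| ≤ 27 * 10 ^ (a - g)) :
    Level n k M e g₀ g := by
  refine ⟨hM, hMg, hen, ?_⟩
  obtain ⟨b1, b2⟩ := beta_bounds k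
  have hMR : (0 : ℝ) < M := by exact_mod_cast hM
  have hφ := goldenRatio_pos
  have e1 : linForm n e M (beta k) = log ((goldenRatio ^ n * beta k / 5) / (M * 10 ^ e)) := by
    unfold linForm
    have hβ : 0 < beta k := by linarith
    generalize beta k = β at hβ
    generalize goldenRatio = φ at hφ
    have hm : (0 : ℝ) < (5 * M : ℕ) := by push_cast; positivity
    rw [log_div hβ.ne' hm.ne', log_div (by positivity) (by positivity),
      log_div (by positivity) (by positivity), log_mul (by positivity) (by positivity),
      log_mul (by positivity) (by positivity), log_pow, log_pow]
    push_cast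
    rw [log_mul (by norm_num) hMR.ne']
    ring
  rw [e1]
  have hf := abs_fib_sub_le n k hk
  have hR : |9 * ((Nat.fib n : ℝ) + Nat.fib (n - k)) - M * 10 ^ e| ≤ 27 * 10 ^ (a - g) := by
    exact_mod_cast h
  have hNR : (10 : ℝ) ^ a ≤ 10 * ((Nat.fib n : ℝ) + Nat.fib (n - k)) := by exact_mod_cast hN
  have hyR : 9 * (10 : ℝ) ^ a ≤ 10 * (M * 10 ^ e) := by exact_mod_cast hy
  have h100 : (100 : ℝ) ≤ 10 ^ a := by
    calc (100 : ℝ) = 10 ^ 2 := by norm_num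
      _ ≤ 10 ^ a := pow_le_pow_right₀ (by norm_num) ha
  have hp1 : (1 : ℝ) ≤ 10 ^ (a - g) := one_le_pow₀ (by norm_num)
  have hd : |goldenRatio ^ n * beta k / 5 - M * 10 ^ e| ≤ 36 * 10 ^ (a - g) := by
    rw [abs_le] at *
    constructor <;> linarith
  refine (abs_log_div_le (c := 0.8 * 10 ^ a) (by positivity) ?_ (by linarith)).trans ?_
  · rw [abs_le] at hf
    linarith
  · rw [div_le_div_iff₀ (by positivity) (by positivity)]
    have hag : (10 : ℝ) ^ a = 10 ^ (a - g) * 10 ^ g := by rw [← pow_add]; congr 1; omega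
    calc _ ≤ 36 * (10 : ℝ) ^ (a - g) * 10 ^ g := by gcongr
      _ = 36 * 10 ^ a := by rw [hag]; ring
      _ ≤ _ := by nlinarith

/-- Dropping `φ ^ (-k)` costs at most `φ ^ (-k)`. -/
theorem Level.inf {n k M e g₀ g : ℕ} (h : Level n k M e g₀ g) :
    |linForm n e M (9 * (2 * goldenRatio - 1))| ≤ 100 / 10 ^ g + (goldenRatio - 1) ^ k := by
  obtain ⟨h3, h4⟩ := golden_sub_one_pow k
  have h5 : (0 : ℝ) < 9 * (2 * goldenRatio - 1) := by
    rw [two_golden_sub_one]; positivity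
  have hM : (0 : ℝ) < (5 * M : ℕ) := by
    have := h.one_le
    exact_mod_cast (by omega : 0 < 5 * M)
  have e1 : linForm n e M (beta k) = linForm n e M (9 * (2 * goldenRatio - 1)) +
      log (1 + (goldenRatio - 1) ^ k) := by
    rw [linForm, linForm, beta, mul_div_right_comm, log_mul (by positivity) (by positivity)]
    ring
  have h6 := log_le_sub_one_of_pos (by positivity : 0 < 1 + (goldenRatio - 1) ^ k)
  have h7 : 0 ≤ log (1 + (goldenRatio - 1) ^ k) := log_nonneg (by linarith)
  have h8 := h.small
  rw [e1] at h8
  rw [abs_le] at *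
  constructor <;> linarith

/-- The number with `l1` digits `d1` followed by `e` digits `d2` is `(m2 d1 d2 l1 * 10 ^ e - d2) / 9`. -/
def m2 (d1 d2 l1 : ℕ) : ℕ := d1 * 10 ^ l1 + d2 - d1

/-- The analogue of `m2` for the first two blocks and the third digit. -/
def m3 (d1 d2 d3 l1 l2 : ℕ) : ℕ := m2 d1 d2 l1 * 10 ^ l2 + d3 - d2

/-- `F_n + F_{n-k}` is the concatenation of three repdigits with the given digits and lengths. -/
structure RepSum (n k d1 d2 d3 l1 l2 l3 : ℕ) : Prop where
  k_le : k ≤ n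
  d1_pos : 1 ≤ d1
  d1_le : d1 ≤ 9
  d2_le : d2 ≤ 9
  d3_le : d3 ≤ 9
  l1_pos : 1 ≤ l1
  l2_pos : 1 ≤ l2
  l3_pos : 1 ≤ l3
  eqn : 9 * (Nat.fib n + Nat.fib (n - k)) + d3 = m3 d1 d2 d3 l1 l2 * 10 ^ l3

theorem m2_add {d1 d2 l1 : ℕ} : m2 d1 d2 l1 + d1 = d1 * 10 ^ l1 + d2 := by
  have : d1 * 1 ≤ d1 * 10 ^ l1 := Nat.mul_le_mul_left _ (Nat.one_le_pow _ _ (by norm_num))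
  unfold m2; omega

theorem m2_bounds {d1 d2 l1 : ℕ} (h1 : 1 ≤ d1) (h1' : d1 ≤ 9) (h2 : d2 ≤ 9) (hl : 1 ≤ l1) :
    9 * 10 ^ l1 ≤ 10 * m2 d1 d2 l1 ∧ m2 d1 d2 l1 + 1 ≤ 10 ^ (l1 + 1) ∧ 9 ≤ m2 d1 d2 l1 := by
  have e := @m2_add d1 d2 l1
  have h10 : 10 ^ 1 ≤ 10 ^ l1 := Nat.pow_le_pow_right (by norm_num) hl
  have h3 : 10 ^ (l1 + 1) = 10 * 10 ^ l1 := by ring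
  generalize 10 ^ l1 = t at *
  rw [h3]
  interval_cases d1 <;> omega

theorem m3_add {d1 d2 d3 l1 l2 : ℕ} (h1 : 1 ≤ d1) (h1' : d1 ≤ 9) (h2 : d2 ≤ 9) (hl : 1 ≤ l1) :
    m3 d1 d2 d3 l1 l2 + d2 = m2 d1 d2 l1 * 10 ^ l2 + d3 := by
  obtain ⟨_, _, h⟩ := m2_bounds h1 h1' h2 hl
  have : 9 * 1 ≤ m2 d1 d2 l1 * 10 ^ l2 := Nat.mul_le_mul h (Nat.one_le_pow _ _ (by norm_num))
  unfold m3; omega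

theorem m3_bounds {d1 d2 d3 l1 l2 : ℕ} (h1 : 1 ≤ d1) (h1' : d1 ≤ 9) (h2 : d2 ≤ 9) (h3 : d3 ≤ 9)
    (hl : 1 ≤ l1) (hl2 : 1 ≤ l2) :
    9 * 10 ^ (l1 + l2) + 10 * d3 ≤ 10 * m3 d1 d2 d3 l1 l2 ∧ m3 d1 d2 d3 l1 l2 + 1 ≤ 10 ^ (l1 + l2 + 1) ∧
      m3 d1 d2 d3 l1 l2 ≤ 9 * 10 ^ (l1 + l2) ∧ 1 ≤ m3 d1 d2 d3 l1 l2 := by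
  have e := @m3_add d1 d2 d3 l1 l2 h1 h1' h2 hl
  have e2 := @m2_add d1 d2 l1
  have h10 : 10 ^ 1 ≤ 10 ^ l1 := Nat.pow_le_pow_right (by norm_num) hl
  have h10' : 10 ^ 1 ≤ 10 ^ l2 := Nat.pow_le_pow_right (by norm_num) hl2
  have h4 : 10 ^ (l1 + l2 + 1) = 10 * (10 ^ l1 * 10 ^ l2) := by ring
  have h5 : 10 ^ (l1 + l2) = 10 ^ l1 * 10 ^ l2 := by ring
  rw [h4, h5]
  generalize 10 ^ l1 = t at *
  generalize 10 ^ l2 = u at *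
  have h6 : 10 * u ≤ t * u := Nat.mul_le_mul_right _ h10
  have e3 : m2 d1 d2 l1 * u + d1 * u = d1 * (t * u) + d2 * u := by
    rw [← add_mul, e2]; ring
  generalize m2 d1 d2 l1 * u = x at *
  generalize t * u = y at *
  have : d2 * u ≤ 9 * u := Nat.mul_le_mul_right _ h2
  have : d2 * 10 ≤ d2 * u := Nat.mul_le_mul_left _ h10'
  by_cases hd : d1 = 9
  · subst hd
    rcases Nat.lt_or_ge d2 9 with h | h
    · have : d2 * u ≤ 8 * u := Nat.mul_le_mul_right _ (by omega)
      omega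
    · have : d2 = 9 := by omega
      subst this
      omega
  · interval_cases d1 <;> omega

theorem fib_mul_five (a : ℕ) : 10 ^ a ≤ Nat.fib (5 * a + 3) := by
  induction a with
  | zero => simp [Nat.fib]
  | succ a ih =>
    have e0 : Nat.fib (5 * a + 3) = Nat.fib (5 * a + 1) + Nat.fib (5 * a + 2) := Nat.fib_add_two
    have e1 : Nat.fib (5 * a + 4) = Nat.fib (5 * a + 2) + Nat.fib (5 * a + 3) := Nat.fib_add_two
    have e2 : Nat.fib (5 * a + 5) = Nat.fib (5 * a + 3) + Nat.fib (5 * a + 4) := Nat.fib_add_two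
    have e3 : Nat.fib (5 * a + 6) = Nat.fib (5 * a + 4) + Nat.fib (5 * a + 5) := Nat.fib_add_two
    have e4 : Nat.fib (5 * a + 7) = Nat.fib (5 * a + 5) + Nat.fib (5 * a + 6) := Nat.fib_add_two
    have e5 : Nat.fib (5 * a + 8) = Nat.fib (5 * a + 6) + Nat.fib (5 * a + 7) := Nat.fib_add_two
    have h : Nat.fib (5 * a + 1) ≤ Nat.fib (5 * a + 2) := Nat.fib_mono (by omega)
    rw [show 5 * (a + 1) + 3 = 5 * a + 8 by ring, pow_succ]
    omega

theorem fib_le_two_pow (n : ℕ) : Nat.fib n ≤ 2 ^ n := by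
  induction n using Nat.twoStepInduction with
  | zero => simp
  | one => simp
  | more n h1 h2 =>
    rw [Nat.fib_add_two, pow_succ, pow_succ] at *
    omega

namespace RepSum
variable {n k d1 d2 d3 l1 l2 l3 : ℕ}

theorem m3_pow (h : RepSum n k d1 d2 d3 l1 l2 l3) :
    9 * 10 ^ (l1 + l2 + l3) + 10 * d3 ≤ 10 * (m3 d1 d2 d3 l1 l2 * 10 ^ l3) ∧
      m3 d1 d2 d3 l1 l2 * 10 ^ l3 ≤ 9 * 10 ^ (l1 + l2 + l3) := by
  obtain ⟨h1, h2, h3, h4⟩ := m3_bounds h.d1_pos h.d1_le h.d2_le h.d3_le h.l1_pos h.l2_pos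
  rw [pow_add _ (l1 + l2)]
  constructor <;> nlinarith [Nat.one_le_pow l3 10 (by norm_num)]

theorem sum_bounds (h : RepSum n k d1 d2 d3 l1 l2 l3) :
    10 ^ (l1 + l2 + l3) ≤ 10 * (Nat.fib n + Nat.fib (n - k)) ∧
      Nat.fib n + Nat.fib (n - k) ≤ 10 ^ (l1 + l2 + l3) := by
  obtain ⟨h1, h2⟩ := h.m3_pow
  have h3 := h.eqn
  have h4 := h.d3_le
  constructor <;> omega

theorem len_le (h : RepSum n k d1 d2 d3 l1 l2 l3) : l1 + l2 + l3 ≤ n := by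
  obtain ⟨h1, -⟩ := h.sum_bounds
  have h2 : Nat.fib (n - k) ≤ Nat.fib n := Nat.fib_mono (by omega)
  have h3 := fib_le_two_pow n
  have h4 : l1 + l2 + l3 = (l1 + l2 + l3 - 1) + 1 := by have := h.l3_pos; omega
  rw [h4, pow_succ] at h1
  have h5 : 8 ^ (l1 + l2 + l3 - 1) ≤ 10 ^ (l1 + l2 + l3 - 1) := Nat.pow_le_pow_left (by norm_num) _
  have h6 : 2 ^ (3 * (l1 + l2 + l3 - 1)) ≤ 2 ^ (n + 1) := by
    rw [pow_mul, pow_succ]; norm_num; omega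
  have h7 := (Nat.pow_le_pow_iff_right (by norm_num)).1 h6
  have := h.l1_pos; have := h.l2_pos; have := h.l3_pos
  omega

theorem le_len (h : RepSum n k d1 d2 d3 l1 l2 l3) : n ≤ 5 * (l1 + l2 + l3) + 3 := by
  obtain ⟨-, h1⟩ := h.sum_bounds
  by_contra hn
  have h2 := fib_mul_five (l1 + l2 + l3)
  have h3 : Nat.fib (5 * (l1 + l2 + l3) + 3) < Nat.fib n :=
    (Nat.fib_lt_fib (by omega)).2 (by omega)
  omega

theorem level_one (h : RepSum n k d1 d2 d3 l1 l2 l3) : Level n k d1 (l1 + l2 + l3) 0 l1 ∧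
    (d1 = d2 → Level n k d1 (l1 + l2 + l3) 0 (l1 + l2)) := by
  have hd1 := h.d1_pos; have hd1' := h.d1_le; have hd2 := h.d2_le; have hd3 := h.d3_le
  have hl1 := h.l1_pos; have hl2 := h.l2_pos; have hl3 := h.l3_pos
  have e1 := @m2_add d1 d2 l1
  have e2 := @m3_add d1 d2 d3 l1 l2 hd1 hd1' hd2 hl1
  have e3 := h.eqn
  have key : 9 * ((Nat.fib n : ℤ) + Nat.fib (n - k)) - d1 * 10 ^ (l1 + l2 + l3) =
      (d2 - d1) * 10 ^ (l2 + l3) + (d3 - d2) * 10 ^ l3 - d3 := by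
    zify at e1 e2 e3
    rw [show l1 + l2 + l3 = l1 + (l2 + l3) by ring, pow_add 10 l1, pow_add 10 l2]
    linear_combination e3 + (10 : ℤ) ^ l3 * e2 + (10 : ℤ) ^ l2 * 10 ^ l3 * e1
  have hp : (1 : ℤ) ≤ 10 ^ l3 := one_le_pow₀ (by norm_num)
  have hp2 : (10 : ℤ) ^ l3 ≤ 10 ^ (l2 + l3) := pow_le_pow_right₀ (by norm_num) (by omega)
  have hy : 9 * 10 ^ (l1 + l2 + l3) ≤ 10 * (d1 * 10 ^ (l1 + l2 + l3)) := by
    rw [← mul_assoc]; exact Nat.mul_le_mul_right _ (by omega)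
  constructor
  · refine level_of_approx n k d1 (l1 + l2 + l3) 0 l1 (l1 + l2 + l3) h.k_le hd1 (by omega)
      h.len_le (by omega) (by omega) h.sum_bounds.1 hy ?_
    rw [key, show l1 + l2 + l3 - l1 = l2 + l3 by omega, abs_le]
    constructor <;> nlinarith
  · intro hd
    refine level_of_approx n k d1 (l1 + l2 + l3) 0 (l1 + l2) (l1 + l2 + l3) h.k_le hd1 (by omega)
      h.len_le (by omega) (by omega) h.sum_bounds.1 hy ?_
    rw [key, show l1 + l2 + l3 - (l1 + l2) = l3 by omega, abs_le, hd]
    constructor <;> nlinarith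

theorem level_two (h : RepSum n k d1 d2 d3 l1 l2 l3) :
    Level n k (m2 d1 d2 l1) (l2 + l3) l1 (l1 + l2) ∧
    (d2 = d3 → Level n k (m2 d1 d2 l1) (l2 + l3) l1 (l1 + l2 + l3)) := by
  have hd1 := h.d1_pos; have hd1' := h.d1_le; have hd2 := h.d2_le; have hd3 := h.d3_le
  have hl1 := h.l1_pos; have hl2 := h.l2_pos; have hl3 := h.l3_pos
  have e2 := @m3_add d1 d2 d3 l1 l2 hd1 hd1' hd2 hl1
  have e3 := h.eqn
  have hn := h.len_le
  obtain ⟨b1, b2, b3⟩ := m2_bounds hd1 hd1' hd2 hl1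
  have key : 9 * ((Nat.fib n : ℤ) + Nat.fib (n - k)) - (m2 d1 d2 l1 : ℕ) * 10 ^ (l2 + l3) =
      (d3 - d2) * 10 ^ l3 - d3 := by
    zify at e2 e3
    rw [pow_add 10 l2]
    linear_combination e3 + (10 : ℤ) ^ l3 * e2
  have hp : (1 : ℤ) ≤ 10 ^ l3 := one_le_pow₀ (by norm_num)
  have hy : 9 * 10 ^ (l1 + l2 + l3) ≤ 10 * (m2 d1 d2 l1 * 10 ^ (l2 + l3)) := by
    rw [add_assoc, pow_add, ← mul_assoc, ← mul_assoc]
    exact Nat.mul_le_mul_right _ b1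
  constructor
  · refine level_of_approx n k _ (l2 + l3) l1 (l1 + l2) (l1 + l2 + l3) h.k_le (by omega) (by omega)
      (by omega) (by omega) (by omega) h.sum_bounds.1 hy ?_
    rw [key, show l1 + l2 + l3 - (l1 + l2) = l3 by omega, abs_le]
    constructor <;> nlinarith
  · intro hd
    refine level_of_approx n k _ (l2 + l3) l1 (l1 + l2 + l3) (l1 + l2 + l3) h.k_le (by omega)
      (by omega) (by omega) (by omega) (by omega) h.sum_bounds.1 hy ?_
    rw [key, Nat.sub_self, abs_le, hd]
    constructor <;> simp <;> omega

theorem level_three (h : RepSum n k d1 d2 d3 l1 l2 l3) :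
    Level n k (m3 d1 d2 d3 l1 l2) l3 (l1 + l2) (l1 + l2 + l3) := by
  have hd3 := h.d3_le
  have hl1 := h.l1_pos; have hl2 := h.l2_pos; have hl3 := h.l3_pos
  have e3 := h.eqn
  have hn := h.len_le
  obtain ⟨b1, b2, b3, b4⟩ := m3_bounds h.d1_pos h.d1_le h.d2_le hd3 hl1 hl2
  have key : 9 * ((Nat.fib n : ℤ) + Nat.fib (n - k)) - (m3 d1 d2 d3 l1 l2 : ℕ) * 10 ^ l3 =
      - d3 := by
    zify at e3
    linear_combination e3
  refine level_of_approx n k _ l3 (l1 + l2) (l1 + l2 + l3) (l1 + l2 + l3) h.k_le (by omega)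
    (by omega) (by omega) (by omega) (by omega) h.sum_bounds.1 (by have := h.m3_pow.1; omega) ?_
  rw [key, Nat.sub_self, abs_neg]
  simp; omega

end RepSum

theorem exists_rep {N n1 n2 : ℕ} (h12 : n2 ≤ n1) (hN : N = Nat.fib n1 + Nat.fib n2)
    (hc : ∃ d1 d2 d3 l1 l2 l3 : ℕ,
      1 ≤ d1 ∧ d1 < 10 ∧ d2 < 10 ∧ d3 < 10 ∧ 1 ≤ l1 ∧ 1 ≤ l2 ∧ 1 ≤ l3 ∧
      N = d1 * ((10 ^ l1 - 1) / (10 - 1)) * 10 ^ (l2 + l3) +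
        d2 * ((10 ^ l2 - 1) / (10 - 1)) * 10 ^ l3 + d3 * ((10 ^ l3 - 1) / (10 - 1))) :
    ∃ d1 d2 d3 l1 l2 l3, RepSum n1 (n1 - n2) d1 d2 d3 l1 l2 l3 := by
  obtain ⟨d1, d2, d3, l1, l2, l3, h1, h2, h3, h4, h5, h6, h7, e⟩ := hc
  refine ⟨d1, d2, d3, l1, l2, l3, by omega, h1, by omega, by omega, by omega, h5, h6, h7, ?_⟩
  rw [show n1 - (n1 - n2) = n2 by omega, ← hN]
  have hr : ∀ l, 9 * ((10 ^ l - 1) / (10 - 1)) + 1 = 10 ^ l := fun l => by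
    have : 9 ∣ 10 ^ l - 1 := by
      have := Nat.sub_dvd_pow_sub_pow 10 1 l
      simpa using this
    have h0 : 1 ≤ 10 ^ l := (Nat.one_le_pow _ _ (by norm_num))
    norm_num
    omega
  have r1 := hr l1; have r2 := hr l2; have r3 := hr l3
  generalize (10 ^ l1 - 1) / (10 - 1) = x at *
  generalize (10 ^ l2 - 1) / (10 - 1) = y at *
  generalize (10 ^ l3 - 1) / (10 - 1) = z at *
  have e1 := @m2_add d1 d2 l1
  have e2 := @m3_add d1 d2 d3 l1 l2 h1 (by omega) (by omega) h5
  rw [pow_add] at e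
  zify at *
  rw [e]
  linear_combination (-(10 : ℤ) ^ l3) * e2 + (-(10 : ℤ) ^ l2 * 10 ^ l3) * e1 +
    d1 * (10 : ℤ) ^ l2 * 10 ^ l3 * r1 + d2 * (10 : ℤ) ^ l3 * r2 + d3 * r3

/-! ### Packed arithmetic -/

/-- The natural number with base-`2 ^ w` digits (lanes) `f 0, …, f (n - 1)`. -/
def pack (w : ℕ) (f : ℕ → ℕ) : ℕ → ℕ
  | 0 => 0
  | n + 1 => pack w f n + f n * 2 ^ (w * n)

theorem pack_eq_sum (w : ℕ) (f : ℕ → ℕ) (n : ℕ) :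
    pack w f n = ∑ i ∈ Finset.range n, f i * 2 ^ (w * i) := by
  induction n with
  | zero => rfl
  | succ n ih => rw [pack, ih, Finset.sum_range_succ]

theorem pack_congr {w n : ℕ} {f g : ℕ → ℕ} (h : ∀ i < n, f i = g i) : pack w f n = pack w g n := by
  rw [pack_eq_sum, pack_eq_sum]
  exact Finset.sum_congr rfl fun i hi => by rw [h i (Finset.mem_range.1 hi)]

theorem pack_add (w : ℕ) (f g : ℕ → ℕ) (n : ℕ) :
    pack w f n + pack w g n = pack w (fun i => f i + g i) n := by
  simp only [pack_eq_sum, ← Finset.sum_add_distrib, add_mul]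

theorem mul_pack (w c : ℕ) (f : ℕ → ℕ) (n : ℕ) :
    c * pack w f n = pack w (fun i => c * f i) n := by
  simp only [pack_eq_sum, Finset.mul_sum, mul_assoc]

theorem pack_single (w j v n : ℕ) (hj : j < n) :
    pack w (fun i => if i = j then v else 0) n = v * 2 ^ (w * j) := by
  rw [pack_eq_sum, Finset.sum_eq_single_of_mem j (Finset.mem_range.2 hj)]
  · simp
  · intro b _ hb; simp [hb]

/-- Multiplying a pack of `L` wide lanes by a pack of `n` narrow lanes. -/
theorem pack_mul (w n : ℕ) (g h : ℕ → ℕ) (L : ℕ) :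
    pack (n * w) g L * pack w h n = pack w (fun r => g (r / n) * h (r % n)) (L * n) := by
  rcases Nat.eq_zero_or_pos n with rfl | hn
  · simp [pack]
  induction L with
  | zero => simp [pack]
  | succ L ih =>
    rw [pack, add_mul, ih, Nat.succ_mul]
    simp only [pack_eq_sum]
    rw [Finset.sum_range_add, Finset.mul_sum]
    congr 1
    refine Finset.sum_congr rfl fun i hi => ?_
    have hi := Finset.mem_range.1 hi
    have h1 : (L * n + i) / n = L := by
      rw [mul_comm, Nat.mul_add_div hn, Nat.div_eq_of_lt hi, add_zero]
    have h2 : (L * n + i) % n = i := by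
      rw [mul_comm, Nat.mul_add_mod, Nat.mod_eq_of_lt hi]
    rw [h1, h2, show w * (L * n + i) = n * w * L + w * i by ring, pow_add]
    ring

theorem pack_lt {w n : ℕ} {f : ℕ → ℕ} (hf : ∀ i < n, f i < 2 ^ w) : pack w f n < 2 ^ (w * n) := by
  induction n with
  | zero => simp [pack]
  | succ n ih =>
    have h1 := ih fun i hi => hf i (by omega)
    have h2 : (f n + 1) * 2 ^ (w * n) ≤ 2 ^ w * 2 ^ (w * n) :=
      Nat.mul_le_mul_right _ (hf n (by omega))
    rw [pack, Nat.mul_succ, pow_add, mul_comm (2 ^ (w * n))]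
    linarith

theorem land_two_pow_add {m a b c d : ℕ} (ha : a < 2 ^ m) (hc : c < 2 ^ m) :
    (a + b * 2 ^ m) &&& (c + d * 2 ^ m) = (a &&& c) + (b &&& d) * 2 ^ m := by
  have hac : a &&& c < 2 ^ m := lt_of_le_of_lt Nat.and_le_left ha
  refine Nat.eq_of_testBit_eq fun i => ?_
  rw [Nat.testBit_and, add_comm a, add_comm c, add_comm (a &&& c), mul_comm b, mul_comm d,
    mul_comm (b &&& d), Nat.testBit_two_pow_mul_add _ ha, Nat.testBit_two_pow_mul_add _ hc,
    Nat.testBit_two_pow_mul_add _ hac]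
  split_ifs <;> simp

theorem land_pack {w n : ℕ} {f g : ℕ → ℕ} (hf : ∀ i < n, f i < 2 ^ w) (hg : ∀ i < n, g i < 2 ^ w) :
    pack w f n &&& pack w g n = pack w (fun i => f i &&& g i) n := by
  induction n with
  | zero => simp [pack]
  | succ n ih =>
    rw [pack, pack, pack, land_two_pow_add (pack_lt fun i hi => hf i (by omega))
      (pack_lt fun i hi => hg i (by omega)),
      ih (fun i hi => hf i (by omega)) fun i hi => hg i (by omega)]

theorem pack_inj {w n : ℕ} {f g : ℕ → ℕ} (hf : ∀ i < n, f i < 2 ^ w) (hg : ∀ i < n, g i < 2 ^ w)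
    (h : pack w f n = pack w g n) : ∀ i < n, f i = g i := by
  induction n with
  | zero => intro i hi; omega
  | succ n ih =>
    have h1 : pack w f n < 2 ^ (w * n) := pack_lt fun i hi => hf i (by omega)
    have h2 : pack w g n < 2 ^ (w * n) := pack_lt fun i hi => hg i (by omega)
    rw [pack, pack] at h
    have h3 := congrArg (· % 2 ^ (w * n)) h
    have h4 := congrArg (· / 2 ^ (w * n)) h
    simp only [Nat.add_mul_mod_self_right, Nat.mod_eq_of_lt h1, Nat.mod_eq_of_lt h2] at h3
    rw [Nat.add_mul_div_right _ _ (by positivity), Nat.add_mul_div_right _ _ (by positivity),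
      Nat.div_eq_of_lt h1, Nat.div_eq_of_lt h2] at h4
    intro i hi
    rcases Nat.lt_succ_iff_lt_or_eq.1 hi with hi | rfl
    · exact ih (fun i hi => hf i (by omega)) (fun i hi => hg i (by omega)) h3 i hi
    · simpa using h4

/-- The bits `t, …, W - 1`. -/
theorem land_mask_eq_zero {a W t : ℕ} (htW : t ≤ W) (h : a % 2 ^ W < 2 ^ t) :
    a &&& (2 ^ W - 2 ^ t) = 0 := by
  have e : 2 ^ W - 2 ^ t = 2 ^ t * (2 ^ (W - t) - 1) := by
    rw [Nat.mul_sub, ← pow_add, mul_one]; congr 2; omega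
  refine Nat.eq_of_testBit_eq fun i => ?_
  rw [Nat.testBit_and, e, Nat.testBit_two_pow_mul, Nat.testBit_two_pow_sub_one]
  by_cases hi : t ≤ i ∧ i - t < W - t
  · have h1 : (a % 2 ^ W).testBit i = false :=
      Nat.testBit_lt_two_pow (h.trans_le (Nat.pow_le_pow_right (by norm_num) hi.1))
    rw [Nat.testBit_mod_two_pow] at h1
    have : i < W := by omega
    simp [this] at h1
    simp [h1]
  · rw [not_and_or] at hi
    rcases hi with hi | hi <;> simp [hi]

/-- All lanes of `z` have a nonzero bit among the positions `t, …, W - 1`; `mH` and `top` are the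
packs with constant lanes `2 ^ W - 2 ^ t` and `2 ^ W`. -/
def laneTest (mH top z : ℕ) : Bool := Nat.beq (((z &&& mH) + mH) &&& top) top

theorem laneTest_spec {w W t n : ℕ} {f : ℕ → ℕ} (hf : ∀ i < n, f i < 2 ^ w) (hW : W + 1 ≤ w)
    (htW : t ≤ W)
    (h : laneTest ((2 ^ W - 2 ^ t) * pack w (fun _ => 1) n) (2 ^ W * pack w (fun _ => 1) n)
      (pack w f n) = true) : ∀ i < n, 2 ^ t ≤ f i % 2 ^ W := by
  have hp1 : 2 ^ (W + 1) ≤ 2 ^ w := Nat.pow_le_pow_right (by norm_num) hW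
  have hp2 : 2 ^ (W + 1) = 2 * 2 ^ W := by ring
  have hp0 : 0 < 2 ^ W := by positivity
  have hpt : 0 < 2 ^ t := by positivity
  have hml : ∀ a : ℕ, a &&& (2 ^ W - 2 ^ t) ≤ 2 ^ W - 2 ^ t := fun a => Nat.and_le_right
  have hlt : ∀ a : ℕ, (a &&& (2 ^ W - 2 ^ t)) + (2 ^ W - 2 ^ t) < 2 ^ w := fun a => by
    have := hml a; omega
  rw [laneTest, Nat.beq_eq, mul_pack, mul_pack] at h
  simp only [mul_one] at h
  rw [land_pack hf (fun _ _ => by omega), pack_add,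
    land_pack (fun i _ => hlt _) (fun _ _ => by omega)] at h
  have h2 := pack_inj (fun i _ => lt_of_le_of_lt Nat.and_le_left (hlt (f i)))
    (fun _ _ => by omega) h
  intro i hi
  by_contra hc
  have h3 := h2 i hi
  rw [land_mask_eq_zero htW (not_le.1 hc), zero_add] at h3
  have h4 : (2 ^ W - 2 ^ t) &&& 2 ^ W = 0 := by
    rw [Nat.and_two_pow, Nat.testBit_lt_two_pow (by omega)]; simp
  omega

/-- Extracting the bits `P, …, P + W - 1` of every lane. -/
theorem land_pack_div {w P W n : ℕ} {f : ℕ → ℕ} (hf : ∀ i < n, f i < 2 ^ w) (hW : P + W ≤ w) :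
    (pack w f n &&& ((2 ^ W - 1) * 2 ^ P) * pack w (fun _ => 1) n) / 2 ^ P =
      pack w (fun i => f i / 2 ^ P % 2 ^ W) n := by
  have hm : (2 ^ W - 1) * 2 ^ P < 2 ^ w := by
    refine lt_of_lt_of_le ?_ (Nat.pow_le_pow_right (by norm_num) hW)
    rw [pow_add, mul_comm]
    exact Nat.mul_lt_mul_of_pos_left (Nat.sub_lt (by positivity) (by norm_num)) (by positivity)
  have hb : ∀ a : ℕ, a &&& (2 ^ W - 1) * 2 ^ P = 2 ^ P * (a / 2 ^ P % 2 ^ W) := fun a => by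
    refine Nat.eq_of_testBit_eq fun i => ?_
    rw [Nat.testBit_and, mul_comm, Nat.testBit_two_pow_mul, Nat.testBit_two_pow_mul,
      Nat.testBit_two_pow_sub_one, Nat.testBit_mod_two_pow, Nat.testBit_div_two_pow]
    by_cases hi : P ≤ i
    · rw [Nat.sub_add_cancel hi]; simp [hi, Bool.and_comm]
    · simp [hi]
  rw [mul_pack]
  simp only [mul_one]
  rw [land_pack hf (fun _ _ => hm)]
  simp only [hb]
  rw [← mul_pack, Nat.mul_div_cancel_left _ (by positivity)]

theorem lt_div_succ_mul (a : ℕ) {b : ℕ} (hb : 0 < b) : a < (a / b + 1) * b := by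
  have h1 := Nat.div_add_mod a b
  have h2 := Nat.mod_lt a hb
  rw [add_mul, one_mul, mul_comm]
  omega

/-! ### Distance to the nearest integer -/

/-- `q θ / log 10` stays at distance at least `c / 2 ^ W` from the integers. -/
def Far (W q : ℕ) (c : ℝ) (θ : ℝ) : Prop :=
  ∀ j : ℤ, c ≤ |2 ^ W * q / log 10 * θ - 2 ^ W * j|

/-- The reduction step of Baker and Davenport, in integral form. -/
theorem Far.bound {W q p n e M : ℕ} {c β : ℝ} (hF : Far W q c (log (β / (5 * M : ℕ)))) :
    c * log 10 ≤ 2 ^ W * (q * |linForm n e M β| + n * |q * log goldenRatio - p * log 10|) := by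
  have hL : 0 < log 10 := log_pos (by norm_num)
  have h := hF (q * e - n * p)
  set θ := log (β / (5 * M : ℕ)) with hθ
  push_cast at h
  have e1 : 2 ^ W * q / log 10 * θ - 2 ^ W * (q * e - n * p) =
      (2 ^ W * (q * linForm n e M β - n * (q * log goldenRatio - p * log 10))) / log 10 := by
    rw [linForm, ← hθ]; field_simp; ring
  rw [e1, abs_div, abs_of_pos hL, le_div_iff₀ hL, abs_mul, abs_of_pos (by positivity : (0:ℝ) < 2 ^ W)] at h
  refine h.trans (mul_le_mul_of_nonneg_left ?_ (by positivity))
  refine (abs_sub _ _).trans ?_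
  rw [abs_mul, abs_mul, Nat.abs_cast, Nat.abs_cast]

theorem Far.shift {W q : ℕ} {c θ : ℝ} (l : ℕ) (h : Far W q c θ) : Far W q c (θ - l * log 10) := by
  intro j
  have hL : log 10 ≠ 0 := (log_pos (by norm_num)).ne'
  have := h (j + q * l)
  push_cast at this
  convert this using 2
  field_simp
  ring

/-- A residue in `[2 c, 2 ^ W)` after adding `c` means distance at least `c` from the multiples of
`2 ^ W`. -/
theorem abs_ge_of_mod {W c z : ℕ} {x y : ℤ} (hz : (z : ℤ) ≡ x + c - y [ZMOD 2 ^ W])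
    (h : 2 * c ≤ z % 2 ^ W) (j : ℤ) : (c : ℤ) ≤ |x - y - 2 ^ W * j| := by
  by_contra hc
  rw [not_le, abs_lt] at hc
  have h1 : z % 2 ^ W < 2 ^ W := Nat.mod_lt _ (by positivity)
  have h2 : ((z % 2 ^ W : ℕ) : ℤ) = x - y - 2 ^ W * j + c := by
    have h3 : ((z % 2 ^ W : ℕ) : ℤ) = (x - y - 2 ^ W * j + c) % 2 ^ W := by
      push_cast
      refine hz.trans ?_
      refine (Int.modEq_iff_dvd.2 ⟨-j, by ring⟩)
    rw [h3]
    refine Int.emod_eq_of_lt (by linarith [hc.1]) ?_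
    have h1' : ((z % 2 ^ W : ℕ) : ℤ) < 2 ^ W := by exact_mod_cast h1
    have : (2 * c : ℤ) ≤ ((z % 2 ^ W : ℕ) : ℤ) := by exact_mod_cast h
    linarith [hc.2]
  have : (2 * c : ℤ) ≤ ((z % 2 ^ W : ℕ) : ℤ) := by exact_mod_cast h
  linarith [hc.2]

theorem far_of_mod {W q c z ex ey : ℕ} {x y : ℤ} {a b : ℝ} (hz : (z : ℤ) ≡ x + c - y [ZMOD 2 ^ W])
    (h : 2 * c ≤ z % 2 ^ W) (hx : |(x : ℝ) - 2 ^ W * q / log 10 * a| ≤ ex)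
    (hy : |(y : ℝ) - 2 ^ W * q / log 10 * b| ≤ ey) : Far W q (c - (ex + ey)) (a - b) := by
  intro j
  have h1 : ((c : ℤ) : ℝ) ≤ ((|x - y - 2 ^ W * j| : ℤ) : ℝ) := Int.cast_le.2 (abs_ge_of_mod hz h j)
  push_cast at h1
  rw [mul_sub]
  set s := 2 ^ W * (q : ℝ) / log 10
  have h2 : |(x : ℝ) - y - 2 ^ W * j| ≤ |s * a - s * b - 2 ^ W * j| + (ex + ey) := by
    have e : (x : ℝ) - y - 2 ^ W * j = (s * a - s * b - 2 ^ W * j) + ((x - s * a) - (y - s * b)) := by ring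
    rw [e]
    refine (abs_add_le _ _).trans (add_le_add le_rfl ((abs_sub _ _).trans (add_le_add hx hy)))
  linarith

/-! ### Fixed-point values of the logarithms involved -/

/-- `A` approximates `2 ^ 480 a` with error at most `E`. -/
def Apx (E A : ℕ) (a : ℝ) : Prop := |(A : ℝ) - 2 ^ 480 * a| ≤ (E : ℝ)

theorem Apx.add {E F A B : ℕ} {a b : ℝ} (h : Apx E A a) (h' : Apx F B b) :
    Apx (E + F) (A + B) (a + b) := by
  unfold Apx at *
  push_cast
  generalize (2 : ℝ) ^ 480 = y at *
  rw [abs_le] at *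
  constructor <;> linarith

theorem Apx.sub {E F A B : ℕ} {a b : ℝ} (h : Apx E A a) (h' : Apx F B b) (hBA : B ≤ A) :
    Apx (E + F) (A - B) (a - b) := by
  unfold Apx at *
  push_cast [hBA]
  generalize (2 : ℝ) ^ 480 = y at *
  rw [abs_le] at *
  constructor <;> linarith

theorem Apx.mono {E F A : ℕ} {a : ℝ} (h : Apx E A a) (hEF : E ≤ F) : Apx F A a :=
  h.trans (by exact_mod_cast hEF)

theorem Apx.smul {E A : ℕ} {a : ℝ} (m : ℕ) (h : Apx E A a) : Apx (m * E) (m * A) (m * a) := by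
  unfold Apx at *
  push_cast
  have : (m : ℝ) * A - 2 ^ 480 * (m * a) = m * (A - 2 ^ 480 * a) := by ring
  rw [this, abs_mul, Nat.abs_cast]
  exact mul_le_mul_of_nonneg_left h (Nat.cast_nonneg _)

theorem apx_fixLog {v a b : ℕ} (hb : 0 < b) (hab : b ≤ a) (hv : 1 ≤ v)
    (h : (a - b) * 2 ^ v ≤ a + b) : Apx 970 (fixLog 480 v a b) (log (a / b)) := by
  obtain ⟨h1, h2⟩ := fixLog_spec 480 v a b hb hab hv h
  unfold Apx
  norm_num at h2
  generalize (2 : ℝ) ^ 480 = y at *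
  rw [abs_le]
  push_cast
  constructor <;> linarith

/-- Approximation of `2 ^ 480 log m`. -/
def cLog (m : ℕ) : ℕ := Nat.log2 m * fixLog 480 1 2 1 + fixLog 480 1 m (2 ^ Nat.log2 m)

theorem apx_cLog {m : ℕ} (hm : 1 ≤ m) : Apx (970 * (Nat.log2 m + 1)) (cLog m) (log m) := by
  have h1 : 2 ^ Nat.log2 m ≤ m := Nat.log2_self_le (by omega)
  have h2 : m < 2 ^ (Nat.log2 m + 1) := Nat.lt_log2_self
  have h3 : 2 ^ (Nat.log2 m + 1) = 2 * 2 ^ Nat.log2 m := by ring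
  have hp : 0 < 2 ^ Nat.log2 m := by positivity
  have a1 : Apx 970 (fixLog 480 1 2 1) (log 2) := by
    have := apx_fixLog (v := 1) (a := 2) (b := 1) (by norm_num) (by norm_num) le_rfl (by norm_num)
    simpa using this
  have a2 := apx_fixLog (v := 1) (a := m) (b := 2 ^ Nat.log2 m) hp h1 le_rfl (by omega)
  have := (a1.smul (Nat.log2 m)).add a2
  unfold cLog
  convert this using 1
  · ring
  · have hm' : (m : ℝ) ≠ 0 := by positivity
    push_cast
    rw [log_div hm' (by positivity), log_pow]
    ring

/-- Approximation of `2 ^ 512 φ ^ (-k)`. -/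
def zPow : ℕ → ℕ
  | 0 => 2 ^ 512
  | k + 1 => zPow k * (invGoldenHi / 2 ^ 288) / 2 ^ 512

theorem zPow_spec (k : ℕ) : (zPow k : ℝ) ≤ 2 ^ 512 * (goldenRatio - 1) ^ k ∧
    2 ^ 512 * (goldenRatio - 1) ^ k ≤ zPow k + 8 := by
  induction k with
  | zero =>
    rw [zPow, pow_zero, mul_one]
    push_cast
    exact ⟨le_rfl, by linarith⟩
  | succ k ih =>
    obtain ⟨g1, g2⟩ := golden_sub_one_bounds
    obtain ⟨p1, p2⟩ := golden_sub_one_pow k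
    obtain ⟨a1, a2⟩ := invGoldenHi_spec
    obtain ⟨i1, i2⟩ := ih
    set I := invGoldenHi / 2 ^ 288 with hI
    have hI1 : I * 2 ^ 288 ≤ invGoldenHi := Nat.div_mul_le_self _ _
    have hI2 : invGoldenHi < (I + 1) * 2 ^ 288 := lt_div_succ_mul _ (by positivity)
    have hZ1 : zPow (k + 1) * 2 ^ 512 ≤ zPow k * I := Nat.div_mul_le_self _ _
    have hZ2 : zPow k * I < (zPow (k + 1) + 1) * 2 ^ 512 := lt_div_succ_mul _ (by positivity)
    have b1 : (I : ℝ) * 2 ^ 288 ≤ invGoldenHi := by exact_mod_cast hI1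
    have b2 : (invGoldenHi : ℝ) + 1 ≤ (I + 1) * 2 ^ 288 := by exact_mod_cast hI2
    have c1 : (zPow (k + 1) : ℝ) * 2 ^ 512 ≤ zPow k * I := by exact_mod_cast hZ1
    have c2 : (zPow k : ℝ) * I ≤ (zPow (k + 1) + 1) * 2 ^ 512 := by exact_mod_cast hZ2.le
    have hz0 : (0 : ℝ) ≤ zPow k := Nat.cast_nonneg _
    have hI0 : (0 : ℝ) ≤ I := Nat.cast_nonneg _
    clear hI1 hI2 hZ1 hZ2 hI
    have hy : (2 : ℝ) ^ 800 = 2 ^ 512 * 2 ^ 288 := by rw [← pow_add]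
    have hy1 : (0 : ℝ) < 2 ^ 512 := by positivity
    have hy2 : (0 : ℝ) < 2 ^ 288 := by positivity
    rw [hy] at a1 a2
    have hbig : (1 : ℝ) ≤ 2 ^ 512 := one_le_pow₀ (by norm_num)
    generalize (2 : ℝ) ^ 512 = y at *
    generalize (2 : ℝ) ^ 288 = s at *
    generalize goldenRatio - 1 = g at *
    rw [pow_succ]
    generalize g ^ k = γ at *
    -- `I ≤ y g ≤ I + 1`
    have d1 : (I : ℝ) ≤ y * g := by
      refine le_of_mul_le_mul_right ?_ hy2
      linarith
    have d2 : y * g ≤ I + 1 := by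
      refine le_of_mul_le_mul_right ?_ hy2
      linarith
    have hg0 : 0 ≤ g := by linarith
    constructor
    · refine le_of_mul_le_mul_right ?_ hy1
      calc (zPow (k + 1) : ℝ) * y ≤ zPow k * I := c1
        _ ≤ (y * γ) * (y * g) := by gcongr
        _ = y * (γ * g) * y := by ring
    · refine le_of_mul_le_mul_right ?_ hy1
      have e1 : (zPow k : ℝ) ≤ y := by nlinarith
      have e2 : y * (γ * g) * y = (y * γ) * (y * g) := by ring
      have e3 : (y * γ) * (y * g) ≤ (zPow k + 8) * (y * g) := by gcongr
      have e4 : (zPow k : ℝ) * (y * g) ≤ zPow k * (I + 1) := by gcongr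
      nlinarith

/-- Approximation of `2 ^ 480 log (9 √5 (1 + z / 2 ^ 512))`, where `z 2 ^ v ≤ 2 ^ 513`. -/
def xApx (v z : ℕ) : ℕ := cLog 405 / 2 + fixLog 480 v (2 ^ 512 + z) (2 ^ 512)

theorem apx_half_log : Apx 4366 (cLog 405 / 2) (log (9 * (2 * goldenRatio - 1))) := by
  have h := apx_cLog (m := 405) (by norm_num)
  have e : log (9 * (2 * goldenRatio - 1)) = log (405 : ℕ) / 2 := by
    have h5 : (9 * (2 * goldenRatio - 1)) ^ 2 = ((405 : ℕ) : ℝ) := by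
      rw [two_golden_sub_one, mul_pow, sq_sqrt (by norm_num)]; norm_num
    rw [← h5, log_pow]; push_cast; ring
  rw [e]
  have h2 : Nat.log2 405 = 8 := by decide +kernel
  rw [h2] at h
  have d1 : cLog 405 / 2 * 2 ≤ cLog 405 := Nat.div_mul_le_self _ _
  have d2 : cLog 405 < (cLog 405 / 2 + 1) * 2 := lt_div_succ_mul _ (by positivity)
  have d1' : ((cLog 405 / 2 : ℕ) : ℝ) * 2 ≤ cLog 405 := by exact_mod_cast d1
  have d2' : (cLog 405 : ℝ) ≤ ((cLog 405 / 2 : ℕ) + 1) * 2 := by exact_mod_cast d2.le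
  unfold Apx at *
  generalize ((cLog 405 / 2 : ℕ) : ℝ) = u at *
  clear d1 d2
  generalize (cLog 405 : ℝ) = v at *
  generalize (2 : ℝ) ^ 480 = y at *
  rw [abs_le] at *
  norm_num at h ⊢
  constructor <;> linarith

theorem beta_eq_mul (k : ℕ) : log (beta k) =
    log (9 * (2 * goldenRatio - 1)) + log (1 + (goldenRatio - 1) ^ k) := by
  have h := two_golden_sub_one
  have h3 := (golden_sub_one_pow k).1
  rw [beta, log_mul (by rw [h]; positivity) (by positivity)]

theorem apx_xApx {k v : ℕ} (hv : 1 ≤ v) (h : zPow k * 2 ^ v ≤ 2 ^ 513) :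
    Apx 6000 (xApx v (zPow k)) (log (beta k)) := by
  obtain ⟨h1, h2⟩ := zPow_spec k
  rw [beta_eq_mul]
  have h5 : 2 ^ 513 = 2 ^ 512 + 2 ^ 512 := by rw [← Nat.two_pow_succ]
  have a1 := apx_fixLog (v := v) (a := 2 ^ 512 + zPow k) (b := 2 ^ 512) (by positivity) (by omega) hv
    (by rw [Nat.add_sub_cancel_left]; omega)
  have a2 := log_one_add_approx (P := 2 ^ 512) (by positivity) (Nat.cast_nonneg _) h1 h2
  have a3 : Apx 971 (fixLog 480 v (2 ^ 512 + zPow k) (2 ^ 512)) (log (1 + (goldenRatio - 1) ^ k)) := by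
    have e : (2 : ℝ) ^ 512 = 2 ^ 480 * 2 ^ 32 := by rw [← pow_add]
    unfold Apx at a1 ⊢
    push_cast at a1 ⊢
    clear h h5 h1 h2
    generalize log ((2 ^ 512 + (zPow k : ℝ)) / 2 ^ 512) = u at *
    generalize log (1 + (goldenRatio - 1) ^ k) = v at *
    rw [e] at a2
    have hy : (0 : ℝ) < 2 ^ 480 := by positivity
    generalize (2 : ℝ) ^ 480 = y at *
    generalize (fixLog 480 _ (2 ^ 512 + zPow k) (2 ^ 512) : ℝ) = f at *
    rw [abs_le] at *
    norm_num at a2 a1 ⊢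
    constructor <;> linarith
  exact (apx_half_log.add a3).mono (by norm_num)

theorem apx_xApx_zero : Apx 6000 (xApx 1 0) (log (9 * (2 * goldenRatio - 1))) := by
  have hp : 0 < 2 ^ 512 := by positivity
  unfold xApx
  generalize 2 ^ 512 = s at hp
  have a1 := apx_fixLog (v := 1) (a := s + 0) (b := s) hp (by omega) le_rfl
    (by rw [add_zero, Nat.sub_self, zero_mul]; exact Nat.zero_le _)
  have e : log (((s + 0 : ℕ) : ℝ) / ((s : ℕ) : ℝ)) = 0 := by
    rw [add_zero, div_self (by exact_mod_cast hp.ne'), log_one]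
  rw [e] at a1
  have := (apx_half_log.add a1).mono (F := 6000) (by norm_num)
  rw [add_zero (log _)] at this
  exact this

/-- Approximation of `2 ^ 480 log (5 m / 10 ^ l)` for `m = m2 d1 d2 l`. -/
def yApx (d1 d2 l : ℕ) : ℕ :=
  if d1 ≤ d2 then cLog (5 * d1) + fixLog 480 (3 * l - 2) (m2 d1 d2 l) (d1 * 10 ^ l)
  else cLog (5 * d1) - fixLog 480 (3 * l - 2) (d1 * 10 ^ l) (m2 d1 d2 l)

/-- The conditions under which `yApx` is accurate. -/
def yOk (d1 d2 l : ℕ) : Bool :=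
  Nat.ble ((if d1 ≤ d2 then d2 - d1 else d1 - d2) * 2 ^ (3 * l - 2)) (m2 d1 d2 l + d1 * 10 ^ l) &&
    (Nat.ble d1 d2 || Nat.ble (fixLog 480 (3 * l - 2) (d1 * 10 ^ l) (m2 d1 d2 l)) (cLog (5 * d1)))

theorem apx_yApx {d1 d2 l : ℕ} (h1 : 1 ≤ d1) (h1' : d1 ≤ 9) (h2 : d2 ≤ 9) (hl : 1 ≤ l)
    (hok : yOk d1 d2 l = true) :
    Apx 7000 (yApx d1 d2 l) (log (5 * m2 d1 d2 l : ℕ) - l * log 10) := by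
  have hc := apx_cLog (m := 5 * d1) (by omega)
  have hlog : Nat.log2 (5 * d1) ≤ 5 := by
    have : Nat.log2 (5 * d1) < 6 := (Nat.log2_lt (by omega)).2 (by omega)
    omega
  have e := @m2_add d1 d2 l
  obtain ⟨_, _, hm⟩ := m2_bounds h1 h1' h2 hl
  have hp : 0 < d1 * 10 ^ l := by positivity
  rw [yOk, Bool.and_eq_true, Bool.or_eq_true, Nat.ble_eq, Nat.ble_eq, Nat.ble_eq] at hok
  obtain ⟨ok1, ok2⟩ := hok
  have hd : (d1 : ℝ) ≠ 0 := by positivity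
  have hm' : (m2 d1 d2 l : ℝ) ≠ 0 := by positivity
  unfold yApx
  split_ifs at ok1 ⊢ with hd12
  · have a := apx_fixLog (v := 3 * l - 2) (a := m2 d1 d2 l) (b := d1 * 10 ^ l) hp (by omega) (by omega)
      (by rwa [show m2 d1 d2 l - d1 * 10 ^ l = d2 - d1 by omega])
    have := (hc.add a).mono (F := 7000) (by omega)
    convert this using 1
    push_cast
    rw [log_div hm' (by positivity), log_mul (by norm_num) hm', log_mul (by norm_num) hd,
      log_mul hd (by positivity), log_pow]
    ring
  · have a := apx_fixLog (v := 3 * l - 2) (a := d1 * 10 ^ l) (b := m2 d1 d2 l) (by omega) (by omega) (by omega)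
      (by rw [show d1 * 10 ^ l - m2 d1 d2 l = d1 - d2 by omega]; omega)
    have := (hc.sub a (ok2.resolve_left hd12)).mono (F := 7000) (by omega)
    convert this using 1
    push_cast
    rw [log_div (by positivity) hm', log_mul (by norm_num) hm', log_mul (by norm_num) hd,
      log_mul hd (by positivity), log_pow]
    ring

theorem apx_cLog_digit {d : ℕ} (h1 : 1 ≤ d) (h1' : d ≤ 9) :
    Apx 7000 (cLog (5 * d)) (log (5 * d : ℕ)) := by
  have hlog : Nat.log2 (5 * d) < 6 := (Nat.log2_lt (by omega)).2 (by omega)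
  exact (apx_cLog (m := 5 * d) (by omega)).mono (by omega)

/-! ### Scaling -/

/-- `Qs` is `2 ^ (W + 8) q / log 10` rounded down. -/
def scaleOk (W q Qs : ℕ) : Bool :=
  Nat.ble (Qs * (logTenHi + 10000)) (2 ^ (W + 808) * q) &&
    Nat.ble (2 ^ (W + 808) * q) ((Qs + 1) * logTenHi) && Nat.ble (7000 * Qs) (2 ^ 488)

theorem scaleOk_spec {W q Qs : ℕ} (h : scaleOk W q Qs = true) :
    (Qs : ℝ) ≤ 2 ^ 8 * (2 ^ W * q / log 10) ∧ 2 ^ 8 * (2 ^ W * q / log 10) ≤ Qs + 1 ∧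
      7000 * Qs ≤ 2 ^ 488 := by
  rw [scaleOk, Bool.and_eq_true, Bool.and_eq_true, Nat.ble_eq, Nat.ble_eq, Nat.ble_eq] at h
  obtain ⟨⟨h1, h2⟩, h3⟩ := h
  refine ⟨?_, ?_, h3⟩
  all_goals
    have hL : 0 < log 10 := log_pos (by norm_num)
    obtain ⟨b1, b2⟩ := logTenHi_spec
    have h1' : (Qs : ℝ) * (logTenHi + 10000) ≤ 2 ^ (W + 808) * q := by exact_mod_cast h1
    have h2' : (2 : ℝ) ^ (W + 808) * q ≤ (Qs + 1) * logTenHi := by exact_mod_cast h2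
    have e : (2 : ℝ) ^ (W + 808) = 2 ^ 8 * 2 ^ W * 2 ^ 800 := by
      rw [← pow_add, ← pow_add]; congr 1; omega
    have hy : (0 : ℝ) < 2 ^ 800 := by positivity
    have hq : (0 : ℝ) ≤ Qs := Nat.cast_nonneg _
    rw [e] at h1' h2'
    clear h1 h2 h3 e
    generalize (2 : ℝ) ^ 800 = y at *
    generalize (2 : ℝ) ^ W = w at *
    rw [← mul_div_assoc]
  · rw [le_div_iff₀ hL]
    refine le_of_mul_le_mul_right ?_ hy
    nlinarith
  · rw [div_le_iff₀ hL]
    refine le_of_mul_le_mul_right ?_ hy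
    nlinarith

/-- Passing from `2 ^ 480 a` to `2 ^ W q a / log 10`. -/
def sc (Qs A : ℕ) : ℕ := A * Qs / 2 ^ 488

theorem sc_spec {W q Qs A : ℕ} {a : ℝ} (hQ : scaleOk W q Qs = true) (hA : Apx 7000 A a)
    (h0 : 0 ≤ a) (ha : a ≤ 256) : |((sc Qs A : ℕ) : ℝ) - 2 ^ W * q / log 10 * a| ≤ 3 := by
  obtain ⟨h1, h2, h3⟩ := scaleOk_spec hQ
  have h3' : 7000 * (Qs : ℝ) ≤ 2 ^ 488 := by exact_mod_cast h3
  have d1 : sc Qs A * 2 ^ 488 ≤ A * Qs := Nat.div_mul_le_self _ _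
  have d2 : A * Qs < (sc Qs A + 1) * 2 ^ 488 := lt_div_succ_mul _ (by positivity)
  have d1' : (sc Qs A : ℝ) * 2 ^ 488 ≤ A * Qs := by exact_mod_cast d1
  have d2' : (A : ℝ) * Qs ≤ (sc Qs A + 1) * 2 ^ 488 := by exact_mod_cast d2.le
  have e : (2 : ℝ) ^ 488 = 256 * 2 ^ 480 := by
    rw [show (488 : ℕ) = 480 + 8 from rfl, pow_add, mul_comm]; congr 1; norm_num
  have hy : (0 : ℝ) < 2 ^ 480 := by positivity
  have hq : (0 : ℝ) ≤ Qs := Nat.cast_nonneg _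
  unfold Apx at hA
  generalize (sc Qs A : ℝ) = S at *
  clear h3 d1 d2
  rw [e] at h3' d1' d2'
  generalize (2 : ℝ) ^ 480 = y at *
  clear e
  set s := 2 ^ W * (q : ℝ) / log 10
  norm_num at h1 h2
  rw [abs_le] at hA ⊢
  push_cast at hA
  have k1 : (A : ℝ) * Qs - y * a * Qs ≤ 256 * y := by nlinarith
  have k2 : y * a * Qs - A * Qs ≤ 256 * y := by nlinarith
  have k3 : y * a * Qs ≤ y * a * (256 * s) := by gcongr
  have k4 : y * a * (256 * s) ≤ y * a * (Qs + 1) := by gcongr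
  have k5 : y * a ≤ y * 256 := by gcongr
  constructor
  · refine le_of_mul_le_mul_right ?_ hy
    linarith
  · refine le_of_mul_le_mul_right ?_ hy
    linarith

/-! ### Checking many candidates at once -/

/-- Conjunction of `f 0, …, f (n - 1)`. -/
def allBelow (f : ℕ → Bool) : ℕ → Bool
  | 0 => true
  | n + 1 => f n && allBelow f n

theorem allBelow_spec {f : ℕ → Bool} {n : ℕ} (h : allBelow f n = true) : ∀ i < n, f i = true := by
  induction n with
  | zero => intro i hi; omega
  | succ n ih =>
    rw [allBelow, Bool.and_eq_true] at h
    intro i hi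
    rcases Nat.lt_succ_iff_lt_or_eq.1 hi with hi | rfl
    · exact ih h.2 i hi
    · exact h.1

/-- `f n`, written so that evaluation by reduction computes the argument first. -/
def force (n : ℕ) (f : ℕ → Bool) : Bool :=
  match n with
  | 0 => f 0
  | m + 1 => f (Nat.succ m)

theorem force_eq (n : ℕ) (f : ℕ → Bool) : force n f = f n := by cases n <;> rfl

/-- The pack of `n` lanes equal to `1`. -/
def rep (w n : ℕ) : ℕ := (2 ^ (w * n) - 1) / (2 ^ w - 1)

theorem rep_eq {w : ℕ} (hw : 1 ≤ w) (n : ℕ) : rep w n = pack w (fun _ => 1) n := by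
  have h2 : 2 ^ 1 ≤ 2 ^ w := Nat.pow_le_pow_right (by norm_num) hw
  have key : pack w (fun _ => 1) n * (2 ^ w - 1) + 1 = 2 ^ (w * n) := by
    induction n with
    | zero => simp [pack]
    | succ n ih =>
      have e : 2 ^ (w * (n + 1)) = 2 ^ (w * n) * (2 ^ w - 1) + 2 ^ (w * n) := by
        rw [Nat.mul_succ, pow_add, Nat.mul_sub, mul_one, Nat.sub_add_cancel]
        exact Nat.le_mul_of_pos_right _ (by positivity)
      rw [pack, e, add_mul, one_mul, ← ih]
      ring
  rw [rep, ← key, Nat.add_sub_cancel, Nat.mul_div_cancel _ (by omega)]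

theorem pack_append (w : ℕ) (f : ℕ → ℕ) (a b : ℕ) :
    pack w f (a + b) = pack w f a + 2 ^ (w * a) * pack w (fun i => f (a + i)) b := by
  simp only [pack_eq_sum]
  rw [Finset.sum_range_add, Finset.mul_sum]
  congr 1
  refine Finset.sum_congr rfl fun i _ => ?_
  rw [mul_add, pow_add]; ring

theorem pack_chunk {w : ℕ} {f : ℕ → ℕ} {a b c : ℕ} (hf : ∀ i < a + b + c, f i < 2 ^ w) :
    pack w f (a + b + c) / 2 ^ (w * a) % 2 ^ (w * b) = pack w (fun i => f (a + i)) b := by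
  have h1 : pack w f a < 2 ^ (w * a) := pack_lt fun i hi => hf i (by omega)
  have h2 : pack w (fun i => f (a + i)) b < 2 ^ (w * b) := pack_lt fun i hi => hf _ (by omega)
  rw [add_assoc, pack_append, pack_append w (fun i => f (a + i)), Nat.add_mul_div_left _ _ (by positivity),
    Nat.div_eq_of_lt h1, zero_add, Nat.add_mul_mod_self_left, Nat.mod_eq_of_lt h2]

/-! ### The values `log β_k` -/

theorem zPow_mul_le (k : ℕ) : zPow k * 2 ^ (1 + 2 * k / 3) ≤ 2 ^ 513 := by
  obtain ⟨h1, _⟩ := zPow_spec k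
  obtain ⟨g1, g2⟩ := golden_sub_one_bounds
  have h3 : (goldenRatio - 1) ^ k * 2 ^ (2 * k / 3) ≤ 1 := by
    have h4 : ((goldenRatio - 1) ^ k * 2 ^ (2 * k / 3)) ^ 3 ≤ 1 := by
      have e : ((goldenRatio - 1) ^ k * 2 ^ (2 * k / 3)) ^ 3 =
          (goldenRatio - 1) ^ (3 * k) * 2 ^ (3 * (2 * k / 3)) := by ring
      have h5 : (2 : ℝ) ^ (3 * (2 * k / 3)) ≤ 2 ^ (2 * k) :=
        pow_le_pow_right₀ (by norm_num) (by omega)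
      have h6 : (0 : ℝ) ≤ (goldenRatio - 1) ^ (3 * k) := by
        have : 0 ≤ goldenRatio - 1 := by linarith
        positivity
      have e2 : (goldenRatio - 1) ^ (3 * k) * 2 ^ (2 * k) = ((goldenRatio - 1) ^ 3 * 4) ^ k := by
        rw [mul_pow, ← pow_mul]
        congr 1
        rw [pow_mul]; norm_num
      rw [e]
      refine (mul_le_mul_of_nonneg_left h5 h6).trans ?_
      rw [e2]
      refine pow_le_one₀ ?_ ?_
      · have : 0 ≤ goldenRatio - 1 := by linarith
        positivity
      · have : (goldenRatio - 1) ^ 3 ≤ 0.6185 ^ 3 := pow_le_pow_left₀ (by linarith) g2 3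
        norm_num at this
        linarith
    by_contra hc
    exact absurd h4 (not_le.2 (one_lt_pow₀ (not_le.1 hc) (by norm_num)))
  have h7 : (zPow k : ℝ) * 2 ^ (1 + 2 * k / 3) ≤ 2 ^ 513 := by
    rw [pow_add, pow_one]
    have e : (2 : ℝ) ^ 513 = 2 ^ 512 * 2 := pow_succ _ _
    rw [e]
    have hy : (0 : ℝ) < 2 ^ 512 := by positivity
    have ht : (0 : ℝ) < 2 ^ (2 * k / 3) := by positivity
    generalize (2 : ℝ) ^ 512 = y at *
    calc (zPow k : ℝ) * (2 * 2 ^ (2 * k / 3)) ≤ (y * (goldenRatio - 1) ^ k) * (2 * 2 ^ (2 * k / 3)) := by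
          gcongr
      _ = 2 * y * ((goldenRatio - 1) ^ k * 2 ^ (2 * k / 3)) := by ring
      _ ≤ 2 * y * 1 := by gcongr
      _ = y * 2 := by ring
  exact_mod_cast h7

/-- The `k`-th lane: `2 ^ W q log β_k / log 10` modulo `2 ^ W`, with `β_k` replaced by its limit for
`k ≥ K`. -/
def xLane (W Qs K k : ℕ) : ℕ :=
  if k < K then sc Qs (xApx (1 + 2 * k / 3) (zPow k)) % 2 ^ W else sc Qs (xApx 1 0) % 2 ^ W

/-- The lanes `k, …, k + n - 1`, given `z = zPow k`. -/
def xLanes (w W Qs : ℕ) : ℕ → ℕ → ℕ → ℕ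
  | 0, _, _ => 0
  | n + 1, k, z => sc Qs (xApx (1 + 2 * k / 3) z) % 2 ^ W +
      2 ^ w * xLanes w W Qs n (k + 1) (z * (invGoldenHi / 2 ^ 288) / 2 ^ 512)

theorem xLanes_eq (w W Qs n : ℕ) : ∀ k, xLanes w W Qs n k (zPow k) =
    pack w (fun i => sc Qs (xApx (1 + 2 * (k + i) / 3) (zPow (k + i))) % 2 ^ W) n := by
  induction n with
  | zero => intro k; rfl
  | succ n ih =>
    intro k
    have h := ih (k + 1)
    rw [zPow] at h
    rw [xLanes, h, add_comm n 1, pack_append]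
    have e : (fun i => sc Qs (xApx (1 + 2 * (k + (1 + i)) / 3) (zPow (k + (1 + i)))) % 2 ^ W) =
        fun i => sc Qs (xApx (1 + 2 * (k + 1 + i) / 3) (zPow (k + 1 + i))) % 2 ^ W := by
      funext i
      rw [← add_assoc k 1 i]
    rw [e, pack, pack, zero_add, mul_zero, pow_zero, mul_one (_ % _), add_zero k, mul_one w]

/-- All lanes `k < K`, followed by `R` copies of the limit lane. -/
def packX (w W Qs K R : ℕ) : ℕ :=
  xLanes w W Qs K 0 (2 ^ 512) + 2 ^ (w * K) * (sc Qs (xApx 1 0) % 2 ^ W * rep w R)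

theorem packX_eq {w W Qs K R : ℕ} (hw : 1 ≤ w) :
    packX w W Qs K R = pack w (xLane W Qs K) (K + R) := by
  have h := xLanes_eq w W Qs K 0
  rw [zPow] at h
  rw [packX, h, pack_append, rep_eq hw, mul_pack]
  congr 1
  · refine pack_congr fun i hi => ?_
    simp [xLane, hi]
  · congr 1
    refine pack_congr fun i hi => ?_
    simp [xLane]

theorem xLane_lt (W Qs K k : ℕ) : xLane W Qs K k < 2 ^ W := by
  unfold xLane
  split_ifs <;> exact Nat.mod_lt _ (by positivity)

/-- The quantity approximated by `xLane`. -/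
noncomputable def xVal (K k : ℕ) : ℝ := if k < K then beta k else 9 * (2 * goldenRatio - 1)

theorem xVal_bounds (K k : ℕ) : 20 ≤ xVal K k ∧ xVal K k ≤ 41 := by
  unfold xVal
  split_ifs
  · exact beta_bounds k
  · rw [two_golden_sub_one]
    obtain ⟨h1, h2⟩ := sqrt_five_bounds
    constructor <;> linarith

theorem log_mem {x : ℝ} (h1 : 1 ≤ x) (h2 : x ≤ 256) : 0 ≤ log x ∧ log x ≤ 256 :=
  ⟨log_nonneg h1, (log_le_sub_one_of_pos (by linarith)).trans (by linarith)⟩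

theorem xLane_spec {W q Qs : ℕ} (hQ : scaleOk W q Qs = true) (K k : ℕ) :
    ∃ x : ℕ, xLane W Qs K k = x % 2 ^ W ∧
      |((x : ℤ) : ℝ) - 2 ^ W * q / log 10 * log (xVal K k)| ≤ (3 : ℕ) := by
  obtain ⟨b1, b2⟩ := xVal_bounds K k
  obtain ⟨l1, l2⟩ := log_mem (x := xVal K k) (by linarith) (by linarith)
  unfold xLane
  unfold xVal at *
  split_ifs at * with h
  · exact ⟨_, rfl, by exact_mod_cast sc_spec hQ ((apx_xApx (by omega) (zPow_mul_le k)).mono (by norm_num)) l1 l2⟩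
  · exact ⟨_, rfl, by exact_mod_cast sc_spec hQ (apx_xApx_zero.mono (by norm_num)) l1 l2⟩

/-- The conclusion drawn from one lane. -/
theorem far_of_lane {W q c x y ey : ℕ} {a b : ℝ}
    (hx : |((x : ℤ) : ℝ) - 2 ^ W * q / log 10 * a| ≤ (3 : ℕ))
    (hy : |((y : ℤ) : ℝ) - 2 ^ W * q / log 10 * b| ≤ (ey : ℕ))
    (h : 2 * c ≤ (x % 2 ^ W + (2 ^ W + c - y % 2 ^ W)) % 2 ^ W) : Far W q (c - (3 + ey)) (a - b) := by
  have hlt : y % 2 ^ W < 2 ^ W := Nat.mod_lt _ (by positivity)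
  refine far_of_mod (x := x) (y := y) ?_ h hx hy
  have hsub : y % 2 ^ W ≤ 2 ^ W + c := by omega
  push_cast [hsub]
  have e1 : (x : ℤ) % 2 ^ W ≡ x [ZMOD 2 ^ W] := Int.mod_modEq _ _
  have e2 : (y : ℤ) % 2 ^ W ≡ y [ZMOD 2 ^ W] := Int.mod_modEq _ _
  have e3 : (2 : ℤ) ^ W ≡ 0 [ZMOD 2 ^ W] := by simp [Int.ModEq]
  calc (x : ℤ) % 2 ^ W + (2 ^ W + c - y % 2 ^ W) ≡ x + (0 + c - y) [ZMOD 2 ^ W] :=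
        e1.add ((e3.add_right _).sub e2)
    _ = x + c - y := by ring

/-! ### One and two blocks -/

/-- The index `k` for which `β_k / (5 M)` is a power of the golden ratio, if there is one. -/
def excK (M : ℕ) : ℕ :=
  if M = 9 then 2 else if M = 18 then 6 else if M = 45 then 10 else if M = 306 then 18
  else if M = 801 then 22 else 100000

/-- Moves the exceptional lane, if there is one, out of the forbidden interval. -/
def excShift (w W n k : ℕ) : ℕ := if k < n then 2 ^ (W - 1) * 2 ^ (w * k) else 0

theorem excShift_eq (w W n k : ℕ) :
    excShift w W n k = pack w (fun i => if i = k then 2 ^ (W - 1) else 0) n := by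
  unfold excShift
  split_ifs with h
  · rw [pack_single _ _ _ _ h]
  · rw [pack_eq_sum]
    symm
    refine Finset.sum_eq_zero fun i hi => ?_
    have := Finset.mem_range.1 hi
    rw [if_neg (by omega), zero_mul]

/-- Tests all lanes of `X` against the value `y`, with tolerance `2 ^ (t - 1)`. -/
def chkY (w W t n ones mH top X y M : ℕ) : Bool :=
  laneTest mH top (X + (2 ^ W + 2 ^ (t - 1) - y % 2 ^ W) * ones + excShift w W n (excK M))

theorem chkY_spec {W t q Qs K R y ey M : ℕ} {b : ℝ} (hQ : scaleOk W q Qs = true) (ht : 1 ≤ t)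
    (htW : t ≤ W) (hy : |((y : ℤ) : ℝ) - 2 ^ W * q / log 10 * b| ≤ (ey : ℕ))
    (h : chkY (W + 2) W t (K + R) (rep (W + 2) (K + R)) ((2 ^ W - 2 ^ t) * rep (W + 2) (K + R))
      (2 ^ W * rep (W + 2) (K + R)) (packX (W + 2) W Qs K R) y M = true) :
    ∀ k < K + R, k ≠ excK M → Far W q (2 ^ (t - 1) - (3 + ey)) (log (xVal K k) - b) := by
  rw [chkY, rep_eq (by omega), packX_eq (by omega), excShift_eq, mul_pack _ (2 ^ W + 2 ^ (t - 1) - y % 2 ^ W), pack_add, pack_add] at h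
  have ht2 : 2 ^ t = 2 * 2 ^ (t - 1) := by
    rw [← pow_succ']; congr 1; omega
  have hW2 : 2 ^ W = 2 * 2 ^ (W - 1) := by
    rw [← pow_succ']; congr 1; omega
  have htW' : 2 ^ t ≤ 2 ^ W := Nat.pow_le_pow_right (by norm_num) htW
  have h4 : 2 ^ (W + 2) = 4 * 2 ^ W := by ring
  have h1 := laneTest_spec (fun i _ => ?_) (by omega) htW h
  · intro k hk hne
    have h2 := h1 k hk
    simp only [if_neg hne, add_zero, mul_one] at h2
    obtain ⟨x, hx1, hx2⟩ := xLane_spec hQ K k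
    rw [hx1] at h2
    have := far_of_lane (c := 2 ^ (t - 1)) hx2 hy (by rw [← ht2]; exact h2)
    push_cast at this
    exact this
  · have := xLane_lt W Qs K i
    simp only [mul_one]
    split_ifs <;> omega

/-- All single digits. -/
def chkOne (W t Qs K R : ℕ) : Bool :=
  force (rep (W + 2) (K + R)) fun ones => force ((2 ^ W - 2 ^ t) * ones) fun mH =>
    force (2 ^ W * ones) fun top => force (packX (W + 2) W Qs K R) fun X =>
      allBelow (fun i => chkY (W + 2) W t (K + R) ones mH top X (sc Qs (cLog (5 * (i + 1)))) (i + 1)) 9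

/-- All pairs of distinct digits, with the first block of length at most `L`. -/
def chkTwo (W t Qs K R L : ℕ) : Bool :=
  force (rep (W + 2) (K + R)) fun ones => force ((2 ^ W - 2 ^ t) * ones) fun mH =>
    force (2 ^ W * ones) fun top => force (packX (W + 2) W Qs K R) fun X =>
      allBelow (fun l => allBelow (fun i => allBelow (fun j => Nat.beq j (i + 1) ||
        (yOk (i + 1) j (l + 1) && chkY (W + 2) W t (K + R) ones mH top X
          (sc Qs (yApx (i + 1) j (l + 1))) (m2 (i + 1) j (l + 1)))) 10) 9) L

theorem chkOne_spec {W t q Qs K R : ℕ} (hQ : scaleOk W q Qs = true) (ht : 1 ≤ t) (htW : t ≤ W)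
    (h : chkOne W t Qs K R = true) {d k : ℕ} (hd : 1 ≤ d) (hd' : d ≤ 9) (hk : k < K + R)
    (hne : k ≠ excK d) : Far W q (2 ^ (t - 1) - 6) (log (xVal K k / (5 * d : ℕ))) := by
  simp only [chkOne, force_eq] at h
  have h1 := allBelow_spec h (d - 1) (by omega)
  rw [Nat.sub_add_cancel hd] at h1
  have hdR : (1 : ℝ) ≤ (5 * d : ℕ) ∧ ((5 * d : ℕ) : ℝ) ≤ 256 := by
    constructor <;> norm_cast <;> omega
  obtain ⟨l1, l2⟩ := log_mem hdR.1 hdR.2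
  have h2 := chkY_spec hQ ht htW (ey := 3) (by exact_mod_cast sc_spec hQ (apx_cLog_digit hd hd') l1 l2)
    h1 k hk hne
  obtain ⟨b1, b2⟩ := xVal_bounds K k
  rw [log_div (by linarith) (by linarith)]
  norm_num at h2 ⊢
  exact h2

theorem log_m2_mem {d1 d2 l : ℕ} (h1 : 1 ≤ d1) (h1' : d1 ≤ 9) (h2 : d2 ≤ 9) (hl : 1 ≤ l) :
    0 ≤ log (5 * m2 d1 d2 l : ℕ) - l * log 10 ∧ log (5 * m2 d1 d2 l : ℕ) - l * log 10 ≤ 256 := by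
  obtain ⟨a1, a2, a3⟩ := m2_bounds h1 h1' h2 hl
  have hm : (0 : ℝ) < (5 * m2 d1 d2 l : ℕ) := by norm_cast; omega
  have e : log (5 * m2 d1 d2 l : ℕ) - l * log 10 = log ((5 * m2 d1 d2 l : ℕ) / (10 ^ l)) := by
    rw [log_div hm.ne' (by positivity), log_pow]
  rw [e]
  refine log_mem ?_ ?_
  · rw [le_div_iff₀ (by positivity)]
    norm_cast; omega
  · rw [div_le_iff₀ (by positivity)]
    have : 10 ^ (l + 1) = 10 * 10 ^ l := by ring
    norm_cast; omega

theorem chkTwo_spec {W t q Qs K R L : ℕ} (hQ : scaleOk W q Qs = true) (ht : 1 ≤ t) (htW : t ≤ W)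
    (h : chkTwo W t Qs K R L = true) {d1 d2 l k : ℕ} (h1 : 1 ≤ d1) (h1' : d1 ≤ 9) (h2 : d2 ≤ 9)
    (hne : d1 ≠ d2) (hl : 1 ≤ l) (hlL : l ≤ L) (hk : k < K + R) (hne' : k ≠ excK (m2 d1 d2 l)) :
    Far W q (2 ^ (t - 1) - 6) (log (xVal K k / (5 * m2 d1 d2 l : ℕ))) := by
  simp only [chkTwo, force_eq] at h
  have h3 := allBelow_spec (allBelow_spec (allBelow_spec h (l - 1) (by omega)) (d1 - 1) (by omega)) d2 (by omega)
  rw [Nat.sub_add_cancel hl, Nat.sub_add_cancel h1, Bool.or_eq_true, Bool.and_eq_true] at h3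
  rcases h3 with h3 | ⟨h3, h4⟩
  · exact absurd (Nat.eq_of_beq_eq_true h3).symm hne
  obtain ⟨l1, l2⟩ := log_m2_mem h1 h1' h2 hl
  have h5 := chkY_spec hQ ht htW (ey := 3)
    (by exact_mod_cast sc_spec hQ (apx_yApx h1 h1' h2 hl h3) l1 l2) h4 k hk hne'
  have h6 := h5.shift l
  obtain ⟨b1, b2⟩ := xVal_bounds K k
  obtain ⟨_, _, a3⟩ := m2_bounds h1 h1' h2 hl
  have hm : (0 : ℝ) < (5 * m2 d1 d2 l : ℕ) := by norm_cast; omega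
  rw [log_div (by linarith) hm.ne']
  convert h6 using 1
  · push_cast; ring
  · ring

/-! ### Three blocks -/

/-- The absolute value of `d3 - d2` in lane `j < 18`; the sign is negative for `j < 9`. -/
def digAbs (j : ℕ) : ℕ := if j < 9 then j + 1 else j - 8

/-- The `i`-th power of `digAbs j`, if the `i`-th term of the series `∑ v ^ i / i` with
`v = (d2 - d3) / (m * 10 ^ l)` has the sign prescribed by `s`, and `0` otherwise. -/
def digPow (s : Bool) (i j : ℕ) : ℕ :=
  if (decide (j < 9) || decide (i % 2 = 0)) = s then digAbs j ^ i else 0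

/-- Lane `18 l + j` holds `2 ^ P (digAbs j) ^ i / 10 ^ ((l + 1) i)`, restricted to the sign `s`. -/
def rPack (P w n2 : ℕ) (s : Bool) (i : ℕ) : ℕ :=
  pack (18 * w) (fun l => 2 ^ P / 10 ^ ((l + 1) * i)) n2 * pack w (digPow s i) 18

/-- The packs `rPack P w n2 s i, …, rPack P w n2 s (i + T - 1)`. -/
def rList (P w n2 : ℕ) (s : Bool) : ℕ → ℕ → List ℕ
  | 0, _ => []
  | T + 1, i => rPack P w n2 s i :: rList P w n2 s T (i + 1)

/-- `f (rList P w n2 s T i)`, with the entries of the list evaluated first. -/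
def withR (P w n2 : ℕ) (s : Bool) : ℕ → ℕ → (List ℕ → Bool) → Bool
  | 0, _, f => f []
  | T + 1, i, f => force (rPack P w n2 s i) fun r => withR P w n2 s T (i + 1) fun rs => f (r :: rs)

theorem withR_eq (P w n2 : ℕ) (s : Bool) (T : ℕ) : ∀ i f, withR P w n2 s T i f = f (rList P w n2 s T i) := by
  induction T with
  | zero => intro i f; rfl
  | succ T ih => intro i f; rw [withR, force_eq, ih, rList]

/-- The combination of the packs in a list with coefficients `Q / (i m ^ i)`. -/
def dot (Q m : ℕ) : ℕ → ℕ → List ℕ → ℕ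
  | _, _, [] => 0
  | i, mi, r :: rs => Q / (i * mi) * r + dot Q m (i + 1) (mi * m) rs

/-- The exceptional pairs of `k` and a lane for three blocks, indexed by `m = m2 d1 d2 l1`. -/
def excK3 (m : ℕ) : ℕ :=
  if m = 11 then 14 else if m = 12 then 14 else if m = 31 then 18 else if m = 81 then 22
  else if m = 21 then 26 else if m = 54 then 30 else if m = 55 then 30 else 100000

/-- The lane paired with `excK3 m`. -/
def excI3 (m : ℕ) : ℕ :=
  if m = 11 then 15 else if m = 12 then 2 else if m = 31 then 3 else if m = 81 then 8
  else if m = 21 then 20 else if m = 54 then 17 else if m = 55 then 0 else 0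

/-- Tests the `B` values of `k` in chunk `c` against all lanes of `G`. -/
def chkChunk (w W B n ones mH top X G eK eI c : ℕ) : Bool :=
  laneTest mH top (ones * (X / 2 ^ (w * (B * c)) % 2 ^ (w * B)) + G +
    excShift w W (n * B) (if eK / B = c then eI * B + eK % B else n * B))

/-- The correction lanes, each repeated `B` times. -/
def corrPack (w W t P Qs B ones y m : ℕ) (rp rn : List ℕ) : ℕ :=
  ((((2 ^ W * (Qs / 2 ^ (W + 8) + 2) + 2 ^ (t - 1) - y % 2 ^ W) * 2 ^ P) * ones +
    dot (Qs / 2 ^ 8) m 1 m rp - dot (Qs / 2 ^ 8) m 1 m rn) &&& ((2 ^ W - 1) * 2 ^ P) * ones) / 2 ^ P *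
      rep w B

/-- Tests all `C` chunks of values of `k` against the correction lanes belonging to one `m`. -/
def chkGroup (w W t P Qs B C n ones mH top X y m : ℕ) (rp rn : List ℕ) : Bool :=
  force (corrPack w W t P Qs B ones y m rp rn) fun G =>
    allBelow (chkChunk w W B n ones mH top X G (excK3 m) (excI3 m)) C

/-- All pairs of distinct digits with a first block of length `l`, second blocks of length at most
`n2`, and `T` terms of the logarithmic series. -/
def chkLen (w W t P Qs B C n2 T X l : ℕ) : Bool :=
  force (rep (B * w) (n2 * 18)) fun ones => force ((2 ^ W - 2 ^ t) * rep w (n2 * 18 * B)) fun mH =>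
    force (2 ^ W * rep w (n2 * 18 * B)) fun top =>
      withR P (B * w) n2 true T 1 fun rp => withR P (B * w) n2 false T 1 fun rn =>
        allBelow (fun i => allBelow (fun j => Nat.beq j (i + 1) || (yOk (i + 1) j l &&
          chkGroup w W t P Qs B C (n2 * 18) ones mH top X (sc Qs (yApx (i + 1) j l))
            (m2 (i + 1) j l) rp rn)) 10) 9

/-- The lengths `a + 1, …, a + b` of the first block. -/
def chkThree (w W t P Qs K R B C S TT a b : ℕ) : Bool :=
  force (packX w W Qs K R) fun X =>
    allBelow (fun i => chkLen w W t P Qs B C (S - (a + i + 1)) (TT / (a + i + 1)) X (a + i + 1)) b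

/-- The approximation of `2 ^ P Q v ^ i / i`, where `v = D / (m a)`. -/
def term (Q P m a D i : ℕ) : ℕ := Q / (i * m ^ i) * (2 ^ P / a ^ i * D ^ i)

theorem dot_eq (Q m P w n2 : ℕ) (s : Bool) (T : ℕ) : ∀ i, dot Q m i (m ^ i) (rList P w n2 s T i) =
    pack w (fun r => ∑ ι ∈ Finset.range T, Q / ((i + ι) * m ^ (i + ι)) *
      (2 ^ P / 10 ^ ((r / 18 + 1) * (i + ι)) * digPow s (i + ι) (r % 18))) (n2 * 18) := by
  induction T with
  | zero =>
    intro i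
    rw [rList, dot, pack_eq_sum]
    simp
  | succ T ih =>
    intro i
    rw [rList, dot, ← pow_succ, ih (i + 1), rPack, pack_mul, mul_pack, pack_add]
    refine pack_congr fun r _ => ?_
    rw [Finset.sum_range_succ', add_comm, add_zero]
    congr 1
    refine Finset.sum_congr rfl fun ι _ => ?_
    rw [show i + 1 + ι = i + (ι + 1) by ring]

theorem term_bounds {Q P m a D i : ℕ} (hm : 9 ≤ m) (ha : 10 ≤ a) (hD : D ≤ 9) (hi : 1 ≤ i)
    (hQP : Q ≤ 2 ^ P) :
    (term Q P m a D i : ℝ) ≤ 2 ^ P * (Q * ((D : ℝ) / (m * a)) ^ i / i) ∧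
      2 ^ P * (Q * ((D : ℝ) / (m * a)) ^ i / i) - 2 * 2 ^ P ≤ (term Q P m a D i : ℝ) := by
  have hmi : 0 < m ^ i := by positivity
  have hai : 0 < a ^ i := by positivity
  have a1 : Q / (i * m ^ i) * (i * m ^ i) ≤ Q := Nat.div_mul_le_self _ _
  have a2 : Q < (Q / (i * m ^ i) + 1) * (i * m ^ i) := lt_div_succ_mul _ (by positivity)
  have b1 : 2 ^ P / a ^ i * a ^ i ≤ 2 ^ P := Nat.div_mul_le_self _ _
  have b2 : 2 ^ P < (2 ^ P / a ^ i + 1) * a ^ i := lt_div_succ_mul _ hai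
  have c1 : D ^ i ≤ m ^ i := Nat.pow_le_pow_left (by omega) i
  have c2 : D ^ i ≤ a ^ i := Nat.pow_le_pow_left (by omega) i
  rw [term]
  have e : (2 : ℝ) ^ P * (Q * ((D : ℝ) / (m * a)) ^ i / i) =
      (Q / ((i : ℝ) * (m : ℝ) ^ i)) * ((2 : ℝ) ^ P / (a : ℝ) ^ i * (D : ℝ) ^ i) := by
    rw [div_pow, mul_pow]; field_simp
  rw [e]
  generalize Q / (i * m ^ i) = s at *
  generalize 2 ^ P / a ^ i = r at *
  have hiR : (1 : ℝ) ≤ i := by exact_mod_cast hi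
  have hmR : (0 : ℝ) < (m : ℝ) ^ i := by exact_mod_cast hmi
  have haR : (0 : ℝ) < (a : ℝ) ^ i := by exact_mod_cast hai
  have a1' : (s : ℝ) ≤ Q / ((i : ℝ) * (m : ℝ) ^ i) := by
    rw [le_div_iff₀ (by positivity)]; exact_mod_cast a1
  have a2' : (Q : ℝ) / ((i : ℝ) * (m : ℝ) ^ i) ≤ s + 1 := by
    rw [div_le_iff₀ (by positivity)]; exact_mod_cast a2.le
  have b1' : (r : ℝ) ≤ 2 ^ P / (a : ℝ) ^ i := by
    rw [le_div_iff₀ haR]; exact_mod_cast b1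
  have b2' : (2 : ℝ) ^ P / (a : ℝ) ^ i ≤ r + 1 := by
    rw [div_le_iff₀ haR]; exact_mod_cast b2.le
  have c1' : (D : ℝ) ^ i ≤ (m : ℝ) ^ i := by exact_mod_cast c1
  have c2' : (D : ℝ) ^ i ≤ (a : ℝ) ^ i := by exact_mod_cast c2
  have hQP' : (Q : ℝ) ≤ 2 ^ P := by exact_mod_cast hQP
  have d0 : (0 : ℝ) ≤ (D : ℝ) ^ i := by positivity
  push_cast
  refine ⟨by gcongr, ?_⟩
  have f1 : (2 : ℝ) ^ P / (a : ℝ) ^ i * (D : ℝ) ^ i ≤ 2 ^ P := by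
    rw [div_mul_eq_mul_div, div_le_iff₀ haR]
    exact mul_le_mul_of_nonneg_left c2' (by positivity)
  have f2 : Q / ((i : ℝ) * (m : ℝ) ^ i) * (D : ℝ) ^ i ≤ 2 ^ P := by
    refine le_trans ?_ hQP'
    rw [div_mul_eq_mul_div, div_le_iff₀ (by positivity)]
    refine mul_le_mul_of_nonneg_left ?_ (by positivity)
    nlinarith
  set u := (Q : ℝ) / ((i : ℝ) * (m : ℝ) ^ i)
  set v := (2 : ℝ) ^ P / (a : ℝ) ^ i
  have hs : (0 : ℝ) ≤ s := Nat.cast_nonneg _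
  have hv : 0 ≤ v := by positivity
  have g1 : (u - s) * (v * (D : ℝ) ^ i) ≤ 1 * 2 ^ P :=
    mul_le_mul (by linarith) f1 (by positivity) (by norm_num)
  have g2 : s * (D : ℝ) ^ i * (v - r) ≤ u * (D : ℝ) ^ i * 1 :=
    mul_le_mul (by gcongr) (by linarith) (by linarith) (by positivity)
  nlinarith

/-- The signed sum of the terms approximates `- 2 ^ P σ log (1 - u)`. -/
theorem signed_sum {Q P m a D T : ℕ} {σ : ℝ} {b : Bool} (hm : 9 ≤ m) (ha : 10 ≤ a) (hD : D ≤ 9)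
    (hQP : Q ≤ 2 ^ P) (hσ1 : Q ≤ σ) (hσ2 : σ ≤ Q + 2) {u : ℝ}
    (hu : u = if b then (D : ℝ) / (m * a) else -((D : ℝ) / (m * a)))
    (hT : σ * ((D : ℝ) / (m * a)) ^ (T + 1) ≤ 1) :
    (∑ ι ∈ Finset.range T, if b || decide ((1 + ι) % 2 = 0) then term Q P m a D (1 + ι) else 0 : ℕ) ≤ Q * 2 ^ P ∧
    (∑ ι ∈ Finset.range T, if b || decide ((1 + ι) % 2 = 0) then 0 else term Q P m a D (1 + ι) : ℕ) ≤ Q * 2 ^ P ∧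
    |((∑ ι ∈ Finset.range T, if b || decide ((1 + ι) % 2 = 0) then term Q P m a D (1 + ι) else 0 : ℕ) : ℝ) -
      ((∑ ι ∈ Finset.range T, if b || decide ((1 + ι) % 2 = 0) then 0 else term Q P m a D (1 + ι) : ℕ) : ℝ) +
      2 ^ P * (σ * log (1 - u))| ≤ 2 ^ P * (4 * T + 2) := by
  set v : ℝ := (D : ℝ) / (m * a) with hv
  have hmR : (9 : ℝ) ≤ m := by exact_mod_cast hm
  have haR : (10 : ℝ) ≤ a := by exact_mod_cast ha
  have hDR : (D : ℝ) ≤ 9 := by exact_mod_cast hD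
  have hv0 : 0 ≤ v := by positivity
  have hv1 : v ≤ 1 / 10 := by
    rw [hv, div_le_div_iff₀ (by positivity) (by norm_num)]
    nlinarith
  have hQ0 : (0 : ℝ) ≤ Q := Nat.cast_nonneg _
  have hgeo : ∀ T : ℕ, ∑ ι ∈ Finset.range T, v ^ (1 + ι) ≤ 1 - v ^ T := by
    intro T
    induction T with
    | zero => simp
    | succ T ih =>
      rw [Finset.sum_range_succ, add_comm 1 T, pow_succ]
      have : 0 ≤ v ^ T := by positivity
      nlinarith
  have hsum : (∑ ι ∈ Finset.range T, term Q P m a D (1 + ι) : ℕ) ≤ Q * 2 ^ P := by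
    have : ((∑ ι ∈ Finset.range T, term Q P m a D (1 + ι) : ℕ) : ℝ) ≤ Q * 2 ^ P := by
      push_cast
      calc ∑ ι ∈ Finset.range T, (term Q P m a D (1 + ι) : ℝ)
          ≤ ∑ ι ∈ Finset.range T, 2 ^ P * Q * v ^ (1 + ι) := by
            refine Finset.sum_le_sum fun ι _ => ?_
            refine (term_bounds hm ha hD (by omega) hQP).1.trans ?_
            rw [mul_assoc]
            refine mul_le_mul_of_nonneg_left ?_ (by positivity)
            refine div_le_self (by positivity) ?_
            push_cast; linarith [(Nat.cast_nonneg ι : (0 : ℝ) ≤ ι)]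
        _ = 2 ^ P * Q * ∑ ι ∈ Finset.range T, v ^ (1 + ι) := by rw [Finset.mul_sum]
        _ ≤ 2 ^ P * Q * 1 := by
            refine mul_le_mul_of_nonneg_left ((hgeo T).trans ?_) (by positivity)
            have : 0 ≤ v ^ T := by positivity
            linarith
        _ = Q * 2 ^ P := by ring
    exact_mod_cast this
  refine ⟨le_trans (Finset.sum_le_sum fun ι _ => ?_) hsum,
    le_trans (Finset.sum_le_sum fun ι _ => ?_) hsum, ?_⟩
  · split_ifs <;> simp
  · split_ifs <;> simp
  have habs : |u| = v := by
    rw [hu]; split_ifs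
    · exact abs_of_nonneg hv0
    · rw [abs_neg, abs_of_nonneg hv0]
  have hlog := Real.abs_log_sub_add_sum_range_le (x := u) (by rw [habs]; linarith) T
  rw [habs] at hlog
  have hterm : ∀ ι : ℕ, |((if b || decide ((1 + ι) % 2 = 0) then term Q P m a D (1 + ι) else 0 : ℕ) : ℝ) -
      ((if b || decide ((1 + ι) % 2 = 0) then 0 else term Q P m a D (1 + ι) : ℕ) : ℝ) -
      2 ^ P * (σ * (u ^ (ι + 1) / (ι + 1)))| ≤ 2 ^ P * 4 := by
    intro ι
    obtain ⟨t1, t2⟩ := term_bounds (Q := Q) (P := P) (i := 1 + ι) hm ha hD (by omega) hQP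
    have hw0 : 0 ≤ v ^ (1 + ι) / ((1 + ι : ℕ) : ℝ) := by positivity
    have hw1 : v ^ (1 + ι) / ((1 + ι : ℕ) : ℝ) ≤ 1 := by
      refine div_le_one_of_le₀ ((pow_le_one₀ hv0 (by linarith)).trans ?_) (by positivity)
      push_cast; linarith [(Nat.cast_nonneg ι : (0 : ℝ) ≤ ι)]
    have hpow : u ^ (ι + 1) / (ι + 1) = (if b || decide ((1 + ι) % 2 = 0) then 1 else -1 : ℝ) *
        (v ^ (1 + ι) / ((1 + ι : ℕ) : ℝ)) := by
      rw [hu, add_comm ι 1]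
      push_cast
      rw [add_comm (ι : ℝ) 1]
      cases b
      · by_cases hp : (1 + ι) % 2 = 0
        · simp [hp, (Nat.even_iff.2 hp).neg_pow]
        · simp [hp, (Nat.odd_iff.2 (by omega : (1 + ι) % 2 = 1)).neg_pow, neg_div]
      · simp
    rw [hpow]
    rw [mul_div_assoc] at t1 t2
    generalize v ^ (1 + ι) / ((1 + ι : ℕ) : ℝ) = x at *
    have hP : (0 : ℝ) < 2 ^ P := by positivity
    generalize (2 : ℝ) ^ P = y at *
    have e1 : y * (Q * x) ≤ y * (σ * x) := by gcongr
    have e2 : y * (σ * x) ≤ y * ((Q + 2) * x) := by gcongr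
    have e3 : y * x ≤ y * 1 := by gcongr
    split_ifs <;> rw [abs_le] <;> constructor <;> push_cast <;> linarith
  have hmain : |((∑ ι ∈ Finset.range T, if b || decide ((1 + ι) % 2 = 0) then term Q P m a D (1 + ι) else 0 : ℕ) : ℝ) -
      ((∑ ι ∈ Finset.range T, if b || decide ((1 + ι) % 2 = 0) then 0 else term Q P m a D (1 + ι) : ℕ) : ℝ) -
      2 ^ P * (σ * ∑ ι ∈ Finset.range T, u ^ (ι + 1) / (ι + 1))| ≤ T * (2 ^ P * 4) := by
    push_cast
    rw [Finset.mul_sum, Finset.mul_sum, ← Finset.sum_sub_distrib, ← Finset.sum_sub_distrib]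
    refine (Finset.abs_sum_le_sum_abs _ _).trans ?_
    refine (Finset.sum_le_sum (g := fun _ => 2 ^ P * 4) fun ι _ => ?_).trans (by simp)
    have := hterm ι
    push_cast at this
    exact this
  have htail : |2 ^ P * (σ * (∑ ι ∈ Finset.range T, u ^ (ι + 1) / (ι + 1) + log (1 - u)))| ≤ 2 ^ P * 2 := by
    rw [abs_mul, abs_mul, abs_of_pos (by positivity : (0 : ℝ) < 2 ^ P), abs_of_nonneg (hQ0.trans hσ1)]
    refine mul_le_mul_of_nonneg_left ?_ (by positivity)
    calc σ * |∑ ι ∈ Finset.range T, u ^ (ι + 1) / (ι + 1) + log (1 - u)|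
        ≤ σ * (v ^ (T + 1) / (1 - v)) := mul_le_mul_of_nonneg_left hlog (hQ0.trans hσ1)
      _ = (σ * v ^ (T + 1)) / (1 - v) := by ring
      _ ≤ 1 / (1 - v) := by gcongr; linarith
      _ ≤ 2 := by rw [div_le_iff₀ (by linarith)]; linarith
  calc _ = |((((∑ ι ∈ Finset.range T, if b || decide ((1 + ι) % 2 = 0) then term Q P m a D (1 + ι) else 0 : ℕ) : ℝ) -
      ((∑ ι ∈ Finset.range T, if b || decide ((1 + ι) % 2 = 0) then 0 else term Q P m a D (1 + ι) : ℕ) : ℝ) -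
      2 ^ P * (σ * ∑ ι ∈ Finset.range T, u ^ (ι + 1) / (ι + 1)))) +
      2 ^ P * (σ * (∑ ι ∈ Finset.range T, u ^ (ι + 1) / (ι + 1) + log (1 - u)))| := by
        congr 1; ring
    _ ≤ _ := abs_add_le _ _
    _ ≤ T * (2 ^ P * 4) + 2 ^ P * 2 := add_le_add hmain htail
    _ = 2 ^ P * (4 * T + 2) := by ring

theorem pack_sub {w n : ℕ} {f g : ℕ → ℕ} (h : ∀ i < n, g i ≤ f i) :
    pack w f n - pack w g n = pack w (fun i => f i - g i) n := by
  have : pack w (fun i => f i - g i) n + pack w g n = pack w f n := by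
    rw [pack_add]
    exact pack_congr fun i hi => Nat.sub_add_cancel (h i hi)
  omega

/-- The size conditions on the parameters of `chkThree`. -/
def threeOk (w W t P Qs B TT : ℕ) : Bool :=
  Nat.ble ((2 ^ W * (Qs / 2 ^ (W + 8) + 2) + 2 ^ (t - 1) + Qs / 2 ^ 8) * 2 ^ P + 1) (2 ^ (B * w)) &&
    Nat.ble (P + W) (B * w) && Nat.ble (Qs / 2 ^ 8) (2 ^ P) && Nat.ble (W + 2) w &&
    Nat.ble (Qs / 2 ^ 8 + 2) (10 ^ TT) && Nat.ble 1 t && Nat.ble t W && Nat.ble 1 B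

theorem threeOk_spec {w W t P Qs B TT : ℕ} (h : threeOk w W t P Qs B TT = true) :
    (2 ^ W * (Qs / 2 ^ (W + 8) + 2) + 2 ^ (t - 1) + Qs / 2 ^ 8) * 2 ^ P < 2 ^ (B * w) ∧
    P + W ≤ B * w ∧ Qs / 2 ^ 8 ≤ 2 ^ P ∧ W + 2 ≤ w ∧ Qs / 2 ^ 8 + 2 ≤ 10 ^ TT ∧ 1 ≤ t ∧ t ≤ W ∧ 1 ≤ B := by
  simp only [threeOk, Bool.and_eq_true, Nat.ble_eq] at h
  obtain ⟨⟨⟨⟨⟨⟨⟨h1, h2⟩, h3⟩, h4⟩, h5⟩, h6⟩, h7⟩, h8⟩ := h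
  exact ⟨h1, h2, h3, h4, h5, h6, h7, h8⟩

/-- The number `v = (d2 - d3) / (m * 10 ^ l2)` belonging to lane `i = 18 (l2 - 1) + j`; for `m = m2` the
ratio `m3 / (m2 * 10 ^ l2)` is `1 - v`. -/
noncomputable def laneU (m i : ℕ) : ℝ :=
  if decide (i % 18 < 9) then (digAbs (i % 18) : ℝ) / (m * (10 ^ (i / 18 + 1) : ℕ))
  else -((digAbs (i % 18) : ℝ) / (m * (10 ^ (i / 18 + 1) : ℕ)))

theorem digAbs_le (i : ℕ) : digAbs (i % 18) ≤ 9 := by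
  unfold digAbs; split_ifs <;> omega

theorem digPow_true (Q P m i r : ℕ) : Q / (i * m ^ i) * (2 ^ P / 10 ^ ((r / 18 + 1) * i) * digPow true i (r % 18)) =
    if decide (r % 18 < 9) || decide (i % 2 = 0) then term Q P m (10 ^ (r / 18 + 1)) (digAbs (r % 18)) i else 0 := by
  rw [digPow, term, pow_mul]
  split_ifs <;> simp

theorem digPow_false (Q P m i r : ℕ) : Q / (i * m ^ i) * (2 ^ P / 10 ^ ((r / 18 + 1) * i) * digPow false i (r % 18)) =
    if decide (r % 18 < 9) || decide (i % 2 = 0) then 0 else term Q P m (10 ^ (r / 18 + 1)) (digAbs (r % 18)) i := by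
  rw [digPow, term, pow_mul]
  split_ifs <;> simp_all

theorem corrPack_spec {w W t P q Qs B TT n2 T y m : ℕ} {b : ℝ} (hQ : scaleOk W q Qs = true)
    (hok : threeOk w W t P Qs B TT = true) (hm : 9 ≤ m)
    (hy : |((y : ℤ) : ℝ) - 2 ^ W * q / log 10 * b| ≤ (3 : ℕ))
    (hT : ∀ i, 2 ^ W * q / log 10 * ((digAbs (i % 18) : ℝ) / (m * (10 ^ (i / 18 + 1) : ℕ))) ^ (T + 1) ≤ 1) :
    ∃ f : ℕ → ℕ, corrPack w W t P Qs B (rep (B * w) (n2 * 18)) y m (rList P (B * w) n2 true T 1)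
        (rList P (B * w) n2 false T 1) = pack w (fun r => f (r / B)) (n2 * 18 * B) ∧
      ∀ i, f i < 2 ^ W ∧ ∃ y' : ℤ, ((f i : ℕ) : ℤ) ≡ (2 ^ (t - 1) : ℕ) - y' [ZMOD 2 ^ W] ∧
        |(y' : ℝ) - 2 ^ W * q / log 10 * (b + log (1 - laneU m i))| ≤ (4 * T + 6 : ℕ) := by
  obtain ⟨o1, o2, o3, o4, o5, o6, o7, o8⟩ := threeOk_spec hok
  obtain ⟨s1, s2, s3⟩ := scaleOk_spec hQ
  clear s3
  set σ : ℝ := 2 ^ W * q / log 10 with hσ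
  have hdiv : 2 ^ 8 * (Qs / 2 ^ 8) ≤ Qs ∧ Qs < 2 ^ 8 * (Qs / 2 ^ 8) + 256 := by omega
  have hdd : Qs / 2 ^ (W + 8) = Qs / 2 ^ 8 / 2 ^ W := by
    rw [Nat.div_div_eq_div_mul, ← pow_add, add_comm]
  set Q := Qs / 2 ^ 8 with hQdef
  have hσ1 : (Q : ℝ) ≤ σ := by
    have : (2 ^ 8 : ℝ) * Q ≤ Qs := by exact_mod_cast hdiv.1
    linarith
  have hσ2 : σ ≤ Q + 2 := by
    have : (Qs : ℝ) + 1 ≤ 2 ^ 8 * Q + 256 := by exact_mod_cast hdiv.2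
    linarith
  have hB : 1 ≤ B * w := Nat.mul_pos o8 (by omega)
  have hQH : Q + 2 ^ W ≤ 2 ^ W * (Qs / 2 ^ (W + 8) + 2) := by
    have := lt_div_succ_mul Q (b := 2 ^ W) (by positivity)
    rw [hdd, mul_comm, Nat.add_mul]
    rw [Nat.add_mul] at this
    omega
  have hyW : y % 2 ^ W < 2 ^ W := Nat.mod_lt _ (by positivity)
  set H := Qs / 2 ^ (W + 8) + 2 with hH
  set c := 2 ^ (t - 1) with hc
  set A := 2 ^ W * H + c - y % 2 ^ W with hA
  have hAe : A + y % 2 ^ W = 2 ^ W * H + c :=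
    Nat.sub_add_cancel (hyW.le.trans ((Nat.le_add_left _ _).trans (hQH.trans (Nat.le_add_right _ _))))
  have hAQ' : Q ≤ A := by
    have hcpos : 0 < c := by positivity
    clear_value A c
    omega
  have hAH : A + Q ≤ 2 ^ W * H + c + Q := by
    clear_value A c
    omega
  have hss : ∀ i, _ := fun i => signed_sum (Q := Q) (P := P) (T := T) (b := decide (i % 18 < 9)) (σ := σ)
    (u := laneU m i) hm (a := 10 ^ (i / 18 + 1)) (by rw [pow_succ]; have := Nat.one_le_pow (i / 18) 10 (by norm_num); omega)
    (digAbs_le i) o3 hσ1 hσ2 rfl (hT i)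
  have hAQ : Q * 2 ^ P ≤ A * 2 ^ P := Nat.mul_le_mul_right _ hAQ'
  set Sp : ℕ → ℕ := fun i => ∑ ι ∈ Finset.range T, if decide (i % 18 < 9) || decide ((1 + ι) % 2 = 0) then
    term Q P m (10 ^ (i / 18 + 1)) (digAbs (i % 18)) (1 + ι) else 0 with hSp
  set Sn : ℕ → ℕ := fun i => ∑ ι ∈ Finset.range T, if decide (i % 18 < 9) || decide ((1 + ι) % 2 = 0) then 0 else
    term Q P m (10 ^ (i / 18 + 1)) (digAbs (i % 18)) (1 + ι) with hSn
  have hSpe : ∀ i, (∑ ι ∈ Finset.range T, if decide (i % 18 < 9) || decide ((1 + ι) % 2 = 0) then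
    term Q P m (10 ^ (i / 18 + 1)) (digAbs (i % 18)) (1 + ι) else 0) = Sp i := fun i => rfl
  have hSne : ∀ i, (∑ ι ∈ Finset.range T, if decide (i % 18 < 9) || decide ((1 + ι) % 2 = 0) then 0 else
    term Q P m (10 ^ (i / 18 + 1)) (digAbs (i % 18)) (1 + ι)) = Sn i := fun i => rfl
  have hSp1 : ∀ i, Sp i ≤ Q * 2 ^ P := fun i => (hss i).1
  have hSn1 : ∀ i, Sn i ≤ Q * 2 ^ P := fun i => (hss i).2.1
  have hS : ∀ i, |(Sp i : ℝ) - (Sn i : ℝ) + 2 ^ P * (σ * log (1 - laneU m i))| ≤ 2 ^ P * (4 * T + 2) :=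
    fun i => (hss i).2.2
  clear_value Sp Sn
  have hlt : ∀ i, A * 2 ^ P + Sp i - Sn i < 2 ^ (B * w) := by
    intro i
    have h1 : (A + Q) * 2 ^ P ≤ (2 ^ W * H + c + Q) * 2 ^ P := Nat.mul_le_mul_right _ hAH
    have h2 := hSp1 i
    rw [Nat.add_mul] at h1
    clear_value A
    omega
  refine ⟨fun i => (A * 2 ^ P + Sp i - Sn i) / 2 ^ P % 2 ^ W, ?_, fun i => ⟨Nat.mod_lt _ (by positivity), ?_⟩⟩
  · have d1 : dot Q m 1 m (rList P (B * w) n2 true T 1) = pack (B * w) Sp (n2 * 18) := by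
      have := dot_eq Q m P (B * w) n2 true T 1
      rw [pow_one] at this
      rw [this]
      exact pack_congr fun r _ => (Finset.sum_congr rfl fun ι _ => digPow_true Q P m (1 + ι) r).trans (hSpe r)
    have d2 : dot Q m 1 m (rList P (B * w) n2 false T 1) = pack (B * w) Sn (n2 * 18) := by
      have := dot_eq Q m P (B * w) n2 false T 1
      rw [pow_one] at this
      rw [this]
      exact pack_congr fun r _ => (Finset.sum_congr rfl fun ι _ => digPow_false Q P m (1 + ι) r).trans (hSne r)
    have e : corrPack w W t P Qs B (rep (B * w) (n2 * 18)) y m (rList P (B * w) n2 true T 1)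
        (rList P (B * w) n2 false T 1) = ((A * 2 ^ P) * rep (B * w) (n2 * 18) +
        dot Q m 1 m (rList P (B * w) n2 true T 1) - dot Q m 1 m (rList P (B * w) n2 false T 1) &&&
        ((2 ^ W - 1) * 2 ^ P) * rep (B * w) (n2 * 18)) / 2 ^ P * rep w B := rfl
    rw [e, d1, d2, rep_eq hB, mul_pack _ (A * 2 ^ P), pack_add, pack_sub (fun i _ => ?_), land_pack_div (fun i _ => ?_) o2,
      rep_eq (by omega), pack_mul]
    · simp only [mul_one]
    · have := hlt i; rwa [mul_one]
    · rw [mul_one]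
      exact (hSn1 i).trans (hAQ.trans (Nat.le_add_right _ _))
  · refine ⟨(y : ℤ) - (y % 2 ^ W : ℕ) + 2 ^ W * H + c - ((A * 2 ^ P + Sp i - Sn i) / 2 ^ P : ℕ), ?_, ?_⟩
    · set V := (A * 2 ^ P + Sp i - Sn i) / 2 ^ P
      have e1 : ((V % 2 ^ W : ℕ) : ℤ) ≡ V [ZMOD 2 ^ W] := by push_cast; exact Int.mod_modEq _ _
      refine e1.trans (Int.modEq_iff_dvd.2 ⟨-((y / 2 ^ W : ℕ) : ℤ) - H, ?_⟩)
      have e2 : ((2 ^ W * (y / 2 ^ W) + y % 2 ^ W : ℕ) : ℤ) = y := by exact_mod_cast Nat.div_add_mod y (2 ^ W)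
      push_cast at e2 ⊢
      linear_combination e2
    · have hZ : Sn i ≤ A * 2 ^ P + Sp i := (hSn1 i).trans (hAQ.trans (Nat.le_add_right _ _))
      have v1 : (A * 2 ^ P + Sp i - Sn i) / 2 ^ P * 2 ^ P ≤ A * 2 ^ P + Sp i - Sn i := Nat.div_mul_le_self _ _
      have v2 : A * 2 ^ P + Sp i - Sn i < ((A * 2 ^ P + Sp i - Sn i) / 2 ^ P + 1) * 2 ^ P :=
        lt_div_succ_mul _ (by positivity)
      have v3 := hAe
      generalize (A * 2 ^ P + Sp i - Sn i) / 2 ^ P = V at *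
      have v1' : (V : ℝ) * 2 ^ P + Sn i ≤ A * 2 ^ P + Sp i := by
        have : V * 2 ^ P + Sn i ≤ A * 2 ^ P + Sp i := by omega
        exact_mod_cast this
      have v2' : (A : ℝ) * 2 ^ P + Sp i ≤ (V + 1) * 2 ^ P + Sn i := by
        have : A * 2 ^ P + Sp i ≤ (V + 1) * 2 ^ P + Sn i := by omega
        exact_mod_cast this
      have v3' : (A : ℝ) + (y % 2 ^ W : ℕ) = 2 ^ W * H + c := by exact_mod_cast v3
      have hS' := hS i
      have hP : (0 : ℝ) < 2 ^ P := by positivity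
      have eY : (((y : ℤ) - (y % 2 ^ W : ℕ) + 2 ^ W * H + c - (V : ℕ) : ℤ) : ℝ) = ((y : ℤ) : ℝ) + (A - V) := by
        rw [Int.cast_sub, Int.cast_add, Int.cast_add, Int.cast_sub, Int.cast_natCast (y % 2 ^ W),
          Int.cast_natCast V, Int.cast_natCast c, Int.cast_mul, Int.cast_natCast H, Int.cast_pow, Int.cast_ofNat]
        linarith
      rw [eY]
      rw [abs_le] at hS' hy ⊢
      push_cast at hy ⊢
      generalize (2 : ℝ) ^ P = z at *
      generalize log (1 - laneU m i) = L at *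
      generalize (Sp i : ℝ) = sp at *
      generalize (Sn i : ℝ) = sn at *
      clear_value σ A
      rw [mul_add]
      generalize σ * L = r1 at *
      generalize σ * b = r2 at *
      have u1 : -(4 * (T : ℝ) + 2) ≤ A - V - r1 := by
        refine le_of_mul_le_mul_right ?_ hP
        linarith [hS'.2]
      have u2 : (A : ℝ) - V - r1 ≤ 4 * (T : ℝ) + 3 := by
        refine le_of_mul_le_mul_right ?_ hP
        linarith [hS'.1]
      constructor
      · linarith [hy.1]
      · linarith [hy.2]

theorem Far.mono {W q : ℕ} {c c' θ : ℝ} (h : Far W q c θ) (hc : c' ≤ c) : Far W q c' θ :=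
  fun j => hc.trans (h j)

/-- What a successful `chkGroup` says about one lane. -/
theorem chkGroup_spec {w W t q Qs K R B C n : ℕ} {G m : ℕ} {f : ℕ → ℕ} {v : ℕ → ℝ} {E : ℕ}

    (hQ : scaleOk W q Qs = true) (ht : 1 ≤ t) (htW : t ≤ W) (hw : W + 2 ≤ w) (hB : 1 ≤ B)
    (hKR : K + R = B * C) (hG : G = pack w (fun r => f (r / B)) (n * B)) (hf : ∀ i, f i < 2 ^ W)
    (hfy : ∀ i, ∃ y' : ℤ, ((f i : ℕ) : ℤ) ≡ (2 ^ (t - 1) : ℕ) - y' [ZMOD 2 ^ W] ∧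
        |(y' : ℝ) - 2 ^ W * q / log 10 * v i| ≤ (E : ℕ))
    (h : allBelow (chkChunk w W B n (rep (B * w) n) ((2 ^ W - 2 ^ t) * rep w (n * B))
      (2 ^ W * rep w (n * B)) (packX w W Qs K R) G (excK3 m) (excI3 m)) C = true)
    {i k : ℕ} (hi : i < n) (hk : k < K + R) (hne : k ≠ excK3 m ∨ i ≠ excI3 m) :
    Far W q (2 ^ (t - 1) - (3 + E)) (log (xVal K k) - v i) := by
  have hkC : k / B < C := by
    rw [Nat.div_lt_iff_lt_mul (by omega), mul_comm]; omega
  have h1 := allBelow_spec h (k / B) hkC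
  have hpw : 2 ^ W * 4 ≤ 2 ^ w := by
    calc 2 ^ W * 4 = 2 ^ (W + 2) := by ring
      _ ≤ 2 ^ w := Nat.pow_le_pow_right (by norm_num) hw
  have hsplit : K + R = B * (k / B) + B + B * (C - k / B - 1) := by
    rw [hKR]
    obtain ⟨s, hs⟩ : ∃ s, C = k / B + 1 + s := ⟨C - k / B - 1, by omega⟩
    rw [show C - k / B - 1 = s by omega]
    rw [hs]; ring_nf
  have hX : packX w W Qs K R / 2 ^ (w * (B * (k / B))) % 2 ^ (w * B) =
      pack w (fun j => xLane W Qs K (B * (k / B) + j)) B := by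
    rw [packX_eq (by omega), hsplit]
    refine pack_chunk fun j _ => ?_
    have := xLane_lt W Qs K j
    omega
  have hkB : k % B < B := Nat.mod_lt _ (by omega)
  have hBw : 1 ≤ B * w := Nat.mul_pos hB (by omega)
  rw [chkChunk, hX, hG, excShift_eq, rep_eq hBw, pack_mul, pack_add, pack_add, rep_eq (by omega)] at h1
  have ht2 : 2 ^ t = 2 * 2 ^ (t - 1) := by
    rw [← pow_succ']; congr 1; omega
  have hW2 : 2 ^ W = 2 * 2 ^ (W - 1) := by
    rw [← pow_succ']; congr 1; omega
  have h2 := laneTest_spec (fun r _ => ?_) (by omega) htW h1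
  · have hr : i * B + k % B < n * B := by
      calc i * B + k % B < i * B + B := by omega
        _ = (i + 1) * B := by ring
        _ ≤ n * B := Nat.mul_le_mul_right _ hi
    have h3 := h2 (i * B + k % B) hr
    have d1 : (i * B + k % B) / B = i := by
      rw [mul_comm, Nat.mul_add_div (by omega), Nat.div_eq_of_lt hkB, add_zero]
    have d2 : (i * B + k % B) % B = k % B := by
      rw [mul_comm, Nat.mul_add_mod, Nat.mod_mod]
    have d3 : ¬ (i * B + k % B = if excK3 m / B = k / B then excI3 m * B + excK3 m % B else n * B) := by
      split_ifs with he
      · intro heq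
        have hlt : excK3 m % B < B := Nat.mod_lt _ (by omega)
        have e1 : i = excI3 m := by
          have := congrArg (· / B) heq
          simp only [d1] at this
          rw [this, mul_comm, Nat.mul_add_div (by omega), Nat.div_eq_of_lt hlt, add_zero]
        have e2 : k % B = excK3 m % B := by
          rw [e1] at heq; omega
        have e3 : k = excK3 m := by
          rw [← Nat.div_add_mod k B, ← he, e2, Nat.div_add_mod]
        rcases hne with h | h
        · exact h e3
        · exact h e1
      · omega
    simp only [d1, d2, if_neg d3, add_zero, one_mul, Nat.div_add_mod] at h3
    obtain ⟨x, hx1, hx2⟩ := xLane_spec hQ K k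
    obtain ⟨y', hy1, hy2⟩ := hfy i
    have h4 := far_of_mod (W := W) (q := q) (c := 2 ^ (t - 1)) (z := xLane W Qs K k + f i) (x := (x : ℤ))
      (y := y') ?_ (by rw [← ht2]; exact h3) hx2 hy2
    · push_cast at h4
      exact h4
    · rw [hx1]
      have e1 : (x : ℤ) % 2 ^ W ≡ x [ZMOD 2 ^ W] := Int.mod_modEq _ _
      have := e1.add hy1
      push_cast at this ⊢
      rw [add_sub_assoc]
      exact this
  · have := xLane_lt W Qs K (B * (k / B) + r % B)
    have h5 := hf (r / B)
    split_ifs <;> omega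

/-- The lane of a second block of length `l2` followed by the digit `d3`. -/
def laneI (d2 d3 l2 : ℕ) : ℕ := 18 * (l2 - 1) + if d3 < d2 then d2 - d3 - 1 else d3 - d2 + 8

theorem one_sub_laneU {d1 d2 d3 l1 l2 : ℕ} (h1 : 1 ≤ d1) (h1' : d1 ≤ 9) (h2 : d2 ≤ 9) (h3 : d3 ≤ 9)
    (hl1 : 1 ≤ l1) (hl2 : 1 ≤ l2) (hne : d2 ≠ d3) :
    (m3 d1 d2 d3 l1 l2 : ℝ) = m2 d1 d2 l1 * 10 ^ l2 * (1 - laneU (m2 d1 d2 l1) (laneI d2 d3 l2)) := by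
  have e := @m3_add d1 d2 d3 l1 l2 h1 h1' h2 hl1
  obtain ⟨_, _, hm⟩ := m2_bounds h1 h1' h2 hl1
  have eR : (m3 d1 d2 d3 l1 l2 : ℝ) + d2 = m2 d1 d2 l1 * 10 ^ l2 + d3 := by exact_mod_cast e
  have hmR : (0 : ℝ) < m2 d1 d2 l1 := by exact_mod_cast (by omega : 0 < m2 d1 d2 l1)
  unfold laneI laneU digAbs
  rcases Nat.lt_or_ge d3 d2 with h | h
  · rw [if_pos h]
    have a1 : (18 * (l2 - 1) + (d2 - d3 - 1)) % 18 = d2 - d3 - 1 := by omega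
    have a2 : (18 * (l2 - 1) + (d2 - d3 - 1)) / 18 + 1 = l2 := by omega
    rw [a1, a2, if_pos (by simp; omega), if_pos (by omega), Nat.sub_add_cancel (by omega)]
    push_cast [h.le]
    field_simp
    linarith
  · rw [if_neg (not_lt.2 h : ¬ d3 < d2)]
    have a1 : (18 * (l2 - 1) + (d3 - d2 + 8)) % 18 = d3 - d2 + 8 := by omega
    have a2 : (18 * (l2 - 1) + (d3 - d2 + 8)) / 18 + 1 = l2 := by omega
    rw [a1, a2, if_neg (by simp; omega), if_neg (by omega), Nat.add_sub_cancel]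
    push_cast [h]
    field_simp
    linarith

theorem chkThree_spec {w W t P q Qs K R B C S TT a b : ℕ} (hQ : scaleOk W q Qs = true)
    (hok : threeOk w W t P Qs B TT = true) (hKR : K + R = B * C)
    (h : chkThree w W t P Qs K R B C S TT a b = true) {d1 d2 d3 l1 l2 k : ℕ}
    (h1 : 1 ≤ d1) (h1' : d1 ≤ 9) (h2 : d2 ≤ 9) (h3 : d3 ≤ 9) (hne : d1 ≠ d2) (hne' : d2 ≠ d3)
    (hl1 : a < l1) (hl1' : l1 ≤ a + b) (hl2 : 1 ≤ l2) (hS : l1 + l2 ≤ S) (hk : k < K + R)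
    (hexc : k ≠ excK3 (m2 d1 d2 l1) ∨ laneI d2 d3 l2 ≠ excI3 (m2 d1 d2 l1)) :
    Far W q (2 ^ (t - 1) - (4 * TT + 9)) (log (xVal K k / (5 * m3 d1 d2 d3 l1 l2 : ℕ))) := by
  have hl : 1 ≤ l1 := by omega
  obtain ⟨o1, o2, o3, o4, o5, o6, o7, o8⟩ := threeOk_spec hok
  simp only [chkThree, force_eq] at h
  have h4 := allBelow_spec h (l1 - (a + 1)) (by omega)
  rw [show a + (l1 - (a + 1)) + 1 = l1 by omega] at h4
  simp only [chkLen, force_eq, withR_eq] at h4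
  have h5 := allBelow_spec (allBelow_spec h4 (d1 - 1) (by omega)) d2 (by omega)
  rw [Nat.sub_add_cancel h1, Bool.or_eq_true, Bool.and_eq_true] at h5
  rcases h5 with h5 | ⟨h5, h6⟩
  · exact absurd (Nat.eq_of_beq_eq_true h5).symm hne
  obtain ⟨m1, mm2, m9⟩ := m2_bounds h1 h1' h2 hl
  obtain ⟨b1, b2⟩ := log_m2_mem h1 h1' h2 hl
  set m := m2 d1 d2 l1 with hm
  have hm0 : (0 : ℝ) < m := by exact_mod_cast (by omega : 0 < m)
  have hL : 0 < log 10 := log_pos (by norm_num)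
  have hy := sc_spec hQ (apx_yApx h1 h1' h2 hl h5) b1 b2
  set T := TT / l1 with hTdef
  have hTT : TT ≤ l1 * (T + 1) := (Nat.lt_mul_div_succ TT (by omega)).le
  have hT : ∀ i, 2 ^ W * q / log 10 * ((digAbs (i % 18) : ℝ) / (m * (10 ^ (i / 18 + 1) : ℕ))) ^ (T + 1) ≤ 1 := by
    intro i
    obtain ⟨s1, s2, s3⟩ := scaleOk_spec hQ
    clear s3
    have hdiv : Qs < 2 ^ 8 * (Qs / 2 ^ 8) + 256 := by omega
    have hσ2 : 2 ^ W * q / log 10 ≤ 10 ^ TT := by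
      have e1 : (Qs : ℝ) + 1 ≤ 2 ^ 8 * (Qs / 2 ^ 8 : ℕ) + 256 := by exact_mod_cast hdiv
      have e2 : ((Qs / 2 ^ 8 : ℕ) : ℝ) + 2 ≤ 10 ^ TT := by exact_mod_cast o5
      linarith
    have hD : (digAbs (i % 18) : ℝ) ≤ 9 := by exact_mod_cast digAbs_le i
    have hden : 9 * (10 : ℝ) ^ l1 ≤ m * (10 ^ (i / 18 + 1) : ℕ) := by
      have e1 : 10 * 1 ≤ 10 ^ (i / 18 + 1) := by
        rw [pow_succ']; exact Nat.mul_le_mul_left _ (Nat.one_le_pow _ _ (by norm_num))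
      have : 9 * 10 ^ l1 ≤ m * 10 ^ (i / 18 + 1) := by nlinarith
      exact_mod_cast this
    have hv : (digAbs (i % 18) : ℝ) / (m * (10 ^ (i / 18 + 1) : ℕ)) ≤ 1 / 10 ^ l1 := by
      rw [div_le_div_iff₀ (by positivity) (by positivity)]
      have : (digAbs (i % 18) : ℝ) * 10 ^ l1 ≤ 9 * 10 ^ l1 := by gcongr
      linarith
    calc 2 ^ W * q / log 10 * ((digAbs (i % 18) : ℝ) / (m * (10 ^ (i / 18 + 1) : ℕ))) ^ (T + 1)
        ≤ 10 ^ TT * (1 / 10 ^ l1) ^ (T + 1) := by gcongr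
      _ = 10 ^ TT / 10 ^ (l1 * (T + 1)) := by rw [div_pow, one_pow, ← pow_mul]; ring
      _ ≤ 1 := by
        rw [div_le_one (by positivity)]
        exact pow_le_pow_right₀ (by norm_num) hTT
  obtain ⟨f, hf1, hf2⟩ := corrPack_spec (n2 := S - l1) (T := T) (y := sc Qs (yApx d1 d2 l1))
    (b := log (5 * m : ℕ) - l1 * log 10) hQ hok m9 (by exact_mod_cast hy) hT
  simp only [chkGroup, force_eq] at h6
  have hi : laneI d2 d3 l2 < (S - l1) * 18 := by
    unfold laneI; split_ifs <;> omega
  have h7 := chkGroup_spec (q := q) (v := fun i => log (5 * m : ℕ) - l1 * log 10 + log (1 - laneU m i))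
    hQ o6 o7 o4 o8 hKR hf1 (fun i => (hf2 i).1) (fun i => (hf2 i).2) h6 hi hk hexc
  have h8 := (h7.shift (l1 + l2)).mono (c' := 2 ^ (t - 1) - (4 * TT + 9)) ?_
  · have hu := one_sub_laneU h1 h1' h2 h3 hl hl2 hne'
    rw [← hm] at hu
    obtain ⟨_, _, _, hm3⟩ := m3_bounds h1 h1' h2 h3 hl hl2
    have hm3R : (0 : ℝ) < m3 d1 d2 d3 l1 l2 := by exact_mod_cast hm3
    have hupos : 0 < 1 - laneU m (laneI d2 d3 l2) := by
      by_contra hc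
      rw [not_lt] at hc
      have := mul_nonpos_of_nonneg_of_nonpos (by positivity : (0 : ℝ) ≤ m * 10 ^ l2) hc
      linarith
    have hlog : log (5 * m3 d1 d2 d3 l1 l2 : ℕ) =
        log (5 * m : ℕ) + l2 * log 10 + log (1 - laneU m (laneI d2 d3 l2)) := by
      push_cast
      rw [hu, ← log_pow, ← log_mul (by positivity) (by positivity), ← log_mul (by positivity) hupos.ne']
      congr 1; ring
    obtain ⟨x1, x2⟩ := xVal_bounds K k
    rw [log_div (by linarith) (by push_cast; positivity), hlog]
    convert h8 using 1
    push_cast; ring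
  · have : T ≤ TT := Nat.div_le_self _ _
    have : (T : ℝ) ≤ TT := by exact_mod_cast this
    push_cast
    linarith

/-! ### Bounding the length of the agreement -/

theorem golden_sub_one_le : goldenRatio - 1 ≤ 0.6181 := by
  have h : √5 ≤ 2.2362 := by rw [sqrt_le_left (by norm_num)]; norm_num
  have := two_golden_sub_one
  linarith

/-- An upper bound for `2 ^ 800 |q log φ - p log 10|`. -/
def convErr (q p : ℕ) : ℕ :=
  (q * logGoldenHi + 10000 * q - p * logTenHi) + (p * logTenHi + 10000 * p - q * logGoldenHi)

/-- The numerical conditions for the reduction step with a convergent `p / q`, for `n ≤ X` and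
tolerance `c / 2 ^ W`, to give the bound `G`; the limit of `β_k` is used for `k ≥ K`. -/
def cutOk (W q p X c G K : ℕ) : Bool :=
  Nat.ble (2 * 2 ^ W * X * convErr q p) (c * logTenHi) &&
    Nat.ble (2 ^ W * q * 200 + 1) (c * 10 ^ (G + 1)) &&
    Nat.ble (6181 ^ K * 10 ^ (G + 1)) (100 * 10 ^ (4 * K))

/-- The numerical conditions for the bound `G` in the exceptional cases, from the convergent `p / q`. -/
def excOk (q p X G : ℕ) : Bool :=
  Nat.beq (Nat.gcd q p) 1 && Nat.ble (convErr q p * q) (2 ^ 800) && Nat.ble (X + 1) q &&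
    Nat.ble (100 * q + 1) (10 ^ (G + 1))

theorem abs_conv_le_convErr (q p : ℕ) :
    2 ^ 800 * |q * log goldenRatio - p * log 10| ≤ convErr q p := by
  refine abs_conv_le p q _ ?_ ?_ <;> unfold convErr <;> omega

/-- If `k = 2 j` with `j` odd, then `β_k = 45 F_j / φ ^ j`. -/
theorem beta_two_mul {j : ℕ} (hj : Odd j) : beta (2 * j) * goldenRatio ^ j = 45 * Nat.fib j := by
  have h0 := goldenRatio_pos
  have h1 : goldenRatio ^ j * (goldenRatio - 1) ^ j = 1 := by
    rw [← mul_pow, golden_mul_sub_one, one_pow]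
  have hc : goldenConj = -(goldenRatio - 1) := by
    have := goldenRatio_add_goldenConj
    linarith
  have h2 := coe_fib_eq j
  have hs : √5 * √5 = 5 := mul_self_sqrt (by norm_num)
  have hs0 : √5 ≠ 0 := by positivity
  rw [hc, hj.neg_pow, eq_div_iff hs0] at h2
  unfold beta
  rw [two_golden_sub_one, pow_mul', pow_two]
  have h3 : 5 * (Nat.fib j : ℝ) = √5 * (goldenRatio ^ j + (goldenRatio - 1) ^ j) := by
    linear_combination √5 * h2 - (Nat.fib j : ℝ) * hs
  linear_combination 9 * √5 * (goldenRatio - 1) ^ j * h1 - 9 * h3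

theorem linForm_exc {n e M j e0 : ℕ} (hj : Odd j) (hM : 9 * Nat.fib j = M * 10 ^ e0) :
    linForm n e M (beta (2 * j)) = ((n : ℤ) - j : ℤ) * log goldenRatio + ((e0 : ℤ) - e : ℤ) * log 10 := by
  have h := beta_two_mul hj
  have h0 := goldenRatio_pos
  have hf : 0 < Nat.fib j := Nat.fib_pos.2 hj.pos
  have hM0 : 0 < M := by
    rcases Nat.eq_zero_or_pos M with rfl | h
    · omega
    · exact h
  have hMR : (0 : ℝ) < M := by exact_mod_cast hM0
  have hMeq : (9 : ℝ) * Nat.fib j = M * 10 ^ e0 := by exact_mod_cast hM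
  have hb : beta (2 * j) / (5 * M : ℕ) = 10 ^ e0 / goldenRatio ^ j := by
    push_cast
    rw [div_eq_div_iff (by positivity) (by positivity)]
    linear_combination h + 5 * hMeq
  rw [linForm, hb, log_div (x := 10 ^ e0) (y := goldenRatio ^ j) (by positivity) (by positivity), log_pow,
    log_pow]
  push_cast; ring

/-- The bound for `g` from the reduction step; in the exceptional case the linear form only involves
two logarithms and a continued fraction argument applies. -/
theorem level_cut {W q p X c G K n k M e g₀ g : ℕ} {x : ℝ} (hcut : cutOk W q p X c G K = true)
    (hn : n ≤ X) (hL : Level n k M e g₀ g) (hx : x = beta k ∨ (x = 9 * (2 * goldenRatio - 1) ∧ K ≤ k))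
    (h : Far W q c (log (x / (5 * M : ℕ))) ∨
      excOk q p X G = true ∧ ∃ j e0, Odd j ∧ k = 2 * j ∧ j < n ∧ 9 * Nat.fib j = M * 10 ^ e0) : g ≤ G := by
  simp only [cutOk, Bool.and_eq_true, Nat.ble_eq] at hcut
  obtain ⟨⟨c1, c2⟩, c3⟩ := hcut
  by_contra hg
  rw [not_le] at hg
  have h10 : (100 : ℝ) / 10 ^ g ≤ 100 / 10 ^ (G + 1) := by
    gcongr
    · norm_num
    · exact hg
  have hconv := abs_conv_le_convErr q p
  rcases h with h | ⟨hexc, j, e0, hj, rfl, hjn, hM⟩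
  · have hlin : |linForm n e M x| ≤ 200 / 10 ^ (G + 1) := by
      rcases hx with rfl | ⟨rfl, hk⟩
      · refine hL.small.trans (h10.trans ?_)
        gcongr; norm_num
      · refine hL.inf.trans ?_
        have e1 : (goldenRatio - 1) ^ k ≤ 100 / 10 ^ (G + 1) := by
          have g0 := golden_sub_one_bounds.1
          calc (goldenRatio - 1) ^ k ≤ (goldenRatio - 1) ^ K :=
                pow_le_pow_of_le_one (by linarith) (by linarith [golden_sub_one_le]) hk
            _ ≤ 0.6181 ^ K := pow_le_pow_left₀ (by linarith) golden_sub_one_le K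
            _ = (6181 : ℝ) ^ K / 10 ^ (4 * K) := by
              rw [pow_mul, ← div_pow]; norm_num
            _ ≤ 100 / 10 ^ (G + 1) := by
              rw [div_le_div_iff₀ (by positivity) (by positivity)]
              exact_mod_cast c3
        have e2 : (200 : ℝ) / 10 ^ (G + 1) = 100 / 10 ^ (G + 1) + 100 / 10 ^ (G + 1) := by ring
        linarith
    have hb := h.bound (p := p) (n := n) (e := e)
    have hlog := logTenHi_spec.1
    have c1' : 2 * 2 ^ W * (X : ℝ) * convErr q p ≤ c * logTenHi := by exact_mod_cast c1
    have c2' : 2 ^ W * (q : ℝ) * 200 < c * 10 ^ (G + 1) := by exact_mod_cast c2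
    have hnX : (n : ℝ) ≤ X := by exact_mod_cast hn
    have hl2 : (2 : ℝ) ≤ log 10 := by linarith [log_ten_bounds.1]
    have hy : (0 : ℝ) < 2 ^ 800 := by positivity
    clear c1 c2 c3
    generalize (2 : ℝ) ^ 800 = y at *
    have hP : (0 : ℝ) < 10 ^ (G + 1) := by positivity
    have hWp : (0 : ℝ) < 2 ^ W := by positivity
    have d1 : 2 ^ W * (n * |q * log goldenRatio - p * log 10|) ≤ c * log 10 / 2 := by
      refine le_of_mul_le_mul_right ?_ hy
      calc 2 ^ W * (n * |q * log goldenRatio - p * log 10|) * y =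
          2 ^ W * n * (y * |q * log goldenRatio - p * log 10|) := by ring
        _ ≤ 2 ^ W * X * convErr q p := by gcongr
        _ ≤ c * logTenHi / 2 := by linarith
        _ ≤ c * (y * log 10) / 2 := by gcongr
        _ = c * log 10 / 2 * y := by ring
    have d2 : 2 ^ W * (q * |linForm n e M x|) ≤ 2 ^ W * (q * (200 / 10 ^ (G + 1))) := by gcongr
    have d3 : 2 ^ W * (q * (200 / (10 : ℝ) ^ (G + 1))) < c := by
      rw [show 2 ^ W * (q * (200 / (10 : ℝ) ^ (G + 1))) = 2 ^ W * (q : ℝ) * 200 / 10 ^ (G + 1) by ring,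
        div_lt_iff₀ hP]
      exact c2'
    have hc0 : (0 : ℝ) ≤ c := by positivity
    rw [mul_add] at hb
    nlinarith
  · simp only [excOk, Bool.and_eq_true, Nat.ble_eq, Nat.beq_eq] at hexc
    obtain ⟨⟨⟨c4, c5⟩, c6⟩, c7⟩ := hexc
    have hq0 : (0 : ℝ) < q := by exact_mod_cast (by omega : 0 < q)
    have hs := hL.small
    rw [linForm_exc hj hM] at hs
    have hlow := form_lower_of_conv p q c4 ?_ ((n : ℤ) - j) ((e0 : ℤ) - e) (Or.inl (by omega)) ?_
    · have c7' : 100 * (q : ℝ) < 10 ^ (G + 1) := by exact_mod_cast c7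
      have := hlow.trans (hs.trans h10)
      rw [div_le_div_iff₀ hq0 (by positivity)] at this
      linarith
    · have c5' : (convErr q p : ℝ) * q ≤ 2 ^ 800 := by exact_mod_cast c5
      have hy : (0 : ℝ) < 2 ^ 800 := by positivity
      clear c1 c2 c3 c5 c7
      generalize (2 : ℝ) ^ 800 = y at *
      refine le_of_mul_le_mul_left ?_ hy
      calc y * (|q * log goldenRatio - p * log 10| * q) = (y * |q * log goldenRatio - p * log 10|) * q := by ring
        _ ≤ convErr q p * q := by gcongr
        _ ≤ y * 1 := by linarith
    · rw [abs_lt]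
      constructor <;> omega

/-- The exceptional values of `k` for at most two blocks. -/
theorem exc_of_excK {M k : ℕ} (h : k = excK M) (hk : k < 1000) :
    ∃ j e0, Odd j ∧ k = 2 * j ∧ j < 30 ∧ 9 * Nat.fib j = M * 10 ^ e0 := by
  unfold excK at h
  split_ifs at h with h1 h2 h3 h4 h5
  · exact ⟨1, 0, by decide, by omega, by norm_num, by rw [h1]; decide⟩
  · exact ⟨3, 0, by decide, by omega, by norm_num, by rw [h2]; decide⟩
  · exact ⟨5, 0, by decide, by omega, by norm_num, by rw [h3]; decide⟩
  · exact ⟨9, 0, by decide, by omega, by norm_num, by rw [h4]; decide⟩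
  · exact ⟨11, 0, by decide, by omega, by norm_num, by rw [h5]; decide⟩
  · omega

/-- The exceptional values of `k` for three blocks. -/
theorem exc_of_excK3 {d1 d2 d3 l1 l2 k : ℕ} (h1 : 1 ≤ d1) (h1' : d1 ≤ 9) (h2 : d2 ≤ 9) (h3 : d3 ≤ 9)
    (hne : d2 ≠ d3) (hl1 : 1 ≤ l1) (hl2 : 1 ≤ l2) (hk : k < 1000)
    (h : k = excK3 (m2 d1 d2 l1) ∧ laneI d2 d3 l2 = excI3 (m2 d1 d2 l1)) :
    ∃ j e0, Odd j ∧ k = 2 * j ∧ j < 30 ∧ 9 * Nat.fib j = m3 d1 d2 d3 l1 l2 * 10 ^ e0 := by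
  have e := @m3_add d1 d2 d3 l1 l2 h1 h1' h2 hl1
  obtain ⟨hK, hI⟩ := h
  generalize m2 d1 d2 l1 = m at *
  generalize m3 d1 d2 d3 l1 l2 = M at *
  unfold laneI excI3 at hI
  unfold excK3 at hK
  split_ifs at hK with c1 c2 c3 c4 c5 c6 c7
  · simp only [c1, if_true] at hI
    obtain rfl : l2 = 1 := by split_ifs at hI <;> omega
    obtain rfl : M = 117 := by split_ifs at hI <;> omega
    exact ⟨7, 0, by decide, by omega, by norm_num, by decide⟩
  · simp only [c2, if_true] at hI
    norm_num at hI
    obtain rfl : l2 = 1 := by split_ifs at hI <;> omega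
    obtain rfl : M = 117 := by split_ifs at hI <;> omega
    exact ⟨7, 0, by decide, by omega, by norm_num, by decide⟩
  · simp only [c3, if_true] at hI
    norm_num at hI
    obtain rfl : l2 = 1 := by split_ifs at hI <;> omega
    obtain rfl : M = 306 := by split_ifs at hI <;> omega
    exact ⟨9, 0, by decide, by omega, by norm_num, by decide⟩
  · simp only [c4, if_true] at hI
    norm_num at hI
    obtain rfl : l2 = 1 := by split_ifs at hI <;> omega
    obtain rfl : M = 801 := by split_ifs at hI <;> omega
    exact ⟨11, 0, by decide, by omega, by norm_num, by decide⟩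
  · simp only [c5, if_true] at hI
    norm_num at hI
    obtain rfl : l2 = 2 := by split_ifs at hI <;> omega
    obtain rfl : M = 2097 := by split_ifs at hI <;> omega
    exact ⟨13, 0, by decide, by omega, by norm_num, by decide⟩
  · simp only [c6, if_true] at hI
    norm_num at hI
    obtain rfl : l2 = 1 := by split_ifs at hI <;> omega
    obtain rfl : M = 549 := by split_ifs at hI <;> omega
    exact ⟨15, 1, by decide, by omega, by norm_num, by decide⟩
  · subst c7
    simp only [Nat.reduceEqDiff, if_false, if_true] at hI
    obtain rfl : l2 = 1 := by split_ifs at hI <;> omega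
    obtain rfl : M = 549 := by split_ifs at hI <;> omega
    exact ⟨15, 1, by decide, by omega, by norm_num, by decide⟩
  · omega

/-- The reduction step with the values `k ≥ K` treated together through the limit of `β_k`. -/
theorem lane_cut {W q p X c G K K' n k M e g₀ g : ℕ} (hcut : cutOk W q p X c G K' = true)
    (hK : K = 0 ∨ (60 ≤ K ∧ excOk q p X G = true)) (hn : n ≤ X) (hn' : 30 ≤ n) (hk : K ≤ k → K' ≤ k) (hL : Level n k M e g₀ g)
    (h : Far W q c (log (xVal K (min k K) / (5 * M : ℕ))) ∨
      ∃ j e0, Odd j ∧ min k K = 2 * j ∧ j < 30 ∧ 9 * Nat.fib j = M * 10 ^ e0) : g ≤ G := by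
  have hx : xVal K (min k K) = beta k ∨ (xVal K (min k K) = 9 * (2 * goldenRatio - 1) ∧ K' ≤ k) := by
    rcases Nat.lt_or_ge k K with h | h
    · left; rw [min_eq_left h.le, xVal, if_pos h]
    · right; rw [min_eq_right h, xVal, if_neg (lt_irrefl _)]
      exact ⟨rfl, hk h⟩
  refine level_cut hcut hn hL hx (h.imp id ?_)
  rintro ⟨j, e0, hj, h1, h2, h3⟩
  have := hj.pos
  rcases hK with rfl | ⟨hK, hexc⟩
  · rw [min_eq_right (Nat.zero_le _)] at h1
    omega
  exact ⟨hexc, j, e0, hj, by omega, by omega, h3⟩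

/-- The reduction step for the first digit: if all lanes of `chkOne` pass, the approximation by `d`
is accurate to at most `G` digits. -/
theorem run_one {W t q p Qs X c G K K' n k d e g : ℕ} (hs : scaleOk W q Qs = true) (ht : 1 ≤ t) (htW : t ≤ W)
    (hchk : chkOne W t Qs K 1 = true) (hcut : cutOk W q p X c G K' = true) (hc : (c : ℝ) ≤ 2 ^ (t - 1) - 6)
    (hK : K = 0 ∨ (60 ≤ K ∧ excOk q p X G = true)) (hK2 : K < 1000) (hn : n ≤ X) (hn' : 30 ≤ n) (hk : K ≤ k → K' ≤ k)
    (h1 : 1 ≤ d) (h1' : d ≤ 9) (hL : Level n k d e 0 g) : g ≤ G := by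
  refine lane_cut hcut hK hn hn' hk hL ?_
  by_cases hx : min k K = excK d
  · exact Or.inr (exc_of_excK hx (by omega))
  · exact Or.inl ((chkOne_spec hs ht htW hchk h1 h1' (by omega) hx).mono hc)

/-- The reduction step for the first two blocks. -/
theorem run_two {W t q p Qs X c G K K' L n k d1 d2 l e g : ℕ} (hs : scaleOk W q Qs = true) (ht : 1 ≤ t)
    (htW : t ≤ W) (hchk : chkTwo W t Qs K 1 L = true) (hcut : cutOk W q p X c G K' = true)
    (hc : (c : ℝ) ≤ 2 ^ (t - 1) - 6)
    (hK : K = 0 ∨ (60 ≤ K ∧ excOk q p X G = true)) (hK2 : K < 1000) (hn : n ≤ X) (hn' : 30 ≤ n) (hk : K ≤ k → K' ≤ k)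
    (h1 : 1 ≤ d1) (h1' : d1 ≤ 9) (h2 : d2 ≤ 9) (hne : d1 ≠ d2) (hl : 1 ≤ l) (hlL : l ≤ L)
    (hL : Level n k (m2 d1 d2 l) e l g) : g ≤ G := by
  refine lane_cut hcut hK hn hn' hk hL ?_
  by_cases hx : min k K = excK (m2 d1 d2 l)
  · exact Or.inr (exc_of_excK hx (by omega))
  · exact Or.inl ((chkTwo_spec hs ht htW hchk h1 h1' h2 hne hl hlL (by omega) hx).mono hc)

/-- The reduction step for all three blocks. -/
theorem run_three {w W t P q p Qs X c G K K' R B C S TT a b n k d1 d2 d3 l1 l2 e g₀ g : ℕ}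
    (hs : scaleOk W q Qs = true) (hok : threeOk w W t P Qs B TT = true) (hKR : K + R = B * C) (hR : 1 ≤ R)
    (hchk : chkThree w W t P Qs K R B C S TT a b = true) (hcut : cutOk W q p X c G K' = true)
    (hc : (c : ℝ) ≤ 2 ^ (t - 1) - (4 * TT + 9))
    (hK : K = 0 ∨ (60 ≤ K ∧ excOk q p X G = true)) (hK2 : K < 1000) (hn : n ≤ X) (hn' : 30 ≤ n) (hk : K ≤ k → K' ≤ k)
    (h1 : 1 ≤ d1) (h1' : d1 ≤ 9) (h2 : d2 ≤ 9) (h3 : d3 ≤ 9) (hne : d1 ≠ d2) (hne' : d2 ≠ d3)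
    (hl1 : a < l1) (hl1' : l1 ≤ a + b) (hl2 : 1 ≤ l2) (hS : l1 + l2 ≤ S)
    (hL : Level n k (m3 d1 d2 d3 l1 l2) e g₀ g) : g ≤ G := by
  refine lane_cut hcut hK hn hn' hk hL ?_
  by_cases hx : min k K = excK3 (m2 d1 d2 l1) ∧ laneI d2 d3 l2 = excI3 (m2 d1 d2 l1)
  · exact Or.inr (exc_of_excK3 h1 h1' h2 h3 hne' (by omega) hl2 (by omega) hx)
  · refine Or.inl ((chkThree_spec hs hok hKR hchk h1 h1' h2 h3 hne hne' hl1 hl1' hl2 hS (by omega) ?_).mono hc)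
    rw [not_and_or] at hx
    exact hx

/-! ### The computations -/

/-- The denominator of a convergent to `log φ / log 10`. -/
def qRA : ℕ := 5941935940769835054241429649952384223890002325526290846281724237968983312675655501451990641301796799026590467

/-- The numerator belonging to `qRA`. -/
def pRA : ℕ := 1241791170778025233786960259519564100831396265438835420902378771694530407094020428538967748523085926303718071

/-- The integer part of `2 ^ 33 qRA / log 10`. -/
def sRA : ℕ := 22166755633208147895318082864236477433090067326181713893407518983207665564696181338423785402954148043055744798441600743

theorem scaleRA : scaleOk 25 qRA sRA = true := by decide +kernel

theorem cutRA : cutOk 25 qRA pRA (10 ^ 104) 1018 115 585 = true := by decide +kernel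

theorem excRA : excOk qRA pRA (10 ^ 104) 115 = true := by decide +kernel

theorem chkRA : chkOne 25 11 sRA 585 1 = true := by decide +kernel

theorem runRA {n k d e g : ℕ} (hn : n ≤ 10 ^ 104) (hn' : 30 ≤ n)
    (h1 : 1 ≤ d) (h1' : d ≤ 9) (hL : Level n k d e 0 g) : g ≤ 115 :=
  run_one scaleRA (by norm_num) (by norm_num) chkRA cutRA (by norm_num)
    (Or.inr ⟨by norm_num, excRA⟩) (by norm_num) hn hn' id h1 h1' hL

/-- The denominator of a convergent to `log φ / log 10`. -/
def qRB : ℕ := 45085809804483209341438998319427341790343614334586643616365803506529684976695989048102333502448105899362148435291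

/-- The numerator belonging to `qRB`. -/
def pRB : ℕ := 9422376999798300985780235956949629865312083761429752712978554656939005321674455079853215625366493593461699280432

/-- The integer part of `2 ^ 42 qRB / log 10`. -/
def sRB : ℕ := 86116030679704681506703366747802090135109387728194000099346194425326353799635245430070616651843636878068165375963470069326514

theorem scaleRB : scaleOk 34 qRB sRB = true := by decide +kernel

theorem cutRB : cutOk 34 qRB pRB (10 ^ 104) 1018 122 585 = true := by decide +kernel

theorem excRB : excOk qRB pRB (10 ^ 104) 122 = true := by decide +kernel

theorem chkRB : chkTwo 34 11 sRB 585 1 116 = true := by decide +kernel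

theorem runRB {n k d1 d2 l e g : ℕ} (hn : n ≤ 10 ^ 104) (hn' : 30 ≤ n)
    (h1 : 1 ≤ d1) (h1' : d1 ≤ 9) (h2 : d2 ≤ 9) (hne : d1 ≠ d2) (hl : 1 ≤ l) (hlL : l ≤ 116)
    (hL : Level n k (m2 d1 d2 l) e l g) : g ≤ 122 :=
  run_two scaleRB (by norm_num) (by norm_num) chkRB cutRB (by norm_num)
    (Or.inr ⟨by norm_num, excRB⟩) (by norm_num) hn hn' id h1 h1' h2 hne hl hlL hL

/-- The denominator of a convergent to `log φ / log 10`. -/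
def qAA : ℕ := 2215349205639193669582152330709666

/-- The numerator belonging to `qAA`. -/
def pAA : ℕ := 462980602816199965791362202192101

/-- The integer part of `2 ^ 32 qAA / log 10`. -/
def sAA : ℕ := 4132247887989136867180547242664407663868383

theorem scaleAA : scaleOk 24 qAA sAA = true := by decide +kernel

theorem cutAA : cutOk 24 qAA pAA (27 * 10 ^ 27) 1018 39 230 = true := by decide +kernel

theorem excAA : excOk qAA pAA (27 * 10 ^ 27) 39 = true := by decide +kernel

theorem chkAA : chkOne 24 11 sAA 230 1 = true := by decide +kernel

theorem runAA {n k d e g : ℕ} (hn : n ≤ 27 * 10 ^ 27) (hn' : 30 ≤ n)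
    (h1 : 1 ≤ d) (h1' : d ≤ 9) (hL : Level n k d e 0 g) : g ≤ 39 :=
  run_one scaleAA (by norm_num) (by norm_num) chkAA cutAA (by norm_num)
    (Or.inr ⟨by norm_num, excAA⟩) (by norm_num) hn hn' id h1 h1' hL

/-- The denominator of a convergent to `log φ / log 10`. -/
def qAB : ℕ := 572753894764116701371917918053877965

/-- The numerator belonging to `qAB`. -/
def pAB : ℕ := 119698484910737399478854700085023759

/-- The integer part of `2 ^ 40 qAB / log 10`. -/
def sAB : ℕ := 273496761992963290682272931341298189246585482985

theorem scaleAB : scaleOk 32 qAB sAB = true := by decide +kernel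

theorem cutAB : cutOk 32 qAB pAB (27 * 10 ^ 27) 1018 44 230 = true := by decide +kernel

theorem excAB : excOk qAB pAB (27 * 10 ^ 27) 44 = true := by decide +kernel

theorem chkAB : chkTwo 32 11 sAB 230 1 39 = true := by decide +kernel

theorem runAB {n k d1 d2 l e g : ℕ} (hn : n ≤ 27 * 10 ^ 27) (hn' : 30 ≤ n)
    (h1 : 1 ≤ d1) (h1' : d1 ≤ 9) (h2 : d2 ≤ 9) (hne : d1 ≠ d2) (hl : 1 ≤ l) (hlL : l ≤ 39)
    (hL : Level n k (m2 d1 d2 l) e l g) : g ≤ 44 :=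
  run_two scaleAB (by norm_num) (by norm_num) chkAB cutAB (by norm_num)
    (Or.inr ⟨by norm_num, excAB⟩) (by norm_num) hn hn' id h1 h1' h2 hne hl hlL hL

/-- The denominator of a convergent to `log φ / log 10`. -/
def qBA : ℕ := 3386215731556818652296415072360028260767575945551879

/-- The numerator belonging to `qBA`. -/
def pBA : ℕ := 707677235115414976895571261068567913188760139136157

/-- The integer part of `2 ^ 24 qBA / log 10`. -/
def sBA : ℕ := 24672822265628066663742331966142626235840154858227985888136

theorem scaleBA : scaleOk 16 qBA sBA = true := by decide +kernel

theorem cutBA : cutOk 16 qBA pBA (37 * 10 ^ 45) 2042 55 582 = true := by decide +kernel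

theorem chkBA : chkOne 16 12 sBA 0 1 = true := by decide +kernel

theorem runBA {n k d e g : ℕ} (hn : n ≤ 37 * 10 ^ 45) (hn' : 30 ≤ n) (hk : 582 ≤ k)
    (h1 : 1 ≤ d) (h1' : d ≤ 9) (hL : Level n k d e 0 g) : g ≤ 55 :=
  run_one scaleBA (by norm_num) (by norm_num) chkBA cutBA (by norm_num)
    (Or.inl rfl) (by norm_num) hn hn' (fun _ => hk) h1 h1' hL

/-- The denominator of a convergent to `log φ / log 10`. -/
def qBB : ℕ := 3386215731556818652296415072360028260767575945551879

/-- The numerator belonging to `qBB`. -/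
def pBB : ℕ := 707677235115414976895571261068567913188760139136157

/-- The integer part of `2 ^ 32 qBB / log 10`. -/
def sBB : ℕ := 6316242500000785065918036983332512316375079643706364387363062

theorem scaleBB : scaleOk 24 qBB sBB = true := by decide +kernel

theorem cutBB : cutOk 24 qBB pBB (37 * 10 ^ 45) 2042 57 582 = true := by decide +kernel

theorem chkBB : chkTwo 24 12 sBB 0 1 55 = true := by decide +kernel

theorem runBB {n k d1 d2 l e g : ℕ} (hn : n ≤ 37 * 10 ^ 45) (hn' : 30 ≤ n) (hk : 582 ≤ k)
    (h1 : 1 ≤ d1) (h1' : d1 ≤ 9) (h2 : d2 ≤ 9) (hne : d1 ≠ d2) (hl : 1 ≤ l) (hlL : l ≤ 55)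
    (hL : Level n k (m2 d1 d2 l) e l g) : g ≤ 57 :=
  run_two scaleBB (by norm_num) (by norm_num) chkBB cutBB (by norm_num)
    (Or.inl rfl) (by norm_num) hn hn' (fun _ => hk) h1 h1' h2 hne hl hlL hL

/-- The denominator of a convergent to `log φ / log 10`. -/
def qAC : ℕ := 157026442615206357419926102508159304475

/-- The numerator belonging to `qAC`. -/
def pAC : ℕ := 32816585699000676043429396475097469611

/-- The integer part of `2 ^ 52 qAC / log 10`. -/
def sAC : ℕ := 307126208104477922621981270480146137475993691476167491

theorem scaleAC : scaleOk 44 qAC sAC = true := by decide +kernel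

theorem cutAC : cutOk 44 qAC pAC (27 * 10 ^ 27) 7975 49 230 = true := by decide +kernel

theorem okAC : threeOk 46 44 14 174 sAC 8 52 = true := by decide +kernel

theorem excAC : excOk qAC pAC (27 * 10 ^ 27) 49 = true := by decide +kernel

theorem chkAC0 : chkThree 46 44 14 174 sAC 230 2 8 29 44 52 0 1 = true := by decide +kernel

theorem chkAC1 : chkThree 46 44 14 174 sAC 230 2 8 29 44 52 1 1 = true := by decide +kernel

theorem chkAC2 : chkThree 46 44 14 174 sAC 230 2 8 29 44 52 2 2 = true := by decide +kernel

theorem chkAC4 : chkThree 46 44 14 174 sAC 230 2 8 29 44 52 4 2 = true := by decide +kernel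

theorem chkAC6 : chkThree 46 44 14 174 sAC 230 2 8 29 44 52 6 3 = true := by decide +kernel

theorem chkAC9 : chkThree 46 44 14 174 sAC 230 2 8 29 44 52 9 4 = true := by decide +kernel

theorem chkAC13 : chkThree 46 44 14 174 sAC 230 2 8 29 44 52 13 5 = true := by decide +kernel

theorem chkAC18 : chkThree 46 44 14 174 sAC 230 2 8 29 44 52 18 6 = true := by decide +kernel

theorem chkAC24 : chkThree 46 44 14 174 sAC 230 2 8 29 44 52 24 7 = true := by decide +kernel

theorem chkAC31 : chkThree 46 44 14 174 sAC 230 2 8 29 44 52 31 8 = true := by decide +kernel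

theorem runAC {n k d1 d2 d3 l1 l2 e g₀ g : ℕ} (hn : n ≤ 27 * 10 ^ 27) (hn' : 30 ≤ n)
    (h1 : 1 ≤ d1) (h1' : d1 ≤ 9) (h2 : d2 ≤ 9) (h3 : d3 ≤ 9) (hne : d1 ≠ d2) (hne' : d2 ≠ d3)
    (hl1 : 1 ≤ l1) (hl1' : l1 ≤ 39) (hl2 : 1 ≤ l2) (hS : l1 + l2 ≤ 44)
    (hL : Level n k (m3 d1 d2 d3 l1 l2) e g₀ g) : g ≤ 49 := by
  have key : ∀ a b, chkThree 46 44 14 174 sAC 230 2 8 29 44 52 a b = true →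
      a < l1 → l1 ≤ a + b → g ≤ 49 := fun a b hchk ha hb =>
    run_three scaleAC okAC (by norm_num) (by norm_num) hchk cutAC (by norm_num)
      (Or.inr ⟨by norm_num, excAC⟩) (by norm_num) hn hn' id h1 h1' h2 h3 hne hne' ha hb hl2 hS hL
  rcases Nat.lt_or_ge 1 l1 with h | h
  swap
  · exact key 0 1 chkAC0 (by omega) (by omega)
  rcases Nat.lt_or_ge 2 l1 with h | h
  swap
  · exact key 1 1 chkAC1 (by omega) (by omega)
  rcases Nat.lt_or_ge 4 l1 with h | h
  swap
  · exact key 2 2 chkAC2 (by omega) (by omega)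
  rcases Nat.lt_or_ge 6 l1 with h | h
  swap
  · exact key 4 2 chkAC4 (by omega) (by omega)
  rcases Nat.lt_or_ge 9 l1 with h | h
  swap
  · exact key 6 3 chkAC6 (by omega) (by omega)
  rcases Nat.lt_or_ge 13 l1 with h | h
  swap
  · exact key 9 4 chkAC9 (by omega) (by omega)
  rcases Nat.lt_or_ge 18 l1 with h | h
  swap
  · exact key 13 5 chkAC13 (by omega) (by omega)
  rcases Nat.lt_or_ge 24 l1 with h | h
  swap
  · exact key 18 6 chkAC18 (by omega) (by omega)
  rcases Nat.lt_or_ge 31 l1 with h | h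
  swap
  · exact key 24 7 chkAC24 (by omega) (by omega)
  exact key 31 8 chkAC31 (by omega) (by omega)

/-- The denominator of a convergent to `log φ / log 10`. -/
def qBC : ℕ := 7331928878186982501184370491249297952824659131062806099

/-- The numerator belonging to `qBC`. -/
def pBC : ℕ := 1532282514732971248699360262855137347685624203086792614

/-- The integer part of `2 ^ 48 qBC / log 10`. -/
def sBC : ℕ := 896277195796647932837711928564649333950551837256290627288199441672367

theorem scaleBC : scaleOk 40 qBC sBC = true := by decide +kernel

theorem cutBC : cutOk 40 qBC pBC (37 * 10 ^ 45) 16107 65 582 = true := by decide +kernel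

theorem okBC : threeOk 460 40 15 224 sBC 1 67 = true := by decide +kernel

theorem chkBC0 : chkThree 460 40 15 224 sBC 0 1 1 1 57 67 0 55 = true := by decide +kernel

theorem runBC {n k d1 d2 d3 l1 l2 e g₀ g : ℕ} (hn : n ≤ 37 * 10 ^ 45) (hn' : 30 ≤ n) (hk : 582 ≤ k)
    (h1 : 1 ≤ d1) (h1' : d1 ≤ 9) (h2 : d2 ≤ 9) (h3 : d3 ≤ 9) (hne : d1 ≠ d2) (hne' : d2 ≠ d3)
    (hl1 : 1 ≤ l1) (hl1' : l1 ≤ 55) (hl2 : 1 ≤ l2) (hS : l1 + l2 ≤ 57)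
    (hL : Level n k (m3 d1 d2 d3 l1 l2) e g₀ g) : g ≤ 65 := by
  have key : ∀ a b, chkThree 460 40 15 224 sBC 0 1 1 1 57 67 a b = true →
      a < l1 → l1 ≤ a + b → g ≤ 65 := fun a b hchk ha hb =>
    run_three scaleBC okBC (by norm_num) (by norm_num) hchk cutBC (by norm_num)
      (Or.inl rfl) (by norm_num) hn hn' (fun _ => hk) h1 h1' h2 h3 hne hne' ha hb hl2 hS hL
  exact key 0 55 chkBC0 (by omega) (by omega)

/-! ### Upper bounds for the index -/

theorem Level.mul_pow {n k d e l g₀ g₁ g g' e' : ℕ} (h : Level n k (d * 10 ^ l) e g₀ g)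
    (h' : Level n k d (e + l) g₁ g') (he : e' = e + l) : Level n k d e' g₁ g := by
  subst he
  refine ⟨h'.one_le, h'.le_pow, h'.exp_le, ?_⟩
  have hd : (d : ℝ) ≠ 0 := by have := h'.one_le; positivity
  obtain ⟨b1, -⟩ := beta_bounds k
  have e1 : linForm n e (d * 10 ^ l) (beta k) = linForm n (e + l) d (beta k) := by
    have hb : beta k ≠ 0 := by linarith
    unfold linForm
    generalize beta k = b at hb
    generalize log goldenRatio = x
    push_cast
    rw [log_div hb (by positivity), log_div hb (by positivity),
      log_mul (by norm_num) (by positivity), log_mul hd (by positivity),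
      log_mul (by norm_num) hd, log_pow]
    ring
  rw [← e1]
  exact h.small

theorem m2_self {d l : ℕ} : m2 d d l = d * 10 ^ l := by
  unfold m2; omega

theorem m3_left {d d3 l1 l2 : ℕ} : m3 d d d3 l1 l2 = m2 d d3 (l1 + l2) := by
  rw [m3, m2_self, m2, pow_add, mul_assoc]

/-- Merging equal neighbouring blocks: the digits may be taken pairwise different from their
neighbours, with one, two or three blocks. -/
theorem RepSum.shape {n k d1 d2 d3 l1 l2 l3 : ℕ} (h : RepSum n k d1 d2 d3 l1 l2 l3) :
    (∃ d e g, 1 ≤ d ∧ d ≤ 9 ∧ n ≤ 5 * g + 3 ∧ Level n k d e 0 g) ∨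
    (∃ d d' l e e' g, 1 ≤ d ∧ d ≤ 9 ∧ d' ≤ 9 ∧ d ≠ d' ∧ 1 ≤ l ∧ n ≤ 5 * g + 3 ∧
      Level n k d e 0 l ∧ Level n k (m2 d d' l) e' l g) ∨
    (d1 ≠ d2 ∧ d2 ≠ d3) := by
  have hd1 := h.d1_pos; have hd1' := h.d1_le; have hd2 := h.d2_le; have hd3 := h.d3_le
  have hl1 := h.l1_pos
  have hn := h.le_len
  by_cases h12 : d1 = d2
  · subst h12
    by_cases h23 : d1 = d3
    · subst h23
      left
      refine ⟨d1, l1 + l2 + l3, _, hd1, hd1', hn, ?_⟩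
      have h2 := h.level_two.2 rfl
      rw [m2_self] at h2
      have h1 := h.level_one.1
      exact h2.mul_pow (by rwa [show l2 + l3 + l1 = l1 + l2 + l3 by ring]) (by ring)
    · right; left
      refine ⟨d1, d3, l1 + l2, _, l3, _, hd1, hd1', hd3, h23, by omega, hn, h.level_one.2 rfl, ?_⟩
      rw [← m3_left]
      exact h.level_three
  · by_cases h23 : d2 = d3
    · right; left
      exact ⟨d1, d2, l1, _, _, _, hd1, hd1', hd2, h12, hl1, hn, h.level_one.1, h.level_two.2 h23⟩
    · exact Or.inr (Or.inr ⟨h12, h23⟩)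

/-- The hypotheses of `three_logs` that do not involve the third logarithm. -/
structure Good (n q h : ℕ) : Prop where
  le_q : 50 ≤ q
  lt_n : 315000000 * (q ^ 2 * h) < n
  le_exp : 1500000000 * (q : ℝ) ^ 2 * n ≤ exp q
  deg : ∀ u₁ u₂ : ℤ, (u₁ ≠ 0 ∨ u₂ ≠ 0) → |u₁| ≤ 22000 * q → |u₂| ≤ 22000 * q →
      4600000000000 * (q ^ 3 * h : ℕ) < n * |u₁ * log goldenRatio + u₂ * log 10|

theorem Good.mono {n q h h' : ℕ} (H : Good n q h) (hh : h' ≤ h) : Good n q h' := by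
  have h2 : q ^ 2 * h' ≤ q ^ 2 * h := Nat.mul_le_mul_left _ hh
  have h3 : q ^ 3 * h' ≤ q ^ 3 * h := Nat.mul_le_mul_left _ hh
  refine ⟨H.le_q, by have := H.lt_n; omega, H.le_exp, fun u₁ u₂ hu a b => lt_of_le_of_lt ?_ (H.deg u₁ u₂ hu a b)⟩
  have : ((q ^ 3 * h' : ℕ) : ℝ) ≤ (q ^ 3 * h : ℕ) := by exact_mod_cast h3
  linarith

theorem linForm_lower {n e M g₀ q h : ℕ} {β β' : ℝ} (H : Good n q h) (hM : 1 ≤ M) (hM' : M ≤ 10 ^ (g₀ + 1))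
    (hO : InO β β') (hβ1 : 20 ≤ β) (hβ2 : β ≤ 41) (hβ' : |β'| ≤ exp (2 * h)) (hen : e ≤ n)
    (hh : 3 * (g₀ + 1) ≤ h) (hh4 : 4 ≤ h) :
    exp (-(290000000000 * (q ^ 3 * h : ℕ))) < |linForm n e M β| := by
  obtain ⟨t1, t2⟩ := log_ten_bounds
  have hMr : (1 : ℝ) ≤ M := by exact_mod_cast hM
  have hhr : 3 * ((g₀ : ℝ) + 1) ≤ h := by exact_mod_cast hh
  have hh4r : (4 : ℝ) ≤ h := by exact_mod_cast hh4
  have hg : (0 : ℝ) ≤ g₀ := by positivity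
  have l5 : log 5 ≤ 1.61 := by
    have : log 5 = log 10 - log 2 := by rw [← log_div (by norm_num) (by norm_num)]; norm_num
    have := log_two_gt_d9
    linarith
  have l5' : 0 ≤ log 5 := log_nonneg (by norm_num)
  have l20 : 2.9 ≤ log β := by
    have : log 20 = log 10 + log 2 := by rw [← log_mul (by norm_num) (by norm_num)]; norm_num
    have := log_two_gt_d9
    have := log_le_log (by norm_num) hβ1
    linarith
  have l41 : log β ≤ 4 := by
    have e1 : log 50 = log 10 + log 5 := by rw [← log_mul (by norm_num) (by norm_num)]; norm_num
    have := log_le_log (by linarith) (hβ2.trans (by norm_num : (41 : ℝ) ≤ 50))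
    linarith
  have lM : log M ≤ (g₀ + 1) * log 10 := by
    rw [show ((g₀ : ℝ) + 1) = ((g₀ + 1 : ℕ) : ℝ) by push_cast; ring, ← log_pow]
    exact log_le_log (by linarith) (by exact_mod_cast hM')
  have lM0 : 0 ≤ log M := log_nonneg hMr
  have e1 : log ((5 * M : ℕ) : ℝ) = log 5 + log M := by
    push_cast; rw [log_mul (by norm_num) (by linarith)]
  have lM' : log M ≤ 2.30259 * (g₀ + 1) := lM.trans (by nlinarith)
  refine three_logs n e q h (5 * M) β β' hO (by linarith) (by omega) H.le_q (by omega) ?_ ?_ hβ' hen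
    H.lt_n H.le_exp H.deg
  · rw [log_div (by linarith) (by have : 0 < 5 * M := by omega
                                  positivity), e1, abs_le]
    constructor <;> linarith
  · rw [e1]; linarith

theorem le_of_pow_ten_lt {U : ℝ} {g V : ℕ} (h : exp (-U) < 200 / 10 ^ g) (hU : U ≤ 2.3 * V - 6) : g ≤ V := by
  obtain ⟨t1, t2⟩ := log_ten_bounds
  have h1 : log (exp (-U)) < log (200 / 10 ^ g) := log_lt_log (exp_pos _) h
  rw [log_exp, log_div (by norm_num) (by positivity), log_pow] at h1
  have h2 : log 200 ≤ 5.4 := by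
    have : log 200 = log 10 + log 10 + log 2 := by
      rw [← log_mul (by norm_num) (by norm_num), ← log_mul (by norm_num) (by norm_num)]; norm_num
    have := log_two_lt_d9
    linarith
  have hg : (0 : ℝ) ≤ g := by positivity
  have h3 : (g : ℝ) < V := by
    by_contra! hc
    nlinarith
  exact_mod_cast h3.le

theorem le_of_pow_golden_lt {U : ℝ} {k V : ℕ} (h : exp (-U) < 2 * (goldenRatio - 1) ^ k)
    (hU : U ≤ 0.481 * V - 1) : k ≤ V := by
  obtain ⟨t1, t2⟩ := log_golden_bounds
  have e0 : goldenRatio - 1 = goldenRatio⁻¹ :=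
    eq_inv_of_mul_eq_one_left (by rw [mul_comm, golden_mul_sub_one])
  have h1 : log (exp (-U)) < log (2 * (goldenRatio - 1) ^ k) := log_lt_log (exp_pos _) h
  have hφ := goldenRatio_pos
  rw [e0, log_exp, log_mul (by norm_num) (by positivity), log_pow, log_inv] at h1
  have := log_two_lt_d9
  have hg : (0 : ℝ) ≤ k := by positivity
  have h3 : (k : ℝ) < V := by
    by_contra! hc
    nlinarith
  exact_mod_cast h3.le

theorem big_of_good {n q h : ℕ} (H : Good n q h) (hh : 4 ≤ h) : 500000 ≤ q ^ 3 * h := by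
  calc 500000 = 50 ^ 3 * 4 := by norm_num
    _ ≤ q ^ 3 * h := Nat.mul_le_mul (Nat.pow_le_pow_left H.le_q 3) hh

/-- The Baker-type bound applied to the form with `k` kept inside the third logarithm. -/
theorem Level.step {n k M e g₀ g q h : ℕ} (L : Level n k M e g₀ g) (H : Good n q h)
    (hh : 3 * (g₀ + 1) ≤ h) (hh4 : 4 ≤ h) (hk : k + 12 ≤ 4 * h) : g ≤ 130000000000 * (q ^ 3 * h) := by
  obtain ⟨b1, b2⟩ := beta_bounds k
  have hO : InO (beta k) (9 * (2 * goldenConj - 1) * (1 + (goldenConj - 1) ^ k)) := by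
    have h1 : InO (goldenRatio - 1) (goldenConj - 1) := by
      simpa [sub_eq_add_neg] using InO.golden.add (InO.int (-1))
    have h2 : InO (2 * goldenRatio - 1) (2 * goldenConj - 1) := by
      simpa [sub_eq_add_neg] using ((InO.int 2).mul InO.golden).add (InO.int (-1))
    have h3 := ((InO.int 9).mul h2).mul ((InO.int 1).add (h1.pow k))
    simpa [beta] using h3
  have hc : goldenConj - 1 = -goldenRatio := by linarith [goldenRatio_add_goldenConj]
  have hc2 : 2 * goldenConj - 1 = -√5 := by
    rw [← two_golden_sub_one]; linarith [goldenRatio_add_goldenConj]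
  obtain ⟨s1, s2⟩ := sqrt_five_bounds
  obtain ⟨t1, t2⟩ := log_golden_bounds
  have hφk : goldenRatio ^ k = exp (k * log goldenRatio) := by
    rw [exp_nat_mul, exp_log goldenRatio_pos]
  have hk1 : 1 ≤ goldenRatio ^ k := one_le_pow₀ one_lt_goldenRatio.le
  have hkr : (k : ℝ) + 12 ≤ 4 * h := by exact_mod_cast hk
  have hk0 : (0 : ℝ) ≤ k := by positivity
  have hβ' : |9 * (2 * goldenConj - 1) * (1 + (goldenConj - 1) ^ k)| ≤ exp (2 * h) := by
    rw [hc, hc2, abs_mul, abs_mul, abs_neg, abs_of_nonneg (sqrt_nonneg 5)]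
    have a1 : |1 + (-goldenRatio) ^ k| ≤ 2 * goldenRatio ^ k := by
      refine (abs_add_le _ _).trans ?_
      rw [abs_pow, abs_neg, abs_of_pos goldenRatio_pos, abs_one]
      linarith
    have a2 : (2 : ℝ) ^ 6 ≤ exp 4.2 := exp_ge_two_pow 6 (by norm_num)
    calc |(9 : ℝ)| * √5 * |1 + (-goldenRatio) ^ k| ≤ 9 * 2.237 * (2 * goldenRatio ^ k) := by
          gcongr; norm_num
      _ ≤ exp 4.2 * goldenRatio ^ k := by nlinarith
      _ ≤ exp (2 * h) := by
          rw [hφk, ← exp_add]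
          apply exp_le_exp.2
          nlinarith
  have hlow := linForm_lower H L.one_le L.le_pow hO b1 b2 hβ' L.exp_le hh hh4
  have hQ := big_of_good H hh4
  refine le_of_pow_ten_lt (hlow.trans_le (L.small.trans ?_)) ?_
  · gcongr; norm_num
  · have : (500000 : ℝ) ≤ (q ^ 3 * h : ℕ) := by exact_mod_cast hQ
    push_cast at this ⊢
    linarith

/-- The Baker-type bound applied to the form in which the term coming from `k` is part of the
error. -/
theorem Level.step_inf {n k M e g₀ g q h : ℕ} (L : Level n k M e g₀ g) (H : Good n q h)
    (hh : 3 * (g₀ + 1) ≤ h) (hh4 : 4 ≤ h) :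
    g ≤ 130000000000 * (q ^ 3 * h) ∨ k ≤ 610000000000 * (q ^ 3 * h) := by
  have hO : InO (9 * (2 * goldenRatio - 1)) (9 * (2 * goldenConj - 1)) := by
    have h2 : InO (2 * goldenRatio - 1) (2 * goldenConj - 1) := by
      simpa [sub_eq_add_neg] using ((InO.int 2).mul InO.golden).add (InO.int (-1))
    simpa using (InO.int 9).mul h2
  have hc2 : 2 * goldenConj - 1 = -√5 := by
    rw [← two_golden_sub_one]; linarith [goldenRatio_add_goldenConj]
  obtain ⟨s1, s2⟩ := sqrt_five_bounds
  have hh4r : (4 : ℝ) ≤ h := by exact_mod_cast hh4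
  have hβ' : |9 * (2 * goldenConj - 1)| ≤ exp (2 * h) := by
    rw [hc2, abs_mul, abs_neg, abs_of_nonneg (sqrt_nonneg 5), abs_of_nonneg (by norm_num)]
    have a2 : (2 : ℝ) ^ 6 ≤ exp (2 * h) := exp_ge_two_pow 6 (by push_cast; linarith)
    linarith
  have hlow := linForm_lower H L.one_le L.le_pow hO
    (by rw [two_golden_sub_one]; linarith) (by rw [two_golden_sub_one]; linarith) hβ' L.exp_le hh hh4
  have hQ := big_of_good H hh4
  have hQ' : (500000 : ℝ) ≤ (q ^ 3 * h : ℕ) := by exact_mod_cast hQ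
  have hsum := hlow.trans_le L.inf
  rcases le_total (100 / 10 ^ g) ((goldenRatio - 1) ^ k) with hle | hle
  · right
    refine le_of_pow_golden_lt (hsum.trans_le (by linarith)) ?_
    push_cast at hQ' ⊢
    linarith
  · left
    refine le_of_pow_ten_lt (hsum.trans_le (by rw [show (200 : ℝ) = 100 + 100 by norm_num, add_div]; linarith)) ?_
    push_cast at hQ' ⊢
    linarith

/-- Running through the three levels with the Baker-type bound. At each level either the gap `g` or
the index difference `k` is bounded; once `k` is bounded it enters the third logarithm. -/
theorem tree {n k M₁ M₂ M₃ e₁ e₂ e₃ g₁ g₂ g₃ q c : ℕ} (hc : c = 620000000000 * q ^ 3)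
    (L₁ : Level n k M₁ e₁ 0 g₁) (L₂ : Level n k M₂ e₂ g₁ g₂) (L₃ : Level n k M₃ e₃ g₂ g₃)
    (H : Good n q (64 * c ^ 3)) : g₃ ≤ 64 * c ^ 4 := by
  have hq := H.le_q
  have hc100 : 100 ≤ c := by
    have := Nat.pow_le_pow_left hq 3
    omega
  have c2 : 100 * c ≤ c ^ 2 := by rw [sq]; gcongr
  have c3 : 100 * c ^ 2 ≤ c ^ 3 := by rw [pow_succ c 2, mul_comm]; gcongr
  have e2 : c ^ 2 = c * c := by ring
  have e3 : c ^ 3 = c * c ^ 2 := by ring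
  have e4 : c ^ 4 = c * c ^ 3 := by ring
  have one : ∀ h, 130000000000 * (q ^ 3 * h) ≤ c * h := fun h => by
    rw [hc, mul_assoc]; gcongr; norm_num
  have two : ∀ h, 610000000000 * (q ^ 3 * h) ≤ c * h := fun h => by
    rw [hc, mul_assoc]; gcongr; norm_num
  -- the last level once `k` and `g₂` are under control
  have fin : k + 12 ≤ 256 * c ^ 3 → 3 * (g₂ + 1) ≤ 64 * c ^ 3 → g₃ ≤ 64 * c ^ 4 := fun hk hg => by
    have h1 := L₃.step H hg (by omega) (by omega)
    have h2 := one (64 * c ^ 3)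
    rw [show c * (64 * c ^ 3) = 64 * c ^ 4 by ring] at h2
    omega
  have mid : k + 12 ≤ 64 * c ^ 2 → 3 * (g₁ + 1) ≤ 16 * c ^ 2 → g₃ ≤ 64 * c ^ 4 := fun hk hg => by
    have h1 := L₂.step (H.mono (by omega)) hg (by omega) (by omega)
    have h2 := one (16 * c ^ 2)
    rw [show c * (16 * c ^ 2) = 16 * c ^ 3 by ring] at h2
    exact fin (by omega) (by omega)
  rcases L₁.step_inf (H.mono (h' := 4) (by omega)) (by norm_num) (by norm_num) with h1 | h1
  · have h1' := one 4
    rcases L₂.step_inf (H.mono (h' := 16 * c) (by omega)) (by omega) (by omega) with h2 | h2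
    · have h2' := one (16 * c)
      rw [show c * (16 * c) = 16 * c ^ 2 by ring] at h2'
      rcases L₃.step_inf (H.mono (h' := 64 * c ^ 2) (by omega)) (by omega) (by omega) with h3 | h3
      · have h3' := one (64 * c ^ 2)
        rw [show c * (64 * c ^ 2) = 64 * c ^ 3 by ring] at h3'
        have : c ^ 3 * 1 ≤ c ^ 3 * c := Nat.mul_le_mul_left _ (by omega)
        rw [show c ^ 3 * c = c ^ 4 by ring] at this
        omega
      · have h3' := two (64 * c ^ 2)
        rw [show c * (64 * c ^ 2) = 64 * c ^ 3 by ring] at h3'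
        exact fin (by omega) (by omega)
    · have h2' := two (16 * c)
      rw [show c * (16 * c) = 16 * c ^ 2 by ring] at h2'
      exact mid (by omega) (by omega)
  · have h1' := two 4
    have h2 := L₁.step (H.mono (h' := 4 * c) (by omega)) (by omega) (by omega) (by omega)
    have h2' := one (4 * c)
    rw [show c * (4 * c) = 4 * c ^ 2 by ring] at h2'
    exact mid (by omega) (by omega)

set_option exponentiation.threshold 400 in
/-- The first upper bound for `n`, from `tree` with `q` slightly larger than `log n`: each of the four
applications of the Baker-type bound costs a factor of order `q ^ 3`. -/
theorem RepSum.le_huge {n k d1 d2 d3 l1 l2 l3 : ℕ} (h : RepSum n k d1 d2 d3 l1 l2 l3) : n ≤ 10 ^ 104 := by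
  by_contra! hn
  have hnr : (10 : ℝ) ^ 104 ≤ n := by exact_mod_cast hn.le
  have hn0 : (0 : ℝ) < n := lt_of_lt_of_le (by positivity) hnr
  clear hn
  obtain ⟨t1, t2⟩ := log_ten_bounds
  have hx : 239.4 ≤ log n := by
    have := log_le_log (by positivity) hnr
    rw [log_pow] at this
    push_cast at this
    linarith
  clear hnr
  obtain ⟨q, hq⟩ : ∃ q : ℕ, q = ⌈1.2 * log n⌉₊ := ⟨_, rfl⟩
  have q1 : 1.2 * log n ≤ q := hq ▸ Nat.le_ceil _
  have q2 : (q : ℝ) < 1.2 * log n + 1 := hq ▸ Nat.ceil_lt_add_one (by linarith)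
  have hq288 : 288 ≤ q := by
    have : (287 : ℝ) < q := by linarith
    have : 287 < q := by exact_mod_cast this
    omega
  have hqr : (288 : ℝ) ≤ q := by exact_mod_cast hq288
  have hnexp : (n : ℝ) = exp (log n) := (exp_log hn0).symm
  have hQ : 1500000000 * (q : ℝ) ^ 2 * n ≤ exp q := by
    have a1 := pow_le_exp_of_ge (q := q) (q₀ := 288) (by norm_num) (by linarith) 2
    have a2 : (2 : ℝ) ^ 68 ≤ exp 48 := exp_ge_two_pow 68 (by norm_num)
    have hb : 0 < exp (((2 : ℕ) : ℝ) * (q - 288) / 288) := exp_pos _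
    calc 1500000000 * (q : ℝ) ^ 2 * n
        ≤ 1500000000 * (288 ^ 2 * exp (((2 : ℕ) : ℝ) * (q - 288) / 288)) * n := by gcongr
      _ = (1500000000 * 288 ^ 2) * (exp (((2 : ℕ) : ℝ) * (q - 288) / 288) * n) := by ring
      _ ≤ exp 48 * (exp (((2 : ℕ) : ℝ) * (q - 288) / 288) * n) := by gcongr; linarith
      _ ≤ exp q := by
          nth_rw 1 [hnexp]
          rw [← exp_add, ← exp_add]
          apply exp_le_exp.2
          push_cast
          linarith
  have key : 71000000000000000000000000000000000000000000000000000000000 * (q : ℝ) ^ 12 < n * exp (-(q / 10 : ℝ)) := by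
    have a1 := pow_le_exp_of_ge (q := q) (q₀ := 288) (by norm_num) (by linarith) 12
    have a2 : (2 : ℝ) ^ 300 ≤ exp 210.2 := exp_ge_two_pow 300 (by norm_num)
    have hb : 0 < exp (((12 : ℕ) : ℝ) * (q - 288) / 288) := exp_pos _
    calc 71000000000000000000000000000000000000000000000000000000000 * (q : ℝ) ^ 12
        ≤ 71000000000000000000000000000000000000000000000000000000000 *
          (288 ^ 12 * exp (((12 : ℕ) : ℝ) * (q - 288) / 288)) := by gcongr
      _ = (71000000000000000000000000000000000000000000000000000000000 * 288 ^ 12) *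
          exp (((12 : ℕ) : ℝ) * (q - 288) / 288) := by ring
      _ < 2 ^ 300 * exp (((12 : ℕ) : ℝ) * (q - 288) / 288) := by gcongr; norm_num
      _ ≤ exp 210.2 * exp (((12 : ℕ) : ℝ) * (q - 288) / 288) := by gcongr
      _ ≤ n * exp (-(q / 10 : ℝ)) := by
          nth_rw 1 [hnexp]
          rw [← exp_add, ← exp_add]
          apply exp_le_exp.2
          push_cast
          linarith
  have key' : 71000000000000000000000000000000000000000000000000000000000 * (q : ℝ) ^ 12 < n :=
    key.trans_le (mul_le_of_le_one_right hn0.le (exp_le_one_iff.2 (by linarith)))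
  have keyN : 71000000000000000000000000000000000000000000000000000000000 * q ^ 12 < n := by exact_mod_cast key'
  have qN : q ^ 11 ≤ q ^ 12 := Nat.pow_le_pow_right (by omega) (by norm_num)
  obtain ⟨c, hc⟩ : ∃ c, c = 620000000000 * q ^ 3 := ⟨_, rfl⟩
  have c3 : c ^ 3 = 620000000000 ^ 3 * q ^ 9 := by rw [hc]; ring
  have c4 : c ^ 4 = 620000000000 ^ 4 * q ^ 12 := by rw [hc]; ring
  have H : Good n q (64 * c ^ 3) := by
    refine ⟨by omega, ?_, hQ, fun u₁ u₂ hu h1 h2 => ?_⟩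
    · rw [c3, show q ^ 2 * (64 * (620000000000 ^ 3 * q ^ 9)) = 64 * 620000000000 ^ 3 * q ^ 11 by ring]
      generalize q ^ 11 = x at *
      generalize q ^ 12 = y at *
      norm_num
      omega
    · have f1 := form_lower q (by omega) u₁ u₂ hu h1 h2
      refine lt_of_lt_of_le ?_ (mul_le_mul_of_nonneg_left f1 hn0.le)
      rw [c3, ← mul_div_assoc, lt_div_iff₀ (by norm_num)]
      refine lt_of_le_of_lt ?_ key
      simp only [Nat.cast_mul, Nat.cast_pow, Nat.cast_ofNat]
      have : (0 : ℝ) ≤ (q : ℝ) ^ 12 := by positivity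
      calc 4600000000000 * ((q : ℝ) ^ 3 * (64 * (620000000000 ^ 3 * (q : ℝ) ^ 9))) * 1000000000
          = (4600000000000 * 64 * 620000000000 ^ 3 * 1000000000) * (q : ℝ) ^ 12 := by ring
        _ ≤ 71000000000000000000000000000000000000000000000000000000000 * (q : ℝ) ^ 12 := by
          gcongr; norm_num
  have hg := tree hc h.level_one.1 h.level_two.1 h.level_three H
  have hlen := h.le_len
  have hy : 1 ≤ q ^ 12 := Nat.one_le_pow _ _ (by omega)
  rw [c4] at hg
  clear hc c3 c4 H hQ key key' qN
  generalize q ^ 12 = y at *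
  norm_num at hg
  omega

/-- For `q ≤ 700` the degenerate case only involves two-term forms with small coefficients, which
are bounded below by a continued fraction. -/
theorem good_small {n q h X : ℕ} (hq : 50 ≤ q) (hq' : q ≤ 700) (hn : n ≤ X)
    (hQ : 1500000000 * (q : ℝ) ^ 2 * X ≤ exp q) (hc : 4600000000000 * 15891179 * (q ^ 3 * h) < n) :
    Good n q h := by
  refine ⟨hq, ?_, le_trans ?_ hQ, fun u₁ u₂ hu h1 _ => ?_⟩
  · have : q ^ 2 * h ≤ q ^ 3 * h :=
      Nat.mul_le_mul_right _ (Nat.pow_le_pow_right (by omega) (by norm_num))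
    omega
  · have : (n : ℝ) ≤ X := by exact_mod_cast hn
    gcongr
  · have f := form_lower_small u₁ u₂ hu (by omega)
    have hr : (4600000000000 * 15891179 * (q ^ 3 * h : ℕ) : ℝ) < n := by exact_mod_cast hc
    have hn0 : (0 : ℝ) ≤ n := by positivity
    refine lt_of_lt_of_le ?_ (mul_le_mul_of_nonneg_left f hn0)
    rw [mul_one_div, lt_div_iff₀ (by norm_num)]
    linarith

theorem exp_nat_ge (q : ℕ) : (2.718 : ℝ) ^ q ≤ exp q := by
  have h := exp_one_gt_d9
  rw [← mul_one (q : ℝ), exp_nat_mul]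
  gcongr
  linarith

section
variable {n k M e g₀ g : ℕ}

/-- Once the first two blocks are short, one application of the Baker-type bound improves the bound
`X` for `n`, here for small `k`. -/
theorem stage_k {q X : ℕ} (L : Level n k M e g₀ g) (hg : g₀ ≤ 122) (hlen : n ≤ 5 * g + 3) (hk : k < 582)
    (hq : 50 ≤ q) (hq' : q ≤ 700) (hn : n ≤ X) (hQ : 1500000000 * (q : ℝ) ^ 2 * X ≤ exp q) :
    n ≤ 4600000000000 * 15891179 * (q ^ 3 * 369) := by
  by_contra! hc
  have h50 : 50 ^ 3 ≤ q ^ 3 := Nat.pow_le_pow_left hq 3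
  have := L.step (good_small hq hq' hn hQ hc) (by omega) (by norm_num) (by omega)
  omega

/-- The analogue of `stage_k` for arbitrary `k`: either `n` or `k` is bounded by a first application of
the Baker-type bound, and in the latter case a second application bounds `n`. -/
theorem stage_inf {q X h : ℕ} (L : Level n k M e g₀ g) (hg : g₀ ≤ 122) (hlen : n ≤ 5 * g + 3)
    (hq : 50 ≤ q) (hq' : q ≤ 700) (hn : n ≤ X) (hQ : 1500000000 * (q : ℝ) ^ 2 * X ≤ exp q)
    (hh : h = 152500000000 * (q ^ 3 * 369) + 3) :
    n ≤ 4600000000000 * 15891179 * (q ^ 3 * h) := by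
  by_contra! hc
  have H := good_small hq hq' hn hQ hc
  have h50 : 50 ^ 3 ≤ q ^ 3 := Nat.pow_le_pow_left hq 3
  have hle : q ^ 3 * 369 ≤ q ^ 3 * h := Nat.mul_le_mul_left _ (by omega)
  rcases L.step_inf (H.mono (h' := 369) (by omega)) (by omega) (by norm_num) with h1 | h1
  · omega
  · have := L.step H (by omega) (by omega) (by omega)
    omega

set_option exponentiation.threshold 400 in
theorem stage_k_le (L : Level n k M e g₀ g) (hg : g₀ ≤ 122) (hlen : n ≤ 5 * g + 3) (hk : k < 582)
    (hn : n ≤ 10 ^ 104) : n ≤ 27 * 10 ^ 27 := by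
  have h1 := stage_k (q := 280) L hg hlen hk (by norm_num) (by norm_num) hn
    (le_trans (by norm_num) (exp_nat_ge 280))
  norm_num at h1
  have h2 := stage_k (q := 100) L hg hlen hk (by norm_num) (by norm_num) h1
    (le_trans (by norm_num) (exp_nat_ge 100))
  exact h2.trans (by norm_num)

set_option exponentiation.threshold 400 in
theorem stage_inf_le (L : Level n k M e g₀ g) (hg : g₀ ≤ 122) (hlen : n ≤ 5 * g + 3)
    (hn : n ≤ 10 ^ 104) : n ≤ 37 * 10 ^ 45 := by
  have h1 := stage_inf (q := 280) L hg hlen (by norm_num) (by norm_num) hn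
    (le_trans (by norm_num) (exp_nat_ge 280)) rfl
  norm_num at h1
  have h2 := stage_inf (q := 144) L hg hlen (by norm_num) (by norm_num) h1
    (le_trans (by norm_num) (exp_nat_ge 144)) rfl
  exact h2.trans (by norm_num)
end

/-- Reduction of the huge bound for `n`: first the lengths of the first two blocks are bounded, then
the Baker-type bound is applied once more to the third level, and the reduction is repeated with
smaller bounds. For `k ≥ 582` the outcome `n ≤ 328` contradicts `k ≤ n`. -/
theorem RepSum.le_small {n k d1 d2 d3 l1 l2 l3 : ℕ} (h : RepSum n k d1 d2 d3 l1 l2 l3) : n ≤ 248 := by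
  rcases Nat.lt_or_ge n 30 with h30 | h30
  · omega
  have hn := h.le_huge
  rcases h.shape with ⟨d, e, g, h1, h2, hg, L⟩ | ⟨d, d', l, e, e', g, h1, h2, h3, h4, h5, hg, L, L'⟩ | ⟨h12, h23⟩
  · have a := runRA hn h30 h1 h2 L
    have b := runAA (by omega) h30 h1 h2 L
    omega
  · have a1 := runRA hn h30 h1 h2 L
    have a2 := runRB hn h30 h1 h2 h3 h4 h5 (by omega) L'
    have b1 := runAA (by omega) h30 h1 h2 L
    have b2 := runAB (by omega) h30 h1 h2 h3 h4 h5 (by omega) L'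
    omega
  · have hd1 := h.d1_pos; have hd1' := h.d1_le; have hd2 := h.d2_le; have hd3 := h.d3_le
    have hl1 := h.l1_pos; have hl2 := h.l2_pos
    have L1 := h.level_one.1; have L2 := h.level_two.1; have L3 := h.level_three
    have hlen := h.le_len
    have a1 := runRA hn h30 hd1 hd1' L1
    have a2 := runRB hn h30 hd1 hd1' hd2 h12 hl1 (by omega) L2
    rcases Nat.lt_or_ge k 582 with hk | hk
    · have hn' := stage_k_le L3 a2 hlen hk hn
      have b1 := runAA hn' h30 hd1 hd1' L1
      have b2 := runAB hn' h30 hd1 hd1' hd2 h12 hl1 b1 L2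
      have b3 := runAC hn' h30 hd1 hd1' hd2 hd3 h12 h23 hl1 b1 hl2 b2 L3
      omega
    · have hn' := stage_inf_le L3 a2 hlen hn
      have b1 := runBA hn' h30 hk hd1 hd1' L1
      have b2 := runBB hn' h30 hk hd1 hd1' hd2 h12 hl1 b1 L2
      have b3 := runBC hn' h30 hk hd1 hd1' hd2 hd3 h12 h23 hl1 b1 hl2 b2 L3
      have := h.k_le
      omega

/-! ### The final search -/

/-- Whether at most `c` of the pairs of neighbouring decimal digits of `N` are unequal; only the
last `f + 1` digits are examined. -/
def fewChanges : ℕ → ℕ → ℕ → Bool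
  | 0, _, _ => true
  | f + 1, c, N =>
    if N < 10 then true
    else if N % 10 = N / 10 % 10 then fewChanges f c (N / 10)
    else match c with
      | 0 => false
      | c + 1 => fewChanges f c (N / 10)

theorem fewChanges_succ {f c N : ℕ} (h : fewChanges f c N = true) : fewChanges f (c + 1) N = true := by
  induction f generalizing c N with
  | zero => rfl
  | succ f ih =>
    unfold fewChanges at h ⊢
    split_ifs at h ⊢
    · rfl
    · exact ih h
    · cases c with
      | zero => simp at h
      | succ c => exact ih h

theorem fewChanges_same {c x d : ℕ} (h : ∀ f, fewChanges f c x = true) (hd : x % 10 = d) (f : ℕ) :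
    fewChanges f c (10 * x + d) = true := by
  cases f with
  | zero => rfl
  | succ f =>
    unfold fewChanges
    have hd' : d ≤ 9 := by omega
    rw [show (10 * x + d) / 10 = x by omega, if_pos (by omega : (10 * x + d) % 10 = x % 10)]
    simp [h f]

theorem fewChanges_append {c x d : ℕ} (h : ∀ f, fewChanges f c x = true) (hd : d ≤ 9) (f : ℕ) :
    fewChanges f (c + 1) (10 * x + d) = true := by
  cases f with
  | zero => rfl
  | succ f =>
    unfold fewChanges
    rw [show (10 * x + d) / 10 = x by omega]
    simp [h f, fewChanges_succ (h f)]

/-- The number obtained from `x` by appending `l` digits `d`. -/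
def app (d x : ℕ) : ℕ → ℕ
  | 0 => x
  | l + 1 => 10 * app d x l + d

theorem app_eq (d x l : ℕ) : app d x l = x * 10 ^ l + d * ((10 ^ l - 1) / (10 - 1)) := by
  obtain ⟨r, hr⟩ : ∃ r, 10 ^ l = 9 * r + 1 := by
    have := (Nat.ModEq.pow l (by decide : 10 ≡ 1 [MOD 9]))
    rw [one_pow] at this
    exact ⟨10 ^ l / 9, by have := this; unfold Nat.ModEq at this; omega⟩
  have key : ∀ l, 9 * app d x l + d = (9 * x + d) * 10 ^ l := by
    intro l
    induction l with
    | zero => simp [app]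
    | succ l ih => rw [app, pow_succ]; linarith
  have h := key l
  rw [hr] at h ⊢
  rw [show (9 * r + 1 - 1) / (10 - 1) = r by omega]
  nlinarith

theorem fewChanges_app {c d x : ℕ} (h : ∀ f, fewChanges f c x = true) (hd : d ≤ 9) (l : ℕ) :
    ∀ f, fewChanges f (c + 1) (app d x (l + 1)) = true := by
  induction l with
  | zero => exact fewChanges_append h hd
  | succ l ih => exact fewChanges_same ih (by simp only [app]; omega)

theorem fewChanges_rep {d : ℕ} (hd : d ≤ 9) (l : ℕ) :
    ∀ f, fewChanges f 0 (app d 0 (l + 1)) = true := by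
  induction l with
  | zero =>
    intro f
    cases f with
    | zero => rfl
    | succ f => unfold fewChanges; rw [if_pos (by simp only [app]; omega)]
  | succ l ih => exact fewChanges_same ih (by simp only [app]; omega)

theorem fewChanges_concat {N : ℕ} (hc : ∃ d1 d2 d3 l1 l2 l3 : ℕ,
      1 ≤ d1 ∧ d1 < 10 ∧ d2 < 10 ∧ d3 < 10 ∧ 1 ≤ l1 ∧ 1 ≤ l2 ∧ 1 ≤ l3 ∧
      N = d1 * ((10 ^ l1 - 1) / (10 - 1)) * 10 ^ (l2 + l3) +
        d2 * ((10 ^ l2 - 1) / (10 - 1)) * 10 ^ l3 + d3 * ((10 ^ l3 - 1) / (10 - 1))) (f : ℕ) :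
    fewChanges f 2 N = true := by
  obtain ⟨d1, d2, d3, l1, l2, l3, h1, h2, h3, h4, h5, h6, h7, e⟩ := hc
  obtain ⟨l1, rfl⟩ := Nat.exists_eq_add_of_le' h5
  obtain ⟨l2, rfl⟩ := Nat.exists_eq_add_of_le' h6
  obtain ⟨l3, rfl⟩ := Nat.exists_eq_add_of_le' h7
  have key : N = app d3 (app d2 (app d1 0 (l1 + 1)) (l2 + 1)) (l3 + 1) := by
    rw [app_eq, app_eq, app_eq, e, pow_add]
    ring
  rw [key]
  exact fewChanges_app (fewChanges_app (fewChanges_rep (by omega) l1) (by omega) l2) (by omega) l3 f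

/-- For consecutive Fibonacci numbers `a, b` and the list `L` of their predecessors, checks the sums
of two Fibonacci numbers whose larger index is one of the next `f`. -/
def chkSums : ℕ → ℕ → ℕ → List ℕ → Bool
  | 0, _, _, _ => true
  | f + 1, a, b, L =>
    ((a :: L).all fun x => Nat.ble (a + x) 335522 || !fewChanges 60 2 (a + x)) &&
      chkSums f b (a + b) (a :: L)

theorem chkSums_spec (f i : ℕ) (L : List ℕ) (hL : ∀ j < i, Nat.fib j ∈ L)
    (h : chkSums f (Nat.fib i) (Nat.fib (i + 1)) L = true) (n m : ℕ) (hn : i ≤ n) (hn' : n < i + f) (hm : m ≤ n)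
    (hf : fewChanges 60 2 (Nat.fib n + Nat.fib m) = true) : Nat.fib n + Nat.fib m ≤ 335522 := by
  induction f generalizing i L with
  | zero => omega
  | succ f ih =>
    rw [chkSums, Bool.and_eq_true, ← Nat.fib_add_two, List.all_eq_true] at h
    have hL' : ∀ j < i + 1, Nat.fib j ∈ Nat.fib i :: L := fun j hj => by
      rcases Nat.lt_succ_iff_lt_or_eq.1 hj with hj | rfl
      · exact List.mem_cons_of_mem _ (hL j hj)
      · exact List.mem_cons_self
    rcases Nat.eq_or_lt_of_le hn with rfl | hlt
    · have := h.1 _ (hL' m (by omega))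
      simpa [hf] using this
    · exact ih (i + 1) _ hL' h.2 hlt (by omega)

theorem chkSums_true : chkSums 249 0 1 [] = true := by decide +kernel

theorem stmt_18 :
    (335522 = Nat.fib 28 + Nat.fib 22) ∧
    (335522 = 3 * ((10 ^ 2 - 1) / (10 - 1)) * 10 ^ (2 + 2) + 5 * ((10 ^ 2 - 1) / (10 - 1)) * 10 ^ 2 + 2 * ((10 ^ 2 - 1) / (10 - 1))) ∧
    IsConcatThreeRepdigits 10 335522 ∧
    (∀ N n1 n2 : ℕ, 0 < N → n2 ≤ n1 →
      N = Nat.fib n1 + Nat.fib n2 →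
      IsConcatThreeRepdigits 10 N → N ≤ 335522) := by
  refine ⟨by norm_num [Nat.fib], by norm_num, ⟨3, 5, 2, 2, 2, 2, by norm_num⟩, ?_⟩
  intro N n1 n2 _ h12 hN hc
  obtain ⟨d1, d2, d3, l1, l2, l3, h⟩ := exists_rep h12 hN hc
  have hn := h.le_small
  rw [hN]
  exact chkSums_spec 249 0 [] (by simp) chkSums_true n1 n2 (by omega) (by omega) h12
    (hN ▸ fewChanges_concat hc 60)
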